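/- There exist δ > 0, A₀ > 0 and C > 0 with the following property: let (n,u,φ) be a global classical solution of the 1D Euler–Poisson system (EPw) conserving the energy E, with sup_{t∈ℝ} ‖u(t)‖_{L²} < ∞ and sup_{t∈ℝ} (‖n(t)‖_{L²} + ‖n(t)‖_{L^∞}) ≤ δ, and let y ∈ C¹(ℝ,ℝ) satisfy sup_{t∈ℝ} |y'(t)| < k/√(1+k). Then for every A ≥ A₀, ∫_ℝ ∫_ℝ e^{−2|x−y(t)|/A} ( n(t,x)² + u(t,x)² ) dx dt ≤ C A (sup_t ‖u(t)‖_{L²})(sup_t ‖n(t)‖_{L²}). -/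

import Mathlib

open MeasureTheory Real
open scoped ENNReal

noncomputable section

def sech (x : ℝ) : ℝ := (Real.cosh x)⁻¹

def qfun (x : ℝ) : ℝ := Real.exp x - 1

structure IsPressure (p : ℝ → ℝ) : Prop where
  smooth : ContDiffOn ℝ (⊤ : ℕ∞) p (Set.Ioi (0 : ℝ))
  deriv_pos : ∀ s : ℝ, 0 < s → 0 < deriv p s
  deriv2_nonneg : ∀ s : ℝ, 0 < s → 0 ≤ deriv (deriv p) s

def IsWFor (p w : ℝ → ℝ) : Prop :=
  w 0 = 0 ∧ ∀ s : ℝ, -1 < s → HasDerivAt w (deriv p (1 + s) / (1 + s)) s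

def Wfun (w : ℝ → ℝ) (a : ℝ) : ℝ := ∫ s in (0:ℝ)..a, w s

def Rfun (x : ℝ) : ℝ := x * qfun x - ∫ s in (0:ℝ)..x, qfun s

def energyDensity (w : ℝ → ℝ) (n u φ : ℝ → ℝ) (x : ℝ) : ℝ :=
  (1/2) * (1 + n x) * u x ^ 2 + Wfun w (n x) + (1/2) * (deriv φ x) ^ 2 + Rfun (φ x)

def energy (w : ℝ → ℝ) (n u φ : ℝ → ℝ) : ℝ := ∫ x : ℝ, energyDensity w n u φ x

structure IsEPwSolution (w : ℝ → ℝ) (n u φ : ℝ → ℝ → ℝ) : Prop where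
  dens_pos : ∀ t x : ℝ, 0 < 1 + n t x
  reg_n : ContDiff ℝ 1 (Function.uncurry n)
  reg_u : ContDiff ℝ 1 (Function.uncurry u)
  reg_phi_space : ∀ t : ℝ, ContDiff ℝ 2 (φ t)
  reg_phi_time : ∀ x : ℝ, ContDiff ℝ 1 (fun t => φ t x)
  eq_n : ∀ t x : ℝ, deriv (fun s => n s x) t = - deriv (fun z => (1 + n t z) * u t z) x
  eq_u : ∀ t x : ℝ, deriv (fun s => u s x) t
      = - deriv (fun z => u t z ^ 2 / 2 + w (n t z) + φ t z) x
  eq_phi : ∀ t x : ℝ, - deriv (deriv (φ t)) x + qfun (φ t x) = n t x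

def ConservesEnergy (w : ℝ → ℝ) (n u φ : ℝ → ℝ → ℝ) : Prop :=
  ∀ t₁ t₂ : ℝ, energy w (n t₁) (u t₁) (φ t₁) = energy w (n t₂) (u t₂) (φ t₂)

def L2CompactWith (n u : ℝ → ℝ → ℝ) (y : ℝ → ℝ) : Prop :=
  ∀ ε : ℝ, 0 < ε → ∃ R : ℝ, 0 < R ∧
    ∀ t : ℝ, (∫ x in {x : ℝ | R < |x - y t|}, (n t x ^ 2 + u t x ^ 2)) < ε

/-! With `ν = (1 - ∂ₓ²)⁻¹n`, `ω = (1 - ∂ₓ²)⁻¹u`, `Φ = A tanh((x - y)/A)` and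
`G = ∂ₓΦ = sech²((x - y)/A)`, consider the virial functional `∫ Φ n u - θ ∫ G u ∂ₓν`. Up to terms
that are small relative to the local mass `∫ G (n² + u²)`, its time derivative is the integral
against `G` of a quadratic form in `n`, `u`, `ν`, `ω` and their derivatives. Adding an exact
derivative and taking `θ = 1 / (2 (1 + k))` splits this form into binary forms which are definite
for `|y'| ≤ k / √(1 + k)`, so it controls the local mass. The functional itself is at most
a constant times `A ‖u‖ ‖n‖` by Cauchy-Schwarz, and integrating in time gives the bound.

Smallness of `φ` is deduced from smallness of `n`: if `q(φ)` exceeded `sup |n|` at some point, then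
`∂ₓφ` would grow linearly on one side of it for a short time, driving the integral of `u` against
a bump of width `L` at a rate of order `L²`, while the `L²` bound on `u` only allows order `L`.
-/

namespace EulerPoisson

open Set Filter Topology

section Calculus

lemma hasDerivAt_integral_of_compact {μ : Measure ℝ} [IsFiniteMeasureOnCompacts μ]
    {F F' : ℝ → ℝ → ℝ} {K U : Set ℝ} {t : ℝ} (hK : IsCompact K) (hU : U ∈ 𝓝 t)
    (hF : ∀ s, Continuous (F s)) (hFt : Integrable (F t) μ)
    (hd : ∀ s x, HasDerivAt (fun r => F r x) (F' s x) s)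
    (hF' : Continuous (Function.uncurry F'))
    (hsupp : ∀ᵐ x ∂μ, x ∉ K → ∀ s ∈ U, F' s x = 0) :
    HasDerivAt (fun s => ∫ x, F s x ∂μ) (∫ x, F' t x ∂μ) t := by
  obtain ⟨B, hB⟩ := ((isCompact_closedBall t 1).prod hK).exists_bound_of_continuousOn
    hF'.continuousOn
  have hbound : Integrable (K.indicator fun _ => B) μ :=
    (integrableOn_const hK.measure_lt_top.ne).integrable_indicator hK.measurableSet
  refine (hasDerivAt_integral_of_dominated_loc_of_deriv_le
    (inter_mem hU (Metric.closedBall_mem_nhds t one_pos))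
    (Eventually.of_forall fun s => (hF s).aestronglyMeasurable) hFt
    (hF'.uncurry_left t).aestronglyMeasurable ?_ hbound
    (Eventually.of_forall fun x s _ => hd s x)).2
  filter_upwards [hsupp] with x hx s hs
  by_cases hxK : x ∈ K
  · rw [indicator_of_mem hxK]
    exact hB (s, x) ⟨hs.2, hxK⟩
  · simp [indicator_of_notMem hxK, hx hxK s hs.1]

lemma hasDerivAt_intervalIntegral_of_continuous {F F' : ℝ → ℝ → ℝ} {a b : ℝ} (hab : a ≤ b)
    (hF : ∀ s, Continuous (F s)) (hd : ∀ s x, HasDerivAt (fun r => F r x) (F' s x) s)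
    (hF' : Continuous (Function.uncurry F')) (t : ℝ) :
    HasDerivAt (fun s => ∫ x in a..b, F s x) (∫ x in a..b, F' t x) t := by
  simp only [intervalIntegral.integral_of_le hab]
  refine hasDerivAt_integral_of_compact (isCompact_Icc (a := a) (b := b)) univ_mem hF
    ((hF t).integrableOn_Icc.mono_set Ioc_subset_Icc_self) hd hF' ?_
  filter_upwards [ae_restrict_mem measurableSet_Ioc] with x hx hxK
  exact absurd (Ioc_subset_Icc_self hx) hxK

end Calculus

section BalanceLaws

/-- The balance law `∂ₜρ = -∂ₓF + S` on `ℝ × ℝ`, with `ρt` the time derivative of the density `ρ`.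
The space derivative of the flux `F` is not named: it is `S - ρt`. -/
structure BalanceLaw (ρ ρt F S : ℝ → ℝ → ℝ) : Prop where
  continuous_density : Continuous (Function.uncurry ρ)
  continuous_rate : Continuous (Function.uncurry ρt)
  hasDerivAt_density : ∀ t x, HasDerivAt (fun s => ρ s x) (ρt t x) t
  hasDerivAt_flux : ∀ t x, HasDerivAt (F t) (S t x - ρt t x) x
  continuous_source : ∀ t, Continuous (S t)

variable {ρ ρt F S : ℝ → ℝ → ℝ}

lemma BalanceLaw.continuous_flux (h : BalanceLaw ρ ρt F S) (t : ℝ) : Continuous (F t) :=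
  continuous_iff_continuousAt.2 fun x => (h.hasDerivAt_flux t x).continuousAt

lemma BalanceLaw.neg (h : BalanceLaw ρ ρt F S) :
    BalanceLaw (fun t x => -ρ t x) (fun t x => -ρt t x) (fun t x => -F t x)
      (fun t x => -S t x) where
  continuous_density := h.continuous_density.neg
  continuous_rate := h.continuous_rate.neg
  hasDerivAt_density t x := (h.hasDerivAt_density t x).neg
  hasDerivAt_flux t x := (h.hasDerivAt_flux t x).neg.congr_deriv (by ring)
  continuous_source t := (h.continuous_source t).neg

lemma hasDerivAt_comp_neg {f : ℝ → ℝ} {f' x : ℝ} (hf : HasDerivAt f f' (-x)) :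
    HasDerivAt (fun z => f (-z)) (-f') x :=
  (hf.comp x (hasDerivAt_neg x)).congr_deriv (by ring)

lemma BalanceLaw.reflect (h : BalanceLaw ρ ρt F S) :
    BalanceLaw (fun t x => ρ t (-x)) (fun t x => ρt t (-x)) (fun t x => -F t (-x))
      (fun t x => S t (-x)) where
  continuous_density := h.continuous_density.comp (continuous_fst.prodMk continuous_snd.neg)
  continuous_rate := h.continuous_rate.comp (continuous_fst.prodMk continuous_snd.neg)
  hasDerivAt_density t x := h.hasDerivAt_density t (-x)
  hasDerivAt_flux t x :=
    (hasDerivAt_comp_neg (h.hasDerivAt_flux t (-x))).neg.congr_deriv (by ring)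
  continuous_source t := (h.continuous_source t).comp continuous_neg

lemma BalanceLaw.translate (h : BalanceLaw ρ ρt F S) (a : ℝ) :
    BalanceLaw (fun t x => ρ t (a + x)) (fun t x => ρt t (a + x)) (fun t x => F t (a + x))
      (fun t x => S t (a + x)) where
  continuous_density :=
    h.continuous_density.comp (continuous_fst.prodMk (continuous_const.add continuous_snd))
  continuous_rate :=
    h.continuous_rate.comp (continuous_fst.prodMk (continuous_const.add continuous_snd))
  hasDerivAt_density t x := h.hasDerivAt_density t (a + x)
  hasDerivAt_flux t x := (h.hasDerivAt_flux t (a + x)).comp_const_add a x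
  continuous_source t := (h.continuous_source t).comp (continuous_const.add continuous_id)

lemma balanceLaw_of_contDiff {f : ℝ → ℝ} (hf : ContDiff ℝ 1 f) :
    BalanceLaw (fun t x => f (t + x)) (fun t x => deriv f (t + x)) (fun t x => -f (t + x))
      (fun _ _ => 0) where
  continuous_density := hf.continuous.comp (continuous_fst.add continuous_snd)
  continuous_rate :=
    (hf.continuous_deriv le_rfl).comp (continuous_fst.add continuous_snd)
  hasDerivAt_density t x :=
    (hf.differentiable one_ne_zero (t + x)).hasDerivAt.comp_add_const t x
  hasDerivAt_flux t x :=
    ((hf.differentiable one_ne_zero (t + x)).hasDerivAt.comp_const_add t x).neg.congr_deriv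
      (by ring)
  continuous_source _ := continuous_const

lemma integrable_comp_sub_mul {P f : ℝ → ℝ} (hP : Continuous P) (hPs : HasCompactSupport P)
    (hf : Continuous f) (y : ℝ) : Integrable fun x => P (x - y) * f x :=
  ((hP.comp (continuous_id.sub continuous_const)).mul hf).integrable_of_hasCompactSupport
    ((hPs.comp_homeomorph (Homeomorph.subRight y)).mul_right)

lemma integral_comp_sub_mul_deriv {P f f' : ℝ → ℝ} (hP : ContDiff ℝ 1 P)
    (hPs : HasCompactSupport P) (hf : ∀ x, HasDerivAt f (f' x) x) (hf' : Continuous f') (y : ℝ) :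
    ∫ x, P (x - y) * f' x = -∫ x, deriv P (x - y) * f x := by
  have hfc : Continuous f := continuous_iff_continuousAt.2 fun x => (hf x).continuousAt
  exact integral_mul_deriv_eq_deriv_mul_of_integrable
    (fun x _ => (hP.differentiable one_ne_zero (x - y)).hasDerivAt.comp_sub_const x y)
    (fun x _ => hf x)
    (integrable_comp_sub_mul hP.continuous hPs hf' y)
    (integrable_comp_sub_mul (hP.continuous_deriv le_rfl) hPs.deriv hfc y)
    (integrable_comp_sub_mul hP.continuous hPs hfc y)

lemma hasDerivAt_integral_comp_sub_mul {P y : ℝ → ℝ} (hP : ContDiff ℝ 1 P)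
    (hPs : HasCompactSupport P) (hy : ContDiff ℝ 1 y)
    (hρ : Continuous (Function.uncurry ρ)) (hρt : Continuous (Function.uncurry ρt))
    (hd : ∀ t x, HasDerivAt (fun s => ρ s x) (ρt t x) t) (t : ℝ) :
    HasDerivAt (fun s => ∫ x, P (x - y s) * ρ s x)
      (∫ x, (deriv P (x - y t) * -deriv y t * ρ t x + P (x - y t) * ρt t x)) t := by
  have hPc := hP.continuous
  have hyc := hy.continuous
  have hKs : IsCompact ((fun q : ℝ × ℝ => q.1 + q.2) '' (tsupport P ×ˢ
      (y '' Metric.closedBall t 1))) :=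
    (hPs.isCompact.prod ((isCompact_closedBall t 1).image hyc)).image continuous_add
  have hPy (s x : ℝ) : HasDerivAt (fun r => P (x - y r)) (deriv P (x - y s) * -deriv y s) s :=
    (hP.differentiable one_ne_zero (x - y s)).hasDerivAt.comp s
      ((hy.differentiable one_ne_zero s).hasDerivAt.const_sub x)
  refine hasDerivAt_integral_of_compact hKs (Metric.closedBall_mem_nhds t one_pos)
    (fun s => by have := hρ.uncurry_left s; fun_prop)
    (integrable_comp_sub_mul hPc hPs (hρ.uncurry_left t) (y t))
    (fun s x => (hPy s x).mul (hd s x)) ?_ ?_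
  · have hρ' : Continuous fun q : ℝ × ℝ => ρ q.1 q.2 := hρ
    have hρt' : Continuous fun q : ℝ × ℝ => ρt q.1 q.2 := hρt
    have := hP.continuous_deriv le_rfl
    have := hy.continuous_deriv le_rfl
    simp only [Function.uncurry_def]
    fun_prop
  · refine Eventually.of_forall fun x hx s hs => ?_
    have hxs : x - y s ∉ tsupport P := fun h =>
      hx ⟨(x - y s, y s), ⟨h, mem_image_of_mem y hs⟩, sub_add_cancel x (y s)⟩
    rw [image_eq_zero_of_notMem_tsupport hxs,
      image_eq_zero_of_notMem_tsupport fun h => hxs (tsupport_deriv_subset h)]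
    ring

theorem BalanceLaw.hasDerivAt_integral {P y : ℝ → ℝ} (h : BalanceLaw ρ ρt F S)
    (hP : ContDiff ℝ 1 P) (hPs : HasCompactSupport P) (hy : ContDiff ℝ 1 y) (t : ℝ) :
    HasDerivAt (fun s => ∫ x, P (x - y s) * ρ s x)
      (∫ x, (deriv P (x - y t) * (F t x - deriv y t * ρ t x) + P (x - y t) * S t x)) t := by
  have iP {f : ℝ → ℝ} (hf : Continuous f) := integrable_comp_sub_mul hP.continuous hPs hf (y t)
  have iP' {f : ℝ → ℝ} (hf : Continuous f) :=
    integrable_comp_sub_mul (hP.continuous_deriv le_rfl) hPs.deriv hf (y t)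
  have cρ := h.continuous_density.uncurry_left t
  have cρt := h.continuous_rate.uncurry_left t
  have cF := h.continuous_flux t
  have cS := h.continuous_source t
  have hIBP := integral_comp_sub_mul_deriv hP hPs (h.hasDerivAt_flux t) (cS.sub cρt) (y t)
  have iF : Integrable fun x => deriv P (x - y t) * F t x := iP' cF
  have iρ : Integrable fun x => deriv P (x - y t) * (-deriv y t * ρ t x) :=
    iP' (continuous_const.mul cρ)
  have iρS : Integrable fun x =>
      deriv P (x - y t) * (-deriv y t * ρ t x) + P (x - y t) * S t x := iρ.add (iP cS)
  have iSρ : Integrable fun x => P (x - y t) * (S t x - ρt t x) := iP (cS.sub cρt)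
  refine (hasDerivAt_integral_comp_sub_mul hP hPs hy h.continuous_density h.continuous_rate
    h.hasDerivAt_density t).congr_deriv ?_
  calc ∫ x, (deriv P (x - y t) * -deriv y t * ρ t x + P (x - y t) * ρt t x)
      = ∫ x, ((deriv P (x - y t) * (-deriv y t * ρ t x) + P (x - y t) * S t x)
          - P (x - y t) * (S t x - ρt t x)) := by congr 1; ext x; ring
    _ = (∫ x, (deriv P (x - y t) * (-deriv y t * ρ t x) + P (x - y t) * S t x))
          + ∫ x, deriv P (x - y t) * F t x := by
        rw [integral_sub iρS iSρ, hIBP, sub_neg_eq_add]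
    _ = _ := by
        rw [← integral_add iρS iF]
        congr 1; ext x; ring

end BalanceLaws

section SquareIntegrals

/-- `f` is square integrable and the square of its `L²` norm is at most `M`. -/
structure HasSqIntegralLE (f : ℝ → ℝ) (M : ℝ) : Prop where
  integrable_sq : Integrable fun x => f x ^ 2
  integral_sq_le : ∫ x, f x ^ 2 ≤ M

variable {f : ℝ → ℝ} {M : ℝ}

namespace HasSqIntegralLE

lemma translate (h : HasSqIntegralLE f M) (a : ℝ) : HasSqIntegralLE (fun x => f (a + x)) M :=
  ⟨h.integrable_sq.comp_add_left a,
    (integral_add_left_eq_self (fun x => f x ^ 2) a).le.trans h.integral_sq_le⟩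

lemma reflect (h : HasSqIntegralLE f M) : HasSqIntegralLE (fun x => f (-x)) M :=
  ⟨h.integrable_sq.comp_neg,
    (integral_neg_eq_self (fun x => f x ^ 2) volume).le.trans h.integral_sq_le⟩

lemma neg (h : HasSqIntegralLE f M) : HasSqIntegralLE (fun x => -f x) M :=
  ⟨by simpa only [neg_sq] using h.integrable_sq, by simpa only [neg_sq] using h.integral_sq_le⟩

lemma setIntegral_sq_le (h : HasSqIntegralLE f M) (s : Set ℝ) : ∫ x in s, f x ^ 2 ≤ M :=
  (setIntegral_le_integral h.integrable_sq (Eventually.of_forall fun _ => sq_nonneg _)).trans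
    h.integral_sq_le

end HasSqIntegralLE

lemma abs_le_one_add_sq (a : ℝ) : |a| ≤ 1 + a ^ 2 := by
  nlinarith [sq_nonneg (|a| - 1), sq_abs a, abs_nonneg a]

lemma HasSqIntegralLE.integrableOn_exp_mul (h : HasSqIntegralLE f M) (hf : Continuous f) :
    IntegrableOn (fun s => exp s * f s) (Iic 0) := by
  have hdom : IntegrableOn (fun s => exp s + f s ^ 2) (Iic 0) :=
    (integrableOn_exp_Iic 0).add h.integrable_sq.integrableOn
  refine Integrable.mono' hdom (by fun_prop)
    ((ae_restrict_iff' measurableSet_Iic).2 (Eventually.of_forall fun s hs => ?_))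
  have hexp : exp s ≤ 1 := exp_le_one_iff.2 hs
  calc ‖exp s * f s‖ = exp s * |f s| := by rw [norm_mul, norm_of_nonneg (exp_pos s).le,
        norm_eq_abs]
    _ ≤ exp s * (1 + f s ^ 2) := by gcongr; exact abs_le_one_add_sq _
    _ ≤ exp s + f s ^ 2 := by nlinarith [sq_nonneg (f s)]

lemma HasSqIntegralLE.abs_integral_Iic_sub_le (h : HasSqIntegralLE f M) (hf : Continuous f)
    {N : ℝ} (hN : 0 ≤ N) :
    |(∫ s in Iic 0, exp s * f s) - ∫ s in (-N)..0, exp s * f s| ≤ exp (-N) * (1 + M) := by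
  have hint := h.integrableOn_exp_mul hf
  have hsub : Iic (-N) ⊆ Iic 0 := Iic_subset_Iic.2 (neg_nonpos.2 hN)
  rw [← intervalIntegral.integral_Iic_sub_Iic (hint.mono_set hsub) hint, sub_sub_cancel]
  have hdom : IntegrableOn (fun s => exp s + exp (-N) * f s ^ 2) (Iic (-N)) :=
    (integrableOn_exp_Iic _).add (h.integrable_sq.const_mul _).integrableOn
  calc ‖∫ s in Iic (-N), exp s * f s‖
      ≤ ∫ s in Iic (-N), (exp s + exp (-N) * f s ^ 2) := by
        refine norm_integral_le_of_norm_le hdom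
          ((ae_restrict_iff' measurableSet_Iic).2 (Eventually.of_forall fun s hs => ?_))
        have hexp : exp s ≤ exp (-N) := exp_le_exp.2 hs
        calc ‖exp s * f s‖ = exp s * |f s| := by
              rw [norm_mul, norm_of_nonneg (exp_pos s).le, norm_eq_abs]
          _ ≤ exp s * (1 + f s ^ 2) := by gcongr; exact abs_le_one_add_sq _
          _ ≤ exp s + exp (-N) * f s ^ 2 := by nlinarith [sq_nonneg (f s)]
    _ = exp (-N) * (1 + ∫ s in Iic (-N), f s ^ 2) := by
        rw [integral_add (integrableOn_exp_Iic _) (h.integrable_sq.const_mul _).integrableOn,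
          integral_exp_Iic, integral_const_mul]
        ring
    _ ≤ exp (-N) * (1 + M) := by gcongr; exact h.setIntegral_sq_le _

lemma tendsto_exp_neg_natCast_mul (c : ℝ) :
    Tendsto (fun N : ℕ => exp (-(N : ℝ)) * c) atTop (𝓝 0) := by
  simpa using (tendsto_exp_neg_atTop_nhds_zero.comp tendsto_natCast_atTop_atTop).mul_const c

end SquareIntegrals

section ExponentialAverages

variable {a at' b : ℝ → ℝ → ℝ} {M L : ℝ}

lemma BalanceLaw.hasDerivAt_truncated_exp (h : BalanceLaw a at' b fun _ _ => 0) {N : ℝ}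
    (hN : 0 ≤ N) (t : ℝ) :
    HasDerivAt (fun t => ∫ s in (-N)..0, (exp s - exp (-N)) * a t s)
      (-(1 - exp (-N)) * b t 0 + ∫ s in (-N)..0, exp s * b t s) t := by
  have cat : Continuous fun q : ℝ × ℝ => at' q.1 q.2 := h.continuous_rate
  have hd := hasDerivAt_intervalIntegral_of_continuous (neg_nonpos.2 hN)
    (F := fun t s => (exp s - exp (-N)) * a t s) (F' := fun t s => (exp s - exp (-N)) * at' t s)
    (fun t => by have := h.continuous_density.uncurry_left t; fun_prop)
    (fun t s => (h.hasDerivAt_density t s).const_mul _)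
    (by simp only [Function.uncurry_def]; fun_prop) t
  have hIBP := intervalIntegral.integral_mul_deriv_eq_deriv_mul (a := -N) (b := 0)
    (u := fun s => exp s - exp (-N)) (v := b t) (fun s _ => (hasDerivAt_exp s).sub_const _)
    (fun s _ => h.hasDerivAt_flux t s) (continuous_exp.intervalIntegrable _ _)
    (Continuous.intervalIntegrable (by have := h.continuous_rate.uncurry_left t; fun_prop) _ _)
  refine hd.congr_deriv ?_
  calc ∫ s in (-N)..0, (exp s - exp (-N)) * at' t s
      = -∫ s in (-N)..0, (exp s - exp (-N)) * (0 - at' t s) := by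
        rw [← intervalIntegral.integral_neg]; congr 1; ext s; ring
    _ = _ := by rw [hIBP]; simp only [exp_zero, sub_self, zero_mul, sub_zero]; ring

lemma HasSqIntegralLE.tendsto_truncated_exp {f : ℝ → ℝ} (h : HasSqIntegralLE f M)
    (hf : Continuous f) :
    Tendsto (fun N : ℕ => ∫ s in (-(N : ℝ))..0, (exp s - exp (-(N : ℝ))) * f s) atTop
      (𝓝 (∫ s in Iic 0, exp s * f s)) := by
  have hind (N : ℕ) : ∫ s in (-(N : ℝ))..0, (exp s - exp (-(N : ℝ))) * f s
      = ∫ s in Iic 0, max (exp s - exp (-(N : ℝ))) 0 * f s := by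
    rw [intervalIntegral.integral_of_le (neg_nonpos.2 N.cast_nonneg),
      setIntegral_eq_of_subset_of_forall_sdiff_eq_zero measurableSet_Iic
        (Ioc_subset_Iic_self (a := -(N : ℝ))) fun s hs => ?_]
    · refine setIntegral_congr_fun measurableSet_Ioc fun s hs => ?_
      rw [max_eq_left (sub_nonneg.2 (exp_le_exp.2 hs.1.le))]
    · have hsN : s ≤ -N := not_lt.1 fun hlt => hs.2 ⟨hlt, hs.1⟩
      rw [max_eq_right (sub_nonpos.2 (exp_le_exp.2 hsN)), zero_mul]
  simp only [hind]
  refine tendsto_integral_of_dominated_convergence (fun s => ‖exp s * f s‖)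
    (fun N => by fun_prop) (h.integrableOn_exp_mul hf).norm
    (fun N => Eventually.of_forall fun s => ?_) (Eventually.of_forall fun s => ?_)
  · rw [norm_mul, norm_mul, norm_of_nonneg (le_max_right _ _), norm_of_nonneg (exp_pos s).le]
    gcongr
    exact max_le (sub_le_self _ (exp_pos _).le) (exp_pos s).le
  · have hlim := (tendsto_exp_neg_natCast_mul 1).const_sub (exp s)
    simp only [mul_one, sub_zero] at hlim
    simpa only [max_eq_left (exp_pos s).le] using
      (hlim.max (tendsto_const_nhds (x := (0 : ℝ)))).mul_const (f s)

/- Only the truncated integrals are differentiated under the integral sign: their derivatives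
contain no derivative of `b`, hence converge uniformly by the square-integral bounds. -/
theorem BalanceLaw.hasDerivAt_integral_exp (h : BalanceLaw a at' b fun _ _ => 0)
    (hb : Continuous (Function.uncurry b)) (ha : ∀ t, HasSqIntegralLE (a t) M)
    (hbL : ∀ t, HasSqIntegralLE (b t) L) (t₀ : ℝ) :
    HasDerivAt (fun t => ∫ s in Iic 0, exp s * a t s)
      (-b t₀ 0 + ∫ s in Iic 0, exp s * b t₀ s) t₀ := by
  obtain ⟨B, hB⟩ := (isCompact_closedBall t₀ 1).exists_bound_of_continuousOn
    (hb.uncurry_right 0).continuousOn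
  refine hasDerivAt_of_tendstoUniformlyOn (l := (atTop : Filter ℕ)) Metric.isOpen_ball
    (g' := fun t => -b t 0 + ∫ s in Iic 0, exp s * b t s) ?_
    (Eventually.of_forall fun N t _ => h.hasDerivAt_truncated_exp N.cast_nonneg t)
    (fun t _ => (ha t).tendsto_truncated_exp (h.continuous_density.uncurry_left t))
    (Metric.mem_ball_self one_pos)
  rw [Metric.tendstoUniformlyOn_iff]
  intro ε hε
  filter_upwards [(tendsto_exp_neg_natCast_mul (1 + L + B)).eventually (gt_mem_nhds hε)]
    with N hN t ht
  refine lt_of_le_of_lt ?_ hN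
  have htail := abs_le.1 ((hbL t).abs_integral_Iic_sub_le (hb.uncurry_left t) N.cast_nonneg)
  have hbB : |b t 0| ≤ B := hB t (Metric.ball_subset_closedBall ht)
  have hexp := exp_pos (-(N : ℝ))
  rw [Real.dist_eq, abs_le]
  constructor <;> nlinarith [abs_le.1 hbB]

end ExponentialAverages

section Resolvents

/-- The resolvent `(1 + ∂ₓ)⁻¹ f`, integrating `f` from the left against an exponential. -/
def backwardResolvent (f : ℝ → ℝ) (x : ℝ) : ℝ := ∫ s in Iic (0 : ℝ), exp s * f (x + s)

/-- The resolvent `(1 - ∂ₓ)⁻¹ f`, the mirror image of `backwardResolvent`. -/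
def forwardResolvent (f : ℝ → ℝ) (x : ℝ) : ℝ := backwardResolvent (fun z => f (-z)) (-x)

/-- The linear elliptic potential `(1 - ∂ₓ²)⁻¹ f`. -/
def helmholtz (f : ℝ → ℝ) (x : ℝ) : ℝ := (backwardResolvent f x + forwardResolvent f x) / 2

/-- The derivative `∂ₓ(1 - ∂ₓ²)⁻¹ f` of `helmholtz f`. -/
def helmholtzDeriv (f : ℝ → ℝ) (x : ℝ) : ℝ := (forwardResolvent f x - backwardResolvent f x) / 2

variable {f : ℝ → ℝ} {M : ℝ}

lemma hasDerivAt_backwardResolvent (hf : ContDiff ℝ 1 f) (hM : HasSqIntegralLE f M) (x : ℝ) :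
    HasDerivAt (backwardResolvent f) (f x - backwardResolvent f x) x := by
  have h := (balanceLaw_of_contDiff hf).hasDerivAt_integral_exp
    (hf.continuous.comp (continuous_fst.add continuous_snd)).neg
    (fun t => hM.translate t) (fun t => (hM.translate t).neg) x
  refine h.congr_deriv ?_
  simp only [add_zero, neg_neg, mul_neg, integral_neg, backwardResolvent]
  ring

lemma hasDerivAt_forwardResolvent (hf : ContDiff ℝ 1 f) (hM : HasSqIntegralLE f M) (x : ℝ) :
    HasDerivAt (forwardResolvent f) (forwardResolvent f x - f x) x := by
  have h := hasDerivAt_backwardResolvent (hf.comp contDiff_neg) hM.reflect (-x)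
  refine (hasDerivAt_comp_neg h).congr_deriv ?_
  simp only [Function.comp_apply, neg_neg, neg_sub]
  rfl

lemma HasSqIntegralLE.abs_backwardResolvent_le (hM : HasSqIntegralLE f M) (hf : Continuous f)
    (x : ℝ) : |backwardResolvent f x| ≤ 1 + M := by
  simpa [backwardResolvent] using (hM.translate x).abs_integral_Iic_sub_le
    (hf.comp (continuous_const.add continuous_id)) le_rfl

lemma abs_backwardResolvent_le {d : ℝ} (hd : ∀ x, |f x| ≤ d) (x : ℝ) :
    |backwardResolvent f x| ≤ d := by
  have h := norm_integral_le_of_norm_le (μ := volume.restrict (Iic 0))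
    (f := fun s => exp s * f (x + s)) (g := fun s => exp s * d)
    ((integrableOn_exp_Iic 0).mul_const d) (Eventually.of_forall fun s => by
      rw [norm_mul, norm_of_nonneg (exp_pos s).le, norm_eq_abs]
      exact mul_le_mul_of_nonneg_left (hd _) (exp_pos s).le)
  simpa [backwardResolvent, integral_mul_const, integral_exp_Iic] using h

lemma abs_helmholtz_le {d : ℝ} (hd : ∀ x, |f x| ≤ d) (x : ℝ) : |helmholtz f x| ≤ d := by
  have hb := abs_le.1 (abs_backwardResolvent_le hd x)
  have hf := abs_le.1 (abs_backwardResolvent_le (fun z => hd (-z)) (-x))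
  rw [helmholtz, forwardResolvent, abs_le]
  constructor <;> linarith

lemma abs_helmholtzDeriv_le {d : ℝ} (hd : ∀ x, |f x| ≤ d) (x : ℝ) :
    |helmholtzDeriv f x| ≤ d := by
  have hb := abs_le.1 (abs_backwardResolvent_le hd x)
  have hf := abs_le.1 (abs_backwardResolvent_le (fun z => hd (-z)) (-x))
  rw [helmholtzDeriv, forwardResolvent, abs_le]
  constructor <;> linarith

/-- `f` is a bounded solution of `f - f'' = h` with bounded derivative `f'`. -/
structure IsHelmholtzPotential (h f f' : ℝ → ℝ) : Prop where
  hasDerivAt : ∀ x, HasDerivAt f (f' x) x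
  hasDerivAt_deriv : ∀ x, HasDerivAt f' (f x - h x) x
  bounded : ∃ B, ∀ x, |f x| ≤ B ∧ |f' x| ≤ B

namespace IsHelmholtzPotential

variable {h f' g k g' : ℝ → ℝ}

lemma continuous (H : IsHelmholtzPotential h f f') : Continuous f :=
  continuous_iff_continuousAt.2 fun x => (H.hasDerivAt x).continuousAt

lemma continuous_deriv (H : IsHelmholtzPotential h f f') : Continuous f' :=
  continuous_iff_continuousAt.2 fun x => (H.hasDerivAt_deriv x).continuousAt

lemma sub (H : IsHelmholtzPotential h f f') (G : IsHelmholtzPotential k g g') :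
    IsHelmholtzPotential (fun x => h x - k x) (fun x => f x - g x) (fun x => f' x - g' x) where
  hasDerivAt x := (H.hasDerivAt x).sub (G.hasDerivAt x)
  hasDerivAt_deriv x :=
    ((H.hasDerivAt_deriv x).sub (G.hasDerivAt_deriv x)).congr_deriv (by ring)
  bounded := by
    obtain ⟨B, hB⟩ := H.bounded
    obtain ⟨C, hC⟩ := G.bounded
    exact ⟨B + C, fun x => ⟨(abs_sub _ _).trans (add_le_add (hB x).1 (hC x).1),
      (abs_sub _ _).trans (add_le_add (hB x).2 (hC x).2)⟩⟩

end IsHelmholtzPotential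

lemma isHelmholtzPotential_helmholtz (hf : ContDiff ℝ 1 f) (hM : HasSqIntegralLE f M) :
    IsHelmholtzPotential f (helmholtz f) (helmholtzDeriv f) where
  hasDerivAt x := (((hasDerivAt_backwardResolvent hf hM x).add
    (hasDerivAt_forwardResolvent hf hM x)).div_const 2).congr_deriv (by
      rw [helmholtzDeriv]; ring)
  hasDerivAt_deriv x := (((hasDerivAt_forwardResolvent hf hM x).sub
    (hasDerivAt_backwardResolvent hf hM x)).div_const 2).congr_deriv (by
      rw [helmholtz]; ring)
  bounded := by
    refine ⟨1 + M, fun x => ?_⟩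
    have hbwd := abs_le.1 (hM.abs_backwardResolvent_le hf.continuous x)
    have hfwd := abs_le.1 (hM.reflect.abs_backwardResolvent_le
      (hf.continuous.comp continuous_neg) (-x))
    simp only [helmholtz, helmholtzDeriv, forwardResolvent, abs_le]
    refine ⟨⟨?_, ?_⟩, ?_, ?_⟩ <;> linarith

section Families

variable {a : ℝ → ℝ → ℝ}

lemma continuous_uncurry_backwardResolvent (ha : Continuous (Function.uncurry a))
    (hM : ∀ t, HasSqIntegralLE (a t) M) :
    Continuous (Function.uncurry fun t => backwardResolvent (a t)) := by
  have hlim : TendstoUniformly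
      (fun (N : ℕ) (q : ℝ × ℝ) => ∫ s in (-(N : ℝ))..0, exp s * a q.1 (q.2 + s))
      (Function.uncurry fun t => backwardResolvent (a t)) atTop := by
    rw [Metric.tendstoUniformly_iff]
    intro ε hε
    filter_upwards [(tendsto_exp_neg_natCast_mul (1 + M)).eventually (gt_mem_nhds hε)]
      with N hN q
    exact (((hM q.1).translate q.2).abs_integral_Iic_sub_le
      ((ha.uncurry_left q.1).comp (continuous_const.add continuous_id))
      N.cast_nonneg).trans_lt hN
  refine hlim.continuous (Frequently.of_forall fun N => ?_)
  apply intervalIntegral.continuous_parametric_intervalIntegral_of_continuous'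
  have : Continuous fun r : (ℝ × ℝ) × ℝ => a r.1.1 (r.1.2 + r.2) :=
    ha.comp (by fun_prop : Continuous fun r : (ℝ × ℝ) × ℝ => (r.1.1, r.1.2 + r.2))
  simp only [Function.uncurry_def]
  fun_prop

lemma continuous_uncurry_forwardResolvent (ha : Continuous (Function.uncurry a))
    (hM : ∀ t, HasSqIntegralLE (a t) M) :
    Continuous (Function.uncurry fun t => forwardResolvent (a t)) :=
  (continuous_uncurry_backwardResolvent (a := fun t x => a t (-x))
    (ha.comp (continuous_fst.prodMk continuous_snd.neg)) fun t => (hM t).reflect).comp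
    (continuous_fst.prodMk continuous_snd.neg)

lemma continuous_uncurry_helmholtz (ha : Continuous (Function.uncurry a))
    (hM : ∀ t, HasSqIntegralLE (a t) M) :
    Continuous (Function.uncurry fun t => helmholtz (a t)) :=
  ((continuous_uncurry_backwardResolvent ha hM).add
    (continuous_uncurry_forwardResolvent ha hM)).div_const 2

lemma continuous_uncurry_helmholtzDeriv (ha : Continuous (Function.uncurry a))
    (hM : ∀ t, HasSqIntegralLE (a t) M) :
    Continuous (Function.uncurry fun t => helmholtzDeriv (a t)) :=
  ((continuous_uncurry_forwardResolvent ha hM).sub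
    (continuous_uncurry_backwardResolvent ha hM)).div_const 2

variable {at' b : ℝ → ℝ → ℝ} {L : ℝ}

lemma BalanceLaw.hasDerivAt_backwardResolvent (h : BalanceLaw a at' b fun _ _ => 0)
    (hb : Continuous (Function.uncurry b)) (ha : ∀ t, HasSqIntegralLE (a t) M)
    (hbL : ∀ t, HasSqIntegralLE (b t) L) (t x : ℝ) :
    HasDerivAt (fun t => backwardResolvent (a t) x) (backwardResolvent (b t) x - b t x) t := by
  have hd := (h.translate x).hasDerivAt_integral_exp
    (hb.comp (continuous_fst.prodMk (continuous_const.add continuous_snd)))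
    (fun t => (ha t).translate x) (fun t => (hbL t).translate x) t
  refine hd.congr_deriv ?_
  rw [add_zero, backwardResolvent]
  ring

lemma BalanceLaw.hasDerivAt_forwardResolvent (h : BalanceLaw a at' b fun _ _ => 0)
    (hb : Continuous (Function.uncurry b)) (ha : ∀ t, HasSqIntegralLE (a t) M)
    (hbL : ∀ t, HasSqIntegralLE (b t) L) (t x : ℝ) :
    HasDerivAt (fun t => forwardResolvent (a t) x) (b t x - forwardResolvent (b t) x) t := by
  have hd := h.reflect.hasDerivAt_backwardResolvent
    (hb.comp (continuous_fst.prodMk continuous_snd.neg)).neg (fun t => (ha t).reflect)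
    (fun t => (hbL t).reflect.neg) t (-x)
  refine hd.congr_deriv ?_
  simp only [backwardResolvent, forwardResolvent, mul_neg, integral_neg, neg_neg]
  ring

/- The only place where the equation for `a` enters the nonlocal terms: their time derivative is
again bounded by the flux, without any derivative of it. -/
theorem BalanceLaw.hasDerivAt_helmholtzDeriv (h : BalanceLaw a at' b fun _ _ => 0)
    (hb : Continuous (Function.uncurry b)) (ha : ∀ t, HasSqIntegralLE (a t) M)
    (hbL : ∀ t, HasSqIntegralLE (b t) L) (t x : ℝ) :
    HasDerivAt (fun t => helmholtzDeriv (a t) x) (b t x - helmholtz (b t) x) t :=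
  (((h.hasDerivAt_forwardResolvent hb ha hbL t x).sub
    (h.hasDerivAt_backwardResolvent hb ha hbL t x)).div_const 2).congr_deriv (by
      rw [helmholtz]; ring)

end Families
end Resolvents

/-- A positive integrable weight that varies slowly at the unit scale of the resolvent of `1 - ∂²`,
so that elliptic estimates survive multiplication by it. -/
structure IsSlowWeight (g : ℝ → ℝ) : Prop where
  contDiff : ContDiff ℝ 1 g
  pos : ∀ x, 0 < g x
  le_one : ∀ x, g x ≤ 1
  integrable : Integrable g
  abs_deriv_le : ∀ x, |deriv g x| ≤ g x / 2

namespace IsSlowWeight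

variable {g a b : ℝ → ℝ}

lemma continuous (hg : IsSlowWeight g) : Continuous g := hg.contDiff.continuous

lemma continuous_deriv (hg : IsSlowWeight g) : Continuous (deriv g) :=
  hg.contDiff.continuous_deriv le_rfl

lemma hasDerivAt (hg : IsSlowWeight g) (x : ℝ) : HasDerivAt g (deriv g x) x :=
  (hg.contDiff.differentiable one_ne_zero x).hasDerivAt

lemma translate (hg : IsSlowWeight g) (c : ℝ) : IsSlowWeight fun x => g (x - c) where
  contDiff := hg.contDiff.comp (contDiff_id.sub contDiff_const)
  pos x := hg.pos _
  le_one x := hg.le_one _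
  integrable := hg.integrable.comp_sub_right c
  abs_deriv_le x := by
    rw [deriv_comp_sub_const]
    exact hg.abs_deriv_le _

lemma integrable_mul_sq_of_bounded (hg : IsSlowWeight g) (ha : Continuous a) {B : ℝ}
    (hB : ∀ x, |a x| ≤ B) : Integrable fun x => g x * a x ^ 2 :=
  hg.integrable.mul_bdd (by fun_prop) (ae_of_all _ fun x => by
    rw [norm_pow]
    exact pow_le_pow_left₀ (norm_nonneg _) (hB x) 2)

lemma integrable_mul (hg : IsSlowWeight g) (ha : Integrable a) : Integrable fun x => g x * a x :=
  ha.bdd_mul hg.continuous.aestronglyMeasurable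
    (ae_of_all _ fun x => by simpa [abs_of_pos (hg.pos x)] using hg.le_one x)

lemma integrable_mul_mul {v : ℝ → ℝ} (hg : IsSlowWeight g) (hv : Continuous v)
    (hvg : ∀ x, |v x| ≤ g x) (ha : Continuous a) (hb : Continuous b)
    (hga : Integrable fun x => g x * a x ^ 2) (hgb : Integrable fun x => g x * b x ^ 2) :
    Integrable fun x => v x * (a x * b x) := by
  refine (hga.add hgb).mono' (by fun_prop) (ae_of_all _ fun x => ?_)
  calc |v x * (a x * b x)| = |v x| * |a x * b x| := abs_mul _ _
    _ ≤ g x * (a x ^ 2 + b x ^ 2) := by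
      refine mul_le_mul (hvg x) ?_ (abs_nonneg _) (hg.pos x).le
      rw [abs_le]
      constructor <;> nlinarith [sq_nonneg (a x + b x), sq_nonneg (a x - b x)]
    _ = g x * a x ^ 2 + g x * b x ^ 2 := mul_add _ _ _

end IsSlowWeight

namespace IsHelmholtzPotential

variable {g h f f' : ℝ → ℝ}

lemma integrable_mul_sq (H : IsHelmholtzPotential h f f') (hg : IsSlowWeight g) :
    Integrable fun x => g x * f x ^ 2 :=
  have ⟨_, hB⟩ := H.bounded
  hg.integrable_mul_sq_of_bounded H.continuous fun x => (hB x).1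

lemma integrable_mul_deriv_sq (H : IsHelmholtzPotential h f f') (hg : IsSlowWeight g) :
    Integrable fun x => g x * f' x ^ 2 :=
  have ⟨_, hB⟩ := H.bounded
  hg.integrable_mul_sq_of_bounded H.continuous_deriv fun x => (hB x).2

lemma pointwise_elliptic_estimate {w w' a a' s : ℝ} (hw : 0 < w) (hw' : |w'| ≤ w / 2) :
    w * a ^ 2 + w * a' ^ 2
      ≤ 4 * (w' * (a * a') + (w * a' ^ 2 + (w * a ^ 2 - w * (a * s)))) + 2 * (w * s ^ 2) := by
  have hcross : |w' * (a * a')| ≤ w / 2 * ((a ^ 2 + a' ^ 2) / 2) := by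
    rw [abs_mul]
    refine mul_le_mul hw' ?_ (abs_nonneg _) (by positivity)
    rw [abs_le]
    constructor <;> nlinarith [sq_nonneg (a + a'), sq_nonneg (a - a')]
  nlinarith [(abs_le.1 hcross).1, mul_nonneg hw.le (sq_nonneg (a - s)),
    mul_nonneg hw.le (sq_nonneg a')]

theorem integral_mul_sq_add_le (H : IsHelmholtzPotential h f f') (hg : IsSlowWeight g)
    (hh : Continuous h) (hi : Integrable fun x => g x * h x ^ 2) :
    (∫ x, g x * f x ^ 2) + (∫ x, g x * f' x ^ 2) ≤ 2 * ∫ x, g x * h x ^ 2 := by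
  have hgf := H.integrable_mul_sq hg
  have hgf' := H.integrable_mul_deriv_sq hg
  have hg_self : ∀ x, |g x| ≤ g x := fun x => (abs_of_pos (hg.pos x)).le
  have hg_deriv : ∀ x, |deriv g x| ≤ g x := fun x => by
    linarith [hg.abs_deriv_le x, hg.pos x]
  have hff' := hg.integrable_mul_mul hg.continuous hg_self H.continuous H.continuous_deriv hgf hgf'
  have hfh := hg.integrable_mul_mul hg.continuous hg_self H.continuous hh hgf hi
  have hcross := hg.integrable_mul_mul hg.continuous_deriv hg_deriv H.continuous
    H.continuous_deriv hgf hgf'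
  have htotal : Integrable fun x => deriv g x * (f x * f' x)
      + (g x * f' x ^ 2 + (g x * f x ^ 2 - g x * (f x * h x))) :=
    hcross.add (hgf'.add (hgf.sub hfh))
  have hzero : ∫ x, (deriv g x * (f x * f' x)
      + (g x * f' x ^ 2 + (g x * f x ^ 2 - g x * (f x * h x)))) = 0 :=
    integral_eq_zero_of_hasDerivAt_of_integrable
      (fun x => ((hg.hasDerivAt x).mul ((H.hasDerivAt x).mul (H.hasDerivAt_deriv x))).congr_deriv
        (by simp only [Pi.mul_apply]; ring)) htotal hff'
  rw [← integral_add hgf hgf']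
  refine (integral_mono (hgf.add hgf') ((htotal.const_mul 4).add (hi.const_mul 2)) fun x =>
    pointwise_elliptic_estimate (hg.pos x) (hg.abs_deriv_le x)).trans_eq ?_
  simp only [Pi.add_apply]
  rw [integral_add (htotal.const_mul 4) (hi.const_mul 2), integral_const_mul, integral_const_mul,
    hzero, mul_zero, zero_add]

end IsHelmholtzPotential

section Weights

/-- The localising weight `sech²(x / A)` at scale `A`. -/
def sechSq (A x : ℝ) : ℝ := sech (x / A) ^ 2

variable {A R : ℝ}

lemma hasDerivAt_comp_div {f : ℝ → ℝ} {f' x : ℝ} (hf : HasDerivAt f f' (x / A)) :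
    HasDerivAt (fun z => f (z / A)) (f' / A) x :=
  (HasDerivAt.comp (h := fun z => z / A) x hf ((hasDerivAt_id x).div_const A)).congr_deriv
    (mul_one_div _ _)

lemma hasCompactSupport_comp_div {f : ℝ → ℝ} (hf : HasCompactSupport f) (hA : A ≠ 0) :
    HasCompactSupport fun x => f (x / A) := by
  simpa only [smul_eq_mul, inv_mul_eq_div] using hf.comp_smul (inv_ne_zero hA)

lemma sech_pos (x : ℝ) : 0 < sech x := inv_pos.2 (cosh_pos x)

lemma sechSq_pos (A x : ℝ) : 0 < sechSq A x := pow_pos (sech_pos _) 2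

lemma sechSq_le_one (A x : ℝ) : sechSq A x ≤ 1 :=
  pow_le_one₀ (sech_pos _).le (inv_le_one_of_one_le₀ (one_le_cosh _))

lemma contDiff_sechSq (A : ℝ) : ContDiff ℝ 1 (sechSq A) :=
  ((contDiff_cosh.comp (contDiff_id.div_const A)).inv fun x => (cosh_pos (x / A)).ne').pow 2

lemma continuous_sechSq (A : ℝ) : Continuous (sechSq A) := (contDiff_sechSq A).continuous

lemma hasDerivAt_tanh (x : ℝ) : HasDerivAt tanh (sech x ^ 2) x := by
  have h := (hasDerivAt_sinh x).div (hasDerivAt_cosh x) (cosh_pos x).ne'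
  rw [show tanh = sinh / cosh from funext tanh_eq_sinh_div_cosh]
  refine h.congr_deriv ?_
  rw [← sq, ← sq, cosh_sq_sub_sinh_sq, sech, inv_pow, one_div]

lemma hasDerivAt_mul_tanh_div (hA : A ≠ 0) (x : ℝ) :
    HasDerivAt (fun z => A * tanh (z / A)) (sechSq A x) x :=
  ((hasDerivAt_comp_div (hasDerivAt_tanh (x / A))).const_mul A).congr_deriv
    (mul_div_cancel₀ _ hA)

lemma abs_mul_tanh_div_le (hA : 0 ≤ A) (x : ℝ) : |A * tanh (x / A)| ≤ A := by
  rw [abs_mul, abs_of_nonneg hA]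
  exact mul_le_of_le_one_right hA (abs_tanh_lt_one _).le

lemma abs_deriv_sechSq_le (hA : 0 < A) (x : ℝ) : |deriv (sechSq A) x| ≤ 2 / A * sechSq A x := by
  have hsech : HasDerivAt sech (-(sinh (x / A)) / cosh (x / A) ^ 2) (x / A) :=
    (hasDerivAt_cosh _).inv (cosh_pos _).ne'
  have h : HasDerivAt (sechSq A) (-(2 / A) * tanh (x / A) * sechSq A x) x :=
    ((hasDerivAt_comp_div hsech).pow 2).congr_deriv (by
      rw [tanh_eq_sinh_div_cosh, sechSq, sech]
      push_cast
      ring)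
  have hpos := sechSq_pos A x
  rw [h.deriv, abs_mul, abs_mul, abs_neg, abs_of_pos (div_pos two_pos hA), abs_of_pos hpos]
  gcongr
  exact mul_le_of_le_one_right (by positivity) (abs_tanh_lt_one _).le

lemma exp_neg_abs_le_sech (x : ℝ) : exp (-|x|) ≤ sech x := by
  rw [sech, exp_neg]
  refine inv_anti₀ (cosh_pos x) ?_
  rw [← cosh_abs, cosh_eq]
  linarith [exp_le_exp.2 (neg_le_self (abs_nonneg x))]

lemma exp_neg_two_mul_abs_div_le_sechSq (hA : 0 < A) (x : ℝ) :
    exp (-2 * |x| / A) ≤ sechSq A x :=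
  calc exp (-2 * |x| / A) = exp (-|x / A|) ^ 2 := by
        rw [abs_div, abs_of_pos hA, ← exp_nat_mul]
        congr 1
        push_cast
        ring
    _ ≤ sechSq A x := by
        unfold sechSq
        gcongr
        exact exp_neg_abs_le_sech _

lemma sechSq_le_inv_one_add_sq (A x : ℝ) : sechSq A x ≤ (1 + (x / A) ^ 2)⁻¹ := by
  have hsinh : (x / A) ^ 2 ≤ sinh (x / A) ^ 2 := by
    rw [sq_le_sq, abs_sinh]
    exact self_le_sinh_iff.2 (abs_nonneg _)
  rw [sechSq, sech, inv_pow, cosh_sq']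
  exact inv_anti₀ (by positivity) (by linarith)

lemma integrable_sechSq (hA : A ≠ 0) : Integrable (sechSq A) :=
  (integrable_inv_one_add_sq.comp_div hA).mono' (continuous_sechSq A).aestronglyMeasurable
    (ae_of_all _ fun x => by
      rw [norm_eq_abs, abs_of_pos (sechSq_pos A x)]
      exact sechSq_le_inv_one_add_sq A x)

lemma sechSq_le_div_of_le_abs (hA : 0 < A) (hR : 0 < R) {x : ℝ} (hx : R ≤ |x|) :
    sechSq A x ≤ A / R := by
  refine (sechSq_le_inv_one_add_sq A x).trans ?_
  rw [← inv_div R A]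
  refine inv_anti₀ (div_pos hR hA) ?_
  calc R / A ≤ |x / A| := by rw [abs_div, abs_of_pos hA]; gcongr
    _ ≤ 1 + (x / A) ^ 2 := abs_le_one_add_sq _

lemma isSlowWeight_sechSq (hA : 4 ≤ A) : IsSlowWeight (sechSq A) where
  contDiff := contDiff_sechSq A
  pos := sechSq_pos A
  le_one := sechSq_le_one A
  integrable := integrable_sechSq (by positivity)
  abs_deriv_le x := by
    have hA' : 2 / A ≤ 1 / 2 := by rw [div_le_div_iff₀ (by positivity) two_pos]; linarith
    linarith [abs_deriv_sechSq_le (by positivity : 0 < A) x,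
      mul_le_mul_of_nonneg_right hA' (sechSq_pos A x).le]

/-- A smooth cutoff, equal to `1` on `[-1, 1]` and supported in `[-2, 2]`. -/
def cutoff : ContDiffBump (0 : ℝ) := ⟨1, 2, one_pos, one_lt_two⟩

lemma contDiff_cutoff_div (R : ℝ) : ContDiff ℝ 1 fun x => cutoff (x / R) :=
  cutoff.contDiff.comp (contDiff_id.div_const R)

lemma exists_abs_deriv_cutoff_le : ∃ C > 0, ∀ x, |deriv cutoff x| ≤ C * sech x ^ 2 := by
  have hderiv : Continuous (deriv cutoff) :=
    (cutoff.contDiff (n := 1)).continuous_deriv le_rfl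
  have hsech : Continuous fun x => sech x ^ 2 :=
    (continuous_cosh.inv₀ fun x => (cosh_pos x).ne').pow 2
  have hpos : ∀ x, 0 < sech x ^ 2 := fun x => pow_pos (sech_pos x) 2
  obtain ⟨B, hB⟩ := (hderiv.div hsech fun x => (hpos x).ne').bounded_above_of_compact_support
    (cutoff.hasCompactSupport.deriv.mono fun x hx h0 => hx (by simp [h0]))
  refine ⟨max B 1, by positivity, fun x => ?_⟩
  have h := (hB x).trans (le_max_left B 1)
  rwa [Real.norm_eq_abs, Pi.div_apply, abs_div, abs_of_pos (hpos x), div_le_iff₀ (hpos x)] at h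

lemma abs_deriv_cutoff_div_le {C : ℝ} (hC : ∀ x, |deriv cutoff x| ≤ C * sech x ^ 2) (hR : 0 < R)
    (x : ℝ) : |deriv (fun z => cutoff (z / R)) x| ≤ C / R * sechSq R x := by
  have h := hasDerivAt_comp_div
    ((cutoff.contDiff (n := 1)).differentiable one_ne_zero (x / R)).hasDerivAt
  rw [h.deriv, abs_div, abs_of_pos hR, sechSq, div_mul_eq_mul_div]
  exact div_le_div_of_nonneg_right (hC _) hR.le

/-- The weight of the momentum functional: the primitive `A tanh(x / A)` of `sechSq A`,
cut off at scale `R`. -/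
def truncatedTanh (A R x : ℝ) : ℝ := A * tanh (x / A) * cutoff (x / R)

/-- The weight `sechSq A`, cut off at scale `R`. -/
def truncatedSechSq (A R x : ℝ) : ℝ := sechSq A x * cutoff (x / R)

lemma contDiff_mul_tanh_div (hA : A ≠ 0) : ContDiff ℝ 1 fun x => A * tanh (x / A) := by
  rw [contDiff_one_iff_deriv]
  refine ⟨fun x => (hasDerivAt_mul_tanh_div hA x).differentiableAt, ?_⟩
  rw [funext fun x => (hasDerivAt_mul_tanh_div hA x).deriv]
  exact continuous_sechSq A

lemma contDiff_truncatedTanh (hA : A ≠ 0) (R : ℝ) : ContDiff ℝ 1 (truncatedTanh A R) :=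
  (contDiff_mul_tanh_div hA).mul (contDiff_cutoff_div R)

lemma contDiff_truncatedSechSq (A R : ℝ) : ContDiff ℝ 1 (truncatedSechSq A R) :=
  (contDiff_sechSq A).mul (contDiff_cutoff_div R)

lemma hasCompactSupport_truncatedTanh (A : ℝ) (hR : 0 < R) :
    HasCompactSupport (truncatedTanh A R) :=
  (hasCompactSupport_comp_div cutoff.hasCompactSupport hR.ne').mul_left

lemma hasCompactSupport_truncatedSechSq (A : ℝ) (hR : 0 < R) :
    HasCompactSupport (truncatedSechSq A R) :=
  (hasCompactSupport_comp_div cutoff.hasCompactSupport hR.ne').mul_left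

lemma abs_truncatedTanh_le (hA : 0 ≤ A) (R x : ℝ) : |truncatedTanh A R x| ≤ A := by
  rw [truncatedTanh, abs_mul, abs_of_nonneg cutoff.nonneg]
  exact (mul_le_of_le_one_right (abs_nonneg _) cutoff.le_one).trans (abs_mul_tanh_div_le hA x)

lemma truncatedSechSq_nonneg (A R x : ℝ) : 0 ≤ truncatedSechSq A R x :=
  mul_nonneg (sechSq_pos A x).le cutoff.nonneg

lemma truncatedSechSq_le (A R x : ℝ) : truncatedSechSq A R x ≤ sechSq A x :=
  mul_le_of_le_one_right (sechSq_pos A x).le cutoff.le_one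

lemma sechSq_sub_le_truncatedSechSq (hA : 0 < A) (hR : 0 < R) (x : ℝ) :
    sechSq A x - A / R ≤ truncatedSechSq A R x := by
  rcases le_total |x| R with hx | hx
  · have hone : cutoff (x / R) = 1 := cutoff.one_of_mem_closedBall (by
      rw [mem_closedBall_zero_iff, norm_eq_abs, abs_div, abs_of_pos hR]
      exact (div_le_one hR).2 hx)
    rw [truncatedSechSq, hone, mul_one]
    exact sub_le_self _ (by positivity)
  · linarith [sechSq_le_div_of_le_abs hA hR hx, truncatedSechSq_nonneg A R x]

lemma abs_deriv_truncatedTanh_sub_le {C : ℝ} (hC : ∀ x, |deriv cutoff x| ≤ C * sech x ^ 2)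
    (hA : 0 < A) (hR : 0 < R) (x : ℝ) :
    |deriv (truncatedTanh A R) x - truncatedSechSq A R x| ≤ C * A / R * sechSq R x := by
  have h : HasDerivAt (truncatedTanh A R) _ x := (hasDerivAt_mul_tanh_div hA.ne' x).mul
    ((contDiff_cutoff_div R).differentiable one_ne_zero x).hasDerivAt
  rw [h.deriv, truncatedSechSq, add_sub_cancel_left, abs_mul]
  calc _ ≤ A * (C / R * sechSq R x) := mul_le_mul (abs_mul_tanh_div_le hA.le x)
        (abs_deriv_cutoff_div_le hC hR x) (abs_nonneg _) hA.le
    _ = _ := by ring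

lemma abs_deriv_truncatedSechSq_le {C : ℝ} (hC : ∀ x, |deriv cutoff x| ≤ C * sech x ^ 2)
    (hA : 0 < A) (hR : 0 < R) (x : ℝ) :
    |deriv (truncatedSechSq A R) x| ≤ 2 / A * sechSq A x + C / R * sechSq R x := by
  have h : HasDerivAt (truncatedSechSq A R) _ x :=
    ((contDiff_sechSq A).differentiable one_ne_zero x).hasDerivAt.mul
      ((contDiff_cutoff_div R).differentiable one_ne_zero x).hasDerivAt
  rw [h.deriv]
  refine (abs_add_le _ _).trans (add_le_add ?_ ?_)
  · rw [abs_mul, abs_of_nonneg cutoff.nonneg]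
    exact (mul_le_of_le_one_right (abs_nonneg _) cutoff.le_one).trans (abs_deriv_sechSq_le hA x)
  · rw [abs_mul, abs_of_pos (sechSq_pos A x)]
    exact (mul_le_of_le_one_left (abs_nonneg _) (sechSq_le_one A x)).trans
      (abs_deriv_cutoff_div_le hC hR x)

end Weights

section Growth

variable {f f' f'' : ℝ → ℝ} {a c : ℝ}

lemma mul_sub_le_sub_of_le_deriv (hf : ∀ x, HasDerivAt f (f' x) x) {x : ℝ} (hax : a ≤ x)
    (hc : ∀ z ∈ Ioo a x, c ≤ f' z) : c * (x - a) ≤ f x - f a := by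
  refine (convex_Icc a x).mul_sub_le_image_sub_of_le_deriv
    (fun z _ => (hf z).continuousAt.continuousWithinAt)
    (fun z _ => (hf z).differentiableAt.differentiableWithinAt) (fun z hz => ?_)
    a (left_mem_Icc.2 hax) x (right_mem_Icc.2 hax) hax
  rw [interior_Icc] at hz
  rw [(hf z).deriv]
  exact hc z hz

lemma mul_sub_le_deriv_sub_of_deriv_nonneg (hf : ∀ x, HasDerivAt f (f' x) x)
    (hf' : ∀ x, HasDerivAt f' (f'' x) x) (hc : ∀ x, f a ≤ f x → c ≤ f'' x) {x : ℝ} (hax : a ≤ x)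
    (hpos : ∀ z ∈ Ioo a x, 0 ≤ f' z) : c * (x - a) ≤ f' x - f' a :=
  mul_sub_le_sub_of_le_deriv hf' hax fun z hz => hc z (sub_nonneg.1 (by
    simpa using mul_sub_le_sub_of_le_deriv (c := 0) hf hz.1.le
      fun y hy => hpos y ⟨hy.1, hy.2.trans hz.2⟩))

theorem mul_sub_le_deriv_of_le_deriv2 (hf : ∀ x, HasDerivAt f (f' x) x)
    (hf' : ∀ x, HasDerivAt f' (f'' x) x) (h0 : 0 < f' a) (hc0 : 0 ≤ c)
    (hc : ∀ x, f a ≤ f x → c ≤ f'' x) {x : ℝ} (hax : a ≤ x) : c * (x - a) ≤ f' x := by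
  have hcont : Continuous f' := continuous_iff_continuousAt.2 fun z => (hf' z).continuousAt
  suffices hpos : ∀ z ∈ Icc a x, 0 < f' z by
    linarith [mul_sub_le_deriv_sub_of_deriv_nonneg hf hf' hc hax
      fun z hz => (hpos z (Ioo_subset_Icc_self hz)).le]
  by_contra! hneg
  obtain ⟨m, ⟨hm, hm0⟩, hleast⟩ :=
    (isCompact_Icc.inter_right (isClosed_le hcont continuous_const)).exists_isLeast hneg
  have hbefore : ∀ z ∈ Ioo a m, 0 ≤ f' z := fun z hz => le_of_not_ge fun hz0 =>
    hz.2.not_ge (hleast ⟨⟨hz.1.le, hz.2.le.trans hm.2⟩, hz0⟩)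
  have hm0 : f' m ≤ 0 := hm0
  nlinarith [mul_sub_le_deriv_sub_of_deriv_nonneg hf hf' hc hm.1 hbefore, hm.1]

lemma exists_lt_mul_sq {α : ℝ} (hα : 0 < α) (a b : ℝ) : ∃ L ≥ 1, a * L + b < α * L ^ 2 := by
  set L := 1 + (|a| + |b|) / α with hL
  have hL1 : 1 ≤ L := le_add_of_nonneg_right (by positivity)
  have hαL : α * L = α + |a| + |b| := by rw [hL]; field_simp; ring
  refine ⟨L, hL1, ?_⟩
  calc a * L + b ≤ |a| * L + |b| * L := by
        gcongr
        · exact le_abs_self a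
        · exact (le_abs_self b).trans (le_mul_of_one_le_right (abs_nonneg b) hL1)
    _ < (α + |a| + |b|) * L := by linarith [mul_pos hα (one_pos.trans_le hL1)]
    _ = α * L ^ 2 := by rw [← hαL]; ring

end Growth

section DrivenByPotential

lemma HasSqIntegralLE.abs_integral_comp_sub_mul_le {v P f : ℝ → ℝ} {M B a : ℝ}
    (hv : HasSqIntegralLE v M) (hP : Continuous P) (hPs : HasCompactSupport P)
    (hB : ∀ x, |P x| ≤ B) (hf : Continuous f) (hfv : ∀ x, |f x| ≤ a + v x ^ 2) (y : ℝ) :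
    |∫ x, P (x - y) * f x| ≤ a * (∫ x, |P x|) + B * M := by
  have hB0 : 0 ≤ B := (abs_nonneg _).trans (hB 0)
  have hPi : Integrable fun x => a * |P (x - y)| :=
    ((hP.integrable_of_hasCompactSupport hPs).abs.comp_sub_right y).const_mul a
  have hvi := hv.integrable_sq.const_mul B
  calc |∫ x, P (x - y) * f x| ≤ ∫ x, |P (x - y) * f x| := abs_integral_le_integral_abs
    _ ≤ ∫ x, (a * |P (x - y)| + B * v x ^ 2) := by
        refine integral_mono (integrable_comp_sub_mul hP hPs hf y).abs (hPi.add hvi) fun x => ?_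
        calc |P (x - y) * f x| = |P (x - y)| * |f x| := abs_mul _ _
          _ ≤ |P (x - y)| * (a + v x ^ 2) := by gcongr; exact hfv x
          _ = a * |P (x - y)| + |P (x - y)| * v x ^ 2 := by ring
          _ ≤ a * |P (x - y)| + B * v x ^ 2 := by gcongr; exact hB _
    _ = a * (∫ x, |P x|) + B * ∫ x, v x ^ 2 := by
        rw [integral_add hPi hvi, integral_const_mul, integral_const_mul,
          integral_sub_right_eq_self (fun x => |P x|)]
    _ ≤ a * (∫ x, |P x|) + B * M := by gcongr; exact hv.integral_sq_le

/-- A bump function supported in `[1, 2]`. -/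
def sideBump : ContDiffBump (3 / 2 : ℝ) := ⟨1 / 4, 1 / 2, by norm_num, by norm_num⟩

lemma one_le_of_sideBump_ne_zero {x : ℝ} (hx : sideBump x ≠ 0) : 1 ≤ x := by
  by_contra! hlt
  refine hx (sideBump.zero_of_le_dist ?_)
  rw [dist_eq, abs_sub_comm]
  exact le_abs.2 (Or.inl (by simp only [sideBump]; linarith))

/-- Dilation of `sideBump` to the interval `[L, 2L]`. -/
def scaledBump (L x : ℝ) : ℝ := sideBump (x / L)

variable {L : ℝ}

lemma contDiff_scaledBump (L : ℝ) : ContDiff ℝ 1 (scaledBump L) :=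
  sideBump.contDiff.comp (contDiff_id.div_const L)

lemma hasCompactSupport_scaledBump (hL : L ≠ 0) : HasCompactSupport (scaledBump L) :=
  hasCompactSupport_comp_div sideBump.hasCompactSupport hL

lemma scaledBump_nonneg (L x : ℝ) : 0 ≤ scaledBump L x := sideBump.nonneg

lemma abs_scaledBump_le_one (L x : ℝ) : |scaledBump L x| ≤ 1 :=
  (abs_of_nonneg sideBump.nonneg).trans_le sideBump.le_one

lemma deriv_scaledBump (L x : ℝ) : deriv (scaledBump L) x = deriv sideBump (x / L) / L :=
  (hasDerivAt_comp_div
    ((sideBump.contDiff (n := 1)).differentiable one_ne_zero (x / L)).hasDerivAt).deriv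

lemma integral_abs_scaledBump (hL : 0 < L) : ∫ x, |scaledBump L x| = L * ∫ x, sideBump x := by
  simp_rw [abs_of_nonneg (scaledBump_nonneg L _), scaledBump]
  rw [Measure.integral_comp_div (fun x => sideBump x), abs_of_pos hL, smul_eq_mul]

lemma integral_abs_deriv_scaledBump (hL : 0 < L) :
    ∫ x, |deriv (scaledBump L) x| = ∫ x, |deriv sideBump x| := by
  simp_rw [deriv_scaledBump, abs_div, abs_of_pos hL, integral_div]
  rw [Measure.integral_comp_div (fun x => |deriv sideBump x|), abs_of_pos hL, smul_eq_mul,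
    mul_div_cancel_left₀ _ hL.ne']

/-- The velocity `u` is transported by a flux `F` that agrees, up to a constant and a quadratic
error, with a potential `φ` solving `φ'' = q φ - n` for a bounded density `n`. -/
structure IsDrivenByPotential (q : ℝ → ℝ) (δ K M : ℝ) (u ut F φ φx n : ℝ → ℝ → ℝ) : Prop where
  monotone : Monotone q
  continuous : Continuous q
  law : BalanceLaw u ut F fun _ _ => 0
  abs_flux_sub_le : ∀ t x, |F t x - φ t x| ≤ K + u t x ^ 2
  hasSqIntegralLE : ∀ t, HasSqIntegralLE (u t) M
  abs_density_le : ∀ t x, |n t x| ≤ δ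
  hasDerivAt_potential : ∀ t x, HasDerivAt (φ t) (φx t x) x
  hasDerivAt_field : ∀ t x, HasDerivAt (φx t) (q (φ t x) - n t x) x
  continuous_potential_time : ∀ x, Continuous fun t => φ t x
  continuous_field_time : ∀ x, Continuous fun t => φx t x

namespace IsDrivenByPotential

variable {q : ℝ → ℝ} {δ K M : ℝ} {u ut F φ φx n : ℝ → ℝ → ℝ}

lemma neg (h : IsDrivenByPotential q δ K M u ut F φ φx n) :
    IsDrivenByPotential (fun z => -q (-z)) δ K M (fun t x => -u t x) (fun t x => -ut t x)
      (fun t x => -F t x) (fun t x => -φ t x) (fun t x => -φx t x) (fun t x => -n t x) where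
  monotone _ _ hxy := neg_le_neg (h.monotone (neg_le_neg hxy))
  continuous := (h.continuous.comp continuous_neg).neg
  law := by simpa only [neg_zero] using h.law.neg
  abs_flux_sub_le t x := by
    rw [← neg_sub', abs_neg, neg_sq]
    exact h.abs_flux_sub_le t x
  hasSqIntegralLE t := (h.hasSqIntegralLE t).neg
  abs_density_le t x := (abs_neg _).trans_le (h.abs_density_le t x)
  hasDerivAt_potential t x := (h.hasDerivAt_potential t x).neg
  hasDerivAt_field t x := (h.hasDerivAt_field t x).neg.congr_deriv (by rw [neg_neg]; ring)
  continuous_potential_time x := (h.continuous_potential_time x).neg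
  continuous_field_time x := (h.continuous_field_time x).neg

lemma reflect (h : IsDrivenByPotential q δ K M u ut F φ φx n) :
    IsDrivenByPotential q δ K M (fun t x => -u t (-x)) (fun t x => -ut t (-x))
      (fun t x => F t (-x)) (fun t x => φ t (-x)) (fun t x => -φx t (-x))
      (fun t x => n t (-x)) where
  monotone := h.monotone
  continuous := h.continuous
  law := by simpa only [neg_neg, neg_zero] using h.law.reflect.neg
  abs_flux_sub_le t x := by
    rw [neg_sq]
    exact h.abs_flux_sub_le t (-x)
  hasSqIntegralLE t := (h.hasSqIntegralLE t).reflect.neg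
  abs_density_le t x := h.abs_density_le t (-x)
  hasDerivAt_potential t x := hasDerivAt_comp_neg (h.hasDerivAt_potential t (-x))
  hasDerivAt_field t x :=
    (hasDerivAt_comp_neg (h.hasDerivAt_field t (-x))).neg.congr_deriv (neg_neg _)
  continuous_potential_time x := h.continuous_potential_time (-x)
  continuous_field_time x := (h.continuous_field_time (-x)).neg

lemma continuous_field (h : IsDrivenByPotential q δ K M u ut F φ φx n) (t : ℝ) :
    Continuous (φx t) :=
  continuous_iff_continuousAt.2 fun x => (h.hasDerivAt_field t x).continuousAt

lemma continuous_potential (h : IsDrivenByPotential q δ K M u ut F φ φx n) (t : ℝ) :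
    Continuous (φ t) :=
  continuous_iff_continuousAt.2 fun x => (h.hasDerivAt_potential t x).continuousAt

lemma continuous_velocity (h : IsDrivenByPotential q δ K M u ut F φ φx n) (t : ℝ) :
    Continuous (u t) :=
  h.law.continuous_density.uncurry_left t

lemma hasDerivAt_integral_scaledBump (h : IsDrivenByPotential q δ K M u ut F φ φx n)
    (hL : L ≠ 0) (a t : ℝ) :
    HasDerivAt (fun s => ∫ x, scaledBump L (x - a) * u s x)
      ((∫ x, deriv (scaledBump L) (x - a) * (F t x - φ t x))
        - ∫ x, scaledBump L (x - a) * φx t x) t := by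
  have hb := contDiff_scaledBump L
  have hbs := hasCompactSupport_scaledBump hL
  have hb' := hb.continuous_deriv le_rfl
  refine (h.law.hasDerivAt_integral hb hbs contDiff_const t).congr_deriv ?_
  have hF := integrable_comp_sub_mul hb' hbs.deriv (h.law.continuous_flux t) a
  have hφ := integrable_comp_sub_mul hb' hbs.deriv (h.continuous_potential t) a
  rw [integral_comp_sub_mul_deriv hb hbs (h.hasDerivAt_potential t) (h.continuous_field t) a]
  simp only [deriv_const, zero_mul, sub_zero, mul_zero, add_zero, mul_sub]
  rw [integral_sub hF hφ]
  ring

lemma mul_sub_le_field (h : IsDrivenByPotential q δ K M u ut F φ φx n) {c a t : ℝ} (hc : 0 ≤ c)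
    (hq : δ + c ≤ q (φ t a)) (hpos : 0 < φx t a) {x : ℝ} (hx : a ≤ x) :
    c * (x - a) ≤ φx t x :=
  mul_sub_le_deriv_of_le_deriv2 (h.hasDerivAt_potential t) (h.hasDerivAt_field t) hpos hc
    (fun z hz => by linarith [h.monotone hz, le_of_abs_le (h.abs_density_le t z)]) hx

lemma mul_sq_le_integral_scaledBump_field (h : IsDrivenByPotential q δ K M u ut F φ φx n)
    {c a t : ℝ} (hc : 0 ≤ c) (hq : δ + c ≤ q (φ t a)) (hpos : 0 < φx t a) (hL : 0 < L) :
    c * L ^ 2 * (∫ x, sideBump x) ≤ ∫ x, scaledBump L (x - a) * φx t x := by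
  have hb := (contDiff_scaledBump L).continuous
  have hbs := hasCompactSupport_scaledBump hL.ne'
  calc c * L ^ 2 * (∫ x, sideBump x) = ∫ x, c * L * scaledBump L (x - a) := by
        rw [integral_const_mul, integral_sub_right_eq_self (scaledBump L)]
        simp only [scaledBump]
        rw [Measure.integral_comp_div (fun x => sideBump x), abs_of_pos hL, smul_eq_mul]
        ring
    _ ≤ ∫ x, scaledBump L (x - a) * φx t x := by
        refine integral_mono
          (((hb.integrable_of_hasCompactSupport hbs).comp_sub_right a).const_mul _)
          (integrable_comp_sub_mul hb hbs (h.continuous_field t) a) fun x => ?_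
        change c * L * scaledBump L (x - a) ≤ scaledBump L (x - a) * φx t x
        by_cases hz : scaledBump L (x - a) = 0
        · rw [hz, mul_zero, zero_mul]
        · have hLx : L ≤ x - a := (one_le_div hL).1 (one_le_of_sideBump_ne_zero hz)
          rw [mul_comm]
          refine mul_le_mul_of_nonneg_left ?_ (scaledBump_nonneg _ _)
          exact (mul_le_mul_of_nonneg_left hLx hc).trans
            (h.mul_sub_le_field hc hq hpos (by linarith))

lemma abs_integral_scaledBump_mul_le (h : IsDrivenByPotential q δ K M u ut F φ φx n)
    (hL : 0 < L) (a t : ℝ) :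
    |∫ x, scaledBump L (x - a) * u t x| ≤ L * (∫ x, sideBump x) + M := by
  have := (h.hasSqIntegralLE t).abs_integral_comp_sub_mul_le (contDiff_scaledBump L).continuous
    (hasCompactSupport_scaledBump hL.ne') (abs_scaledBump_le_one L) (h.continuous_velocity t)
    (fun x => abs_le_one_add_sq _) a
  rwa [one_mul, one_mul, integral_abs_scaledBump hL] at this

lemma abs_integral_deriv_scaledBump_mul_le (h : IsDrivenByPotential q δ K M u ut F φ φx n)
    {B : ℝ} (hB : ∀ x, ‖deriv sideBump x‖ ≤ B) (hL : 1 ≤ L) (a t : ℝ) :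
    |∫ x, deriv (scaledBump L) (x - a) * (F t x - φ t x)|
      ≤ K * (∫ x, |deriv sideBump x|) + B * M := by
  have hL0 := one_pos.trans_le hL
  rw [← integral_abs_deriv_scaledBump hL0]
  refine (h.hasSqIntegralLE t).abs_integral_comp_sub_mul_le
    ((contDiff_scaledBump L).continuous_deriv le_rfl)
    (hasCompactSupport_scaledBump hL0.ne').deriv (fun x => ?_)
    ((h.law.continuous_flux t).sub (h.continuous_potential t)) (h.abs_flux_sub_le t) a
  rw [deriv_scaledBump, abs_div, abs_of_pos hL0]
  exact (div_le_self (abs_nonneg _) hL).trans (hB _)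

/-- Where `q φ` exceeds `δ` and `φ` increases, `φ'` keeps growing to the right, and its integral
against the bump at scale `L` drives `∫ u` like `L ^ 2`, which the `L²` bound on `u` forbids. -/
lemma not_lt_of_field_pos (h : IsDrivenByPotential q δ K M u ut F φ φx n) {t₀ a : ℝ}
    (hpos : 0 < φx t₀ a) : ¬ δ < q (φ t₀ a) := by
  intro hδ
  obtain ⟨c, hc, hc'⟩ : ∃ c > 0, δ + c < q (φ t₀ a) :=
    ⟨(q (φ t₀ a) - δ) / 2, by linarith, by linarith⟩
  have hnear : ∀ᶠ t in 𝓝 t₀, δ + c < q (φ t a) ∧ 0 < φx t a :=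
    ((h.continuous.comp (h.continuous_potential_time a)).continuousAt.eventually
      (lt_mem_nhds hc')).and ((h.continuous_field_time a).continuousAt.eventually
      (lt_mem_nhds hpos))
  obtain ⟨τ, hτ, hball⟩ := Metric.eventually_nhds_iff.1 hnear
  obtain ⟨B, hB⟩ := sideBump.hasCompactSupport.deriv.exists_bound_of_continuous
    ((sideBump.contDiff (n := 1)).continuous_deriv le_rfl)
  set I := ∫ x, sideBump x
  set N := ∫ x, |deriv sideBump x|
  have hI : 0 < I := sideBump.integral_pos
  obtain ⟨L, hL1, hL⟩ := exists_lt_mul_sq (α := τ / 2 * (c * I)) (by positivity) (2 * I)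
    (2 * M + τ / 2 * (K * N + B * M))
  have hV := h.hasDerivAt_integral_scaledBump (one_pos.trans_le hL1).ne' a
  have hdrop := mul_sub_le_sub_of_le_deriv (a := t₀) (x := t₀ + τ / 2)
    (c := c * L ^ 2 * I - (K * N + B * M)) (fun t => (hV t).neg) (by linarith) fun t ht => by
      obtain ⟨hqt, hpt⟩ := @hball t (by rw [dist_eq, abs_lt]; constructor <;> linarith [ht.1, ht.2])
      linarith [h.mul_sq_le_integral_scaledBump_field hc.le hqt.le hpt (one_pos.trans_le hL1),
        le_of_abs_le (h.abs_integral_deriv_scaledBump_mul_le hB hL1 a t)]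
  have hbound := fun t => abs_le.1 (h.abs_integral_scaledBump_mul_le (one_pos.trans_le hL1) a t)
  rw [Pi.neg_apply, Pi.neg_apply] at hdrop
  linarith [(hbound t₀).2, (hbound (t₀ + τ / 2)).1]

lemma not_lt_of_field_neg (h : IsDrivenByPotential q δ K M u ut F φ φx n) {t a : ℝ}
    (hneg : φx t a < 0) : ¬ δ < q (φ t a) := by
  simpa only [neg_neg] using
    h.reflect.not_lt_of_field_pos (t₀ := t) (a := -a) (by simpa only [neg_neg, neg_pos] using hneg)

lemma comp_potential_le (h : IsDrivenByPotential q δ K M u ut F φ φx n) (t x : ℝ) :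
    q (φ t x) ≤ δ := by
  by_contra! hlt
  have hzero : φx t x = 0 := le_antisymm (not_lt.1 fun hpos => h.not_lt_of_field_pos hpos hlt)
    (not_lt.1 fun hneg => h.not_lt_of_field_neg hneg hlt)
  have hconv : 0 < deriv (φx t) x := by
    rw [(h.hasDerivAt_field t x).deriv]
    linarith [le_of_abs_le (h.abs_density_le t x)]
  have hright : ∀ᶠ z in 𝓝[>] x, SignType.sign (φx t z) = SignType.sign (z - x) :=
    nhdsWithin_le_nhds (eventually_nhdsWithin_sign_eq_of_deriv_pos hconv hzero)
  have hlarge : ∀ᶠ z in 𝓝[>] x, δ < q (φ t z) := nhdsWithin_le_nhds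
    ((h.continuous.comp (h.continuous_potential t)).continuousAt.eventually (lt_mem_nhds hlt))
  obtain ⟨z, hsign, hz, hxz⟩ := (hright.and (hlarge.and self_mem_nhdsWithin)).exists
  rw [sign_pos (sub_pos.2 hxz), sign_eq_one_iff] at hsign
  exact h.not_lt_of_field_pos hsign hz

theorem abs_comp_potential_le (h : IsDrivenByPotential q δ K M u ut F φ φx n) (t x : ℝ) :
    |q (φ t x)| ≤ δ :=
  abs_le.2 ⟨neg_le.1 (by simpa only [neg_neg] using h.neg.comp_potential_le t x),
    h.comp_potential_le t x⟩

end IsDrivenByPotential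
end DrivenByPotential

section VirialForm

lemma exists_pos_mul_sq_add_sq_le {a b d κ : ℝ} (ha : 0 < a) (hd : 0 < d)
    (hdisc : κ ^ 2 * b ^ 2 < 4 * a * d) :
    ∃ c > 0, ∀ x z Y : ℝ, |Y| ≤ κ →
      c * (x ^ 2 + z ^ 2) ≤ a * x ^ 2 - b * Y * x * z + d * z ^ 2 := by
  set c := (4 * a * d - κ ^ 2 * b ^ 2) / (4 * (a + d)) with hc
  have hc0 : 0 < c := div_pos (by linarith) (by positivity)
  have hcad : c * (4 * (a + d)) = 4 * a * d - κ ^ 2 * b ^ 2 := by rw [hc]; field_simp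
  have hca : 0 < a - c := by
    by_contra! hac
    nlinarith [sq_nonneg (κ * b), mul_pos ha ha]
  refine ⟨c, hc0, fun x z Y hY => ?_⟩
  have hYκ : Y ^ 2 ≤ κ ^ 2 := sq_le_sq' (abs_le.1 hY).1 (abs_le.1 hY).2
  have hdisc' : 0 ≤ (a - c) * (d - c) - b ^ 2 * Y ^ 2 / 4 := by
    nlinarith [mul_nonneg (sq_nonneg b) (sub_nonneg.2 hYκ), sq_nonneg c]
  have hsquare : 0 ≤ (a - c) * ((a - c) * x ^ 2 - b * Y * x * z + (d - c) * z ^ 2) := by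
    calc 0 ≤ ((a - c) * x - b * Y * z / 2) ^ 2
          + ((a - c) * (d - c) - b ^ 2 * Y ^ 2 / 4) * z ^ 2 := by positivity
      _ = _ := by ring
  linarith [nonneg_of_mul_nonneg_right hsquare hca]

/-- The coefficient of the correction `∫ u ∂(1 - ∂²)⁻¹n` in the virial functional, for which
`virialForm` becomes diagonal up to the derivative of a quadratic form. -/
def virialTheta (k : ℝ) : ℝ := 1 / (2 * (1 + k))

/-- The quadratic part of the time derivative of the virial functional, in terms of `n`, `u`,
`ν = (1 - ∂²)⁻¹n`, `ν' = ∂ν` and `ω = (1 - ∂²)⁻¹u`. -/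
def virialForm (k n u ν ν' ω : ℝ) : ℝ :=
  u ^ 2 / 2 + k / 2 * n ^ 2 + ν ^ 2 / 2 - ν' ^ 2 / 2
    - virialTheta k * (u ^ 2 - u * ω + (k * n + ν) * (ν - n))

/-- A quadratic form in `ν`, `ω` and their derivatives `ν'`, `ω'`, whose derivative is added to
`virialForm` to make it positive definite. -/
def nullForm (k Y ν ν' ω ω' : ℝ) : ℝ :=
  -(1 - virialTheta k) * (ω * ω') - (k + 1 / 2) * (ν * ν') + Y * (ν * ω' + ν' * ω)

/-- The space derivative of `nullForm`, with `ν'' = ν - n` and `ω'' = ω - u` substituted. -/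
def nullFormDeriv (k Y n u ν ν' ω ω' : ℝ) : ℝ :=
  -(1 - virialTheta k) * (ω' ^ 2 + ω * (ω - u)) - (k + 1 / 2) * (ν' ^ 2 + ν * (ν - n))
    + Y * (2 * ν' * ω' + ν * (ω - u) + (ν - n) * ω)

/-- `c` bounds below the quadratic part of the time derivative of the virial functional centred at
a point moving with a velocity `Y` not exceeding `k / √(1 + k)`. -/
structure IsCoercivityConstant (k c : ℝ) : Prop where
  pos : 0 < c
  mul_add_nullFormDeriv_le : ∀ Y n u ν ν' ω ω' : ℝ, |Y| ≤ k / √(1 + k) →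
    c * (n ^ 2 + u ^ 2) + nullFormDeriv k Y n u ν ν' ω ω'
      ≤ virialForm k n u ν ν' ω - Y * (n * u)

variable {k : ℝ}

lemma virialTheta_pos (hk : 0 < k) : 0 < virialTheta k := by unfold virialTheta; positivity

lemma virialTheta_le_one (hk : 0 < k) : virialTheta k ≤ 1 := by
  rw [virialTheta, div_le_one (by positivity)]
  linarith

lemma virialTheta_mul (hk : 0 < k) : virialTheta k * (1 + k) = 1 / 2 := by
  rw [virialTheta]
  field_simp

lemma virialForm_sub_nullFormDeriv (hk : 0 < k) (Y n u ν ν' ω ω' : ℝ) :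
    virialForm k n u ν ν' ω - Y * (n * u) - nullFormDeriv k Y n u ν ν' ω ω'
      = ((k + 1) / 2 * ν ^ 2 - Y * ν * ω + 1 / 2 * ω ^ 2)
        + (k * ν' ^ 2 - 2 * Y * ν' * ω' + (1 - virialTheta k) * ω' ^ 2)
        + ((k / 2 + virialTheta k * k) * (ν - n) ^ 2 - Y * (ν - n) * (ω - u)
          + (1 / 2 - virialTheta k) * (ω - u) ^ 2) := by
  unfold virialForm nullFormDeriv
  linear_combination (-ν * (ν - n)) * virialTheta_mul hk

theorem exists_isCoercivityConstant (hk : 0 < k) : ∃ c, IsCoercivityConstant k c := by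
  have hκ : (k / √(1 + k)) ^ 2 = k ^ 2 / (1 + k) := by rw [div_pow, sq_sqrt (by positivity)]
  have hθ₁ : 1 - virialTheta k = (1 + 2 * k) / (2 * (1 + k)) := by
    unfold virialTheta; field_simp; ring
  have hθ₂ : 1 / 2 - virialTheta k = k / (2 * (1 + k)) := by
    unfold virialTheta; field_simp; ring
  have hθ₃ : k / 2 + virialTheta k * k = k * (k + 2) / (2 * (1 + k)) := by
    unfold virialTheta; field_simp; ring
  obtain ⟨c₀, hc₀, h₀⟩ := exists_pos_mul_sq_add_sq_le (a := (k + 1) / 2) (b := 1) (d := 1 / 2)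
    (κ := k / √(1 + k)) (by positivity) (by norm_num) (by
      rw [hκ, one_pow, mul_one, div_lt_iff₀ (by positivity)]
      nlinarith)
  obtain ⟨c₁, hc₁, h₁⟩ := exists_pos_mul_sq_add_sq_le (b := 2) (d := 1 - virialTheta k)
    (κ := k / √(1 + k)) hk (by rw [hθ₁]; positivity) (by
      rw [hκ, hθ₁]
      field_simp
      nlinarith)
  obtain ⟨c₂, hc₂, h₂⟩ := exists_pos_mul_sq_add_sq_le (a := k / 2 + virialTheta k * k) (b := 1)
    (d := 1 / 2 - virialTheta k) (κ := k / √(1 + k)) (by rw [hθ₃]; positivity)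
    (by rw [hθ₂]; positivity) (by
      rw [hκ, hθ₂, hθ₃]
      field_simp
      nlinarith)
  have : 0 < min c₀ c₂ := lt_min hc₀ hc₂
  refine ⟨min c₀ c₂ / 2, by positivity, fun Y n u ν ν' ω ω' hY => ?_⟩
  have hparallelogram : 0 ≤ min c₀ c₂ * ((2 * ν - n) ^ 2 + (2 * ω - u) ^ 2) := by positivity
  linarith [virialForm_sub_nullFormDeriv hk Y n u ν ν' ω ω', h₀ ν ω Y hY, h₂ (ν - n) (ω - u) Y hY,
    (by positivity : 0 ≤ c₁ * (ν' ^ 2 + ω' ^ 2)).trans (h₁ ν' ω' Y hY),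
    mul_le_mul_of_nonneg_right (min_le_left c₀ c₂) (by positivity : 0 ≤ ν ^ 2 + ω ^ 2),
    mul_le_mul_of_nonneg_right (min_le_right c₀ c₂)
      (by positivity : 0 ≤ (ν - n) ^ 2 + (ω - u) ^ 2)]

end VirialForm

section Remainders

variable {k ε n u ν ν' ω φ φ' f g Q : ℝ}

lemma abs_mul_le_add_sq_div (hε : 0 < ε) (x z : ℝ) : |x * z| ≤ ε * x ^ 2 + 1 / ε * z ^ 2 := by
  have hsq : ε * x ^ 2 + 1 / ε * z ^ 2 - 2 * |x * z| = 1 / ε * (ε * |x| - |z|) ^ 2 := by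
    rw [abs_mul, ← sq_abs x, ← sq_abs z]
    field_simp
    ring
  have : 0 ≤ 1 / ε * (ε * |x| - |z|) ^ 2 := by positivity
  linarith [abs_nonneg (x * z)]

lemma abs_sq_sub_sq_le (hε : 0 < ε) (x z : ℝ) :
    |x ^ 2 - z ^ 2| ≤ 2 * ε * (x ^ 2 + z ^ 2) + 1 / ε * (x - z) ^ 2 := by
  rw [sq_sub_sq]
  exact (abs_mul_le_add_sq_div hε _ _).trans (by nlinarith [sq_nonneg (x - z)])

lemma abs_mul_sq_le (hn : |n| ≤ ε) (u : ℝ) : |n * u ^ 2| ≤ ε * u ^ 2 := by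
  rw [abs_mul, abs_of_nonneg (sq_nonneg u)]
  gcongr

/-- The remainder of the flux of the momentum `n u` beyond its quadratic part, the potential being
replaced by its linearisation `ν`. -/
lemma abs_flux_sub_le (hε : 0 < ε) (hn : |n| ≤ ε) (hg : |g - k / 2 * n ^ 2| ≤ ε * n ^ 2)
    (hQ : |Q - φ ^ 2 / 2| ≤ ε * φ ^ 2) :
    |(u ^ 2 / 2 + n * u ^ 2 + g - φ' ^ 2 / 2 + Q)
        - (u ^ 2 / 2 + k / 2 * n ^ 2 + ν ^ 2 / 2 - ν' ^ 2 / 2)|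
      ≤ 2 * ε * (n ^ 2 + u ^ 2 + φ ^ 2 + φ' ^ 2 + ν ^ 2 + ν' ^ 2)
        + 1 / ε * ((φ - ν) ^ 2 + (φ' - ν') ^ 2) := by
  have hnu := abs_mul_sq_le hn u
  have hφ := abs_sq_sub_sq_le hε φ ν
  have hφ' := abs_sq_sub_sq_le hε φ' ν'
  have hd : 0 ≤ 1 / ε * ((φ - ν) ^ 2 + (φ' - ν') ^ 2) := by positivity
  have hq : 0 ≤ ε * (n ^ 2 + u ^ 2 + ν ^ 2 + φ' ^ 2 + ν' ^ 2) := by positivity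
  rw [abs_le] at *
  constructor <;> linarith

/-- The remainder of the source of `u ν'` beyond its quadratic part; `ω + τ` stands for
`(1 - ∂²)⁻¹((1 + n)u)`. -/
lemma abs_source_sub_le {τ : ℝ} (hε : 0 < ε) (hn : |n| ≤ ε) (hν : |ν| ≤ ε)
    (hf : |f - k * n| ≤ ε * |n|) :
    |((u ^ 2 / 2 + f + φ) * (ν - n) + u * ((1 + n) * u - (ω + τ)))
        - (u ^ 2 - u * ω + (k * n + ν) * (ν - n))|
      ≤ 4 * ε * (n ^ 2 + u ^ 2 + ν ^ 2) + 1 / ε * ((φ - ν) ^ 2 + τ ^ 2) := by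
  have hnu := abs_mul_sq_le hn u
  have hνu := abs_mul_sq_le hν u
  have hfν : |(f - k * n) * (ν - n)| ≤ ε * (2 * n ^ 2 + ν ^ 2) := by
    calc |(f - k * n) * (ν - n)| ≤ ε * |n| * (|ν| + |n|) := by
          rw [abs_mul]
          exact mul_le_mul hf (abs_sub ν n) (abs_nonneg _) (by positivity)
      _ = ε * (|n| * |ν| + n ^ 2) := by rw [← sq_abs n]; ring
      _ ≤ ε * (2 * n ^ 2 + ν ^ 2) := by
          refine mul_le_mul_of_nonneg_left ?_ hε.le
          nlinarith [sq_nonneg (|n| - |ν|), sq_abs n, sq_abs ν]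
  have hφν := abs_mul_le_add_sq_div hε (ν - n) (φ - ν)
  have hsub : ε * (ν - n) ^ 2 ≤ 2 * ε * (ν ^ 2 + n ^ 2) := by
    linarith [mul_nonneg hε.le (sq_nonneg (ν + n))]
  have huτ := abs_mul_le_add_sq_div hε u τ
  have hq : 0 ≤ ε * (n ^ 2 + u ^ 2 + ν ^ 2) := by positivity
  rw [abs_le] at *
  constructor <;> linarith [mul_nonneg hε.le (sq_nonneg n), mul_nonneg hε.le (sq_nonneg ν)]

end Remainders

section CrudeBounds

variable {k ε Y n u ν ν' ω ω' φ φ' f g Q : ℝ}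

lemma abs_mul_mul_le (hY : |Y| ≤ k) (x z : ℝ) : |Y * (x * z)| ≤ k * ((x ^ 2 + z ^ 2) / 2) := by
  rw [abs_mul]
  refine mul_le_mul hY ?_ (abs_nonneg _) ((abs_nonneg _).trans hY)
  rw [abs_le]
  constructor <;> nlinarith [sq_nonneg (x - z), sq_nonneg (x + z)]

lemma abs_flux_sub_mul_le (hY : |Y| ≤ k) (hε : ε ≤ 1) (hn : |n| ≤ ε)
    (hg : |g - k / 2 * n ^ 2| ≤ ε * n ^ 2) (hQ : |Q - φ ^ 2 / 2| ≤ ε * φ ^ 2) :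
    |(u ^ 2 / 2 + n * u ^ 2 + g - φ' ^ 2 / 2 + Q) - Y * (n * u)|
      ≤ (2 * k + 4) * (n ^ 2 + u ^ 2 + φ ^ 2 + φ' ^ 2) := by
  have hk := (abs_nonneg Y).trans hY
  have hnu := abs_mul_sq_le (hn.trans hε) u
  have hYnu := abs_mul_mul_le hY n u
  have hg' := hg.trans (mul_le_mul_of_nonneg_right hε (sq_nonneg n))
  have hQ' := hQ.trans (mul_le_mul_of_nonneg_right hε (sq_nonneg φ))
  have hkn : 0 ≤ k * n ^ 2 := by positivity
  have hku : 0 ≤ k * u ^ 2 := by positivity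
  have hkφ : 0 ≤ k * (φ ^ 2 + φ' ^ 2) := by positivity
  rw [abs_le] at *
  constructor <;> linarith [sq_nonneg n, sq_nonneg u, sq_nonneg φ, sq_nonneg φ']

lemma abs_corrector_flux_sub_mul_le (hY : |Y| ≤ k) (hε : ε ≤ 1) (hν' : |ν'| ≤ ε)
    (hf : |f - k * n| ≤ ε * |n|) :
    |(u ^ 2 / 2 + f + φ) * ν' - Y * (u * ν')|
      ≤ (2 * k + 4) * (n ^ 2 + u ^ 2 + φ ^ 2 + ν' ^ 2) := by
  have hk := (abs_nonneg Y).trans hY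
  have hνu := abs_mul_sq_le (hν'.trans hε) u
  have hYuν := abs_mul_mul_le hY u ν'
  have hfν : |(f - k * n) * ν'| ≤ (n ^ 2 + ν' ^ 2) / 2 := by
    calc |(f - k * n) * ν'| ≤ |n| * |ν'| := by
          rw [abs_mul]
          exact mul_le_mul_of_nonneg_right
            (hf.trans (mul_le_of_le_one_left (abs_nonneg n) hε)) (abs_nonneg ν')
      _ ≤ (n ^ 2 + ν' ^ 2) / 2 := by
          rw [← sq_abs n, ← sq_abs ν']
          linarith [two_mul_le_add_sq |n| |ν'|]
  have hknν := abs_mul_mul_le (abs_of_nonneg hk).le n ν'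
  have hφν := abs_mul_mul_le (abs_one (α := ℝ)).le φ ν'
  have hkn : 0 ≤ k * n ^ 2 := by positivity
  have hku : 0 ≤ k * u ^ 2 := by positivity
  have hkφ : 0 ≤ k * φ ^ 2 := by positivity
  have hkν : 0 ≤ k * ν' ^ 2 := by positivity
  rw [abs_le] at *
  constructor <;> linarith [sq_nonneg n, sq_nonneg u, sq_nonneg φ, sq_nonneg ν']

lemma abs_nullForm_le (hk : 0 < k) (hY : |Y| ≤ k) :
    |nullForm k Y ν ν' ω ω'| ≤ (2 * k + 4) * (ν ^ 2 + ν' ^ 2 + ω ^ 2 + ω' ^ 2) := by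
  have hθ : |1 - virialTheta k| ≤ 1 := by
    rw [abs_le]
    constructor <;> linarith [virialTheta_pos hk, virialTheta_le_one hk]
  have hω := abs_mul_mul_le hθ ω ω'
  have hν := abs_mul_mul_le (abs_of_pos (by linarith : 0 < k + 1 / 2)).le ν ν'
  have hνω' := abs_mul_mul_le hY ν ω'
  have hν'ω := abs_mul_mul_le hY ν' ω
  have hkν : 0 ≤ k * (ν ^ 2 + ν' ^ 2) := by positivity
  have hkω : 0 ≤ k * (ω ^ 2 + ω' ^ 2) := by positivity
  unfold nullForm
  rw [abs_le] at *
  constructor <;> linarith [sq_nonneg ν, sq_nonneg ν', sq_nonneg ω, sq_nonneg ω']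

end CrudeBounds

section Perturbation

/-- The primitive of `qfun` that vanishes at `0`; it is also the part of `qfun` beyond its
linearization. -/
def expRemainder (x : ℝ) : ℝ := exp x - 1 - x

lemma hasDerivAt_expRemainder (x : ℝ) : HasDerivAt expRemainder (qfun x) x :=
  ((hasDerivAt_exp x).sub_const 1).sub (hasDerivAt_id x)

lemma continuous_expRemainder : Continuous expRemainder := by unfold expRemainder; fun_prop

lemma abs_expRemainder_sub_le {ε x : ℝ} (hε : ε ≤ 1 / 10) (hx : |x| ≤ 2 * ε) :
    |expRemainder x - x ^ 2 / 2| ≤ ε * x ^ 2 := by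
  have h := Real.exp_bound (x := x) (by linarith) (n := 3) (by norm_num)
  norm_num [Finset.sum_range_succ, Nat.factorial] at h
  have hcube : |x| ^ 3 = |x| * x ^ 2 := by rw [pow_succ', sq_abs]
  rw [hcube] at h
  calc |expRemainder x - x ^ 2 / 2| = |exp x - (1 + x + x ^ 2 / 2)| := by
        rw [expRemainder]
        ring_nf
    _ ≤ |x| * x ^ 2 * (2 / 9) := h
    _ ≤ 2 * ε * x ^ 2 * (2 / 9) := by gcongr
    _ ≤ ε * x ^ 2 := by
        linarith [mul_nonneg (mul_nonneg ((abs_nonneg x).trans hx) (sq_nonneg x)) zero_le_two]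

lemma expRemainder_sq_le {ε x : ℝ} (hε : ε ≤ 1 / 10) (hx : |x| ≤ 2 * ε) (z : ℝ) :
    expRemainder x ^ 2 ≤ 8 * ε ^ 2 * ((x - z) ^ 2 + z ^ 2) := by
  calc expRemainder x ^ 2 = |expRemainder x| ^ 2 := (sq_abs _).symm
    _ ≤ (x ^ 2) ^ 2 := by
        gcongr
        exact abs_exp_sub_one_sub_id_le (by linarith)
    _ = |x| ^ 2 * x ^ 2 := by rw [sq_abs, sq]
    _ ≤ (2 * ε) ^ 2 * x ^ 2 := by gcongr
    _ ≤ 8 * ε ^ 2 * ((x - z) ^ 2 + z ^ 2) := by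
        linarith [mul_nonneg (sq_nonneg (2 * ε)) (sq_nonneg (x - z - z))]

namespace IsHelmholtzPotential

variable {g h h₁ h₂ f f' f₁ f₁' f₂ f₂' : ℝ → ℝ} {ε : ℝ}

theorem integral_mul_sub_sq_add_le_of_expRemainder
    (H : IsHelmholtzPotential (fun x => h x - expRemainder (f x)) f f')
    (H₁ : IsHelmholtzPotential h f₁ f₁') (hg : IsSlowWeight g) (hh : Continuous h)
    (hi : Integrable fun x => g x * h x ^ 2) (hε : ε ≤ 1 / 10) (hf : ∀ x, |f x| ≤ 2 * ε) :
    (∫ x, g x * (f x - f₁ x) ^ 2) + (∫ x, g x * (f' x - f₁' x) ^ 2)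
      ≤ 40 * ε ^ 2 * ∫ x, g x * h x ^ 2 := by
  have := H.continuous
  have hcont : Continuous fun x => h x - expRemainder (f x) - h x := by
    unfold expRemainder
    fun_prop
  have hD := (H.sub H₁).integrable_mul_sq hg
  have hf₁ := H₁.integrable_mul_sq hg
  have hle : ∀ x, g x * (h x - expRemainder (f x) - h x) ^ 2
      ≤ 8 * ε ^ 2 * (g x * (f x - f₁ x) ^ 2 + g x * f₁ x ^ 2) := fun x => by
    calc g x * (h x - expRemainder (f x) - h x) ^ 2 = g x * expRemainder (f x) ^ 2 := by ring
      _ ≤ g x * (8 * ε ^ 2 * ((f x - f₁ x) ^ 2 + f₁ x ^ 2)) :=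
          mul_le_mul_of_nonneg_left (expRemainder_sq_le hε (hf x) _) (hg.pos x).le
      _ = _ := by ring
  have hmaj : Integrable fun x => 8 * ε ^ 2 * (g x * (f x - f₁ x) ^ 2 + g x * f₁ x ^ 2) :=
    (hD.add hf₁).const_mul _
  have := hg.continuous
  have hint : Integrable fun x => g x * (h x - expRemainder (f x) - h x) ^ 2 :=
    hmaj.mono' (by fun_prop) (ae_of_all _ fun x => by
      rw [norm_eq_abs, abs_of_nonneg (mul_nonneg (hg.pos x).le (sq_nonneg _))]
      exact hle x)
  have hQ := integral_mono hint hmaj hle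
  rw [integral_const_mul, integral_add hD hf₁] at hQ
  have hnn : ∀ a : ℝ → ℝ, 0 ≤ ∫ x, g x * a x ^ 2 := fun a =>
    integral_nonneg fun x => mul_nonneg (hg.pos x).le (sq_nonneg _)
  have hell := (H.sub H₁).integral_mul_sq_add_le hg hcont hint
  have hell₁ := H₁.integral_mul_sq_add_le hg hh hi
  have hε_sq : ε ^ 2 ≤ 1 / 100 := by nlinarith [(abs_nonneg _).trans (hf 0)]
  nlinarith [hnn f₁', hnn fun x => f x - f₁ x, hnn fun x => f' x - f₁' x,
    mul_le_mul_of_nonneg_right hε_sq (hnn fun x => f x - f₁ x),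
    mul_le_mul_of_nonneg_left hell₁ (sq_nonneg ε), mul_nonneg (sq_nonneg ε) (hnn f₁')]

lemma integral_mul_sub_sq_le_of_abs_sub_le (H₁ : IsHelmholtzPotential h₁ f₁ f₁')
    (H₂ : IsHelmholtzPotential h₂ f₂ f₂') (hg : IsSlowWeight g) (hh₁ : Continuous h₁)
    (hh₂ : Continuous h₂) (hi : Integrable fun x => g x * h x ^ 2)
    (hle : ∀ x, |h₁ x - h₂ x| ≤ ε * |h x|) :
    ∫ x, g x * (f₁ x - f₂ x) ^ 2 ≤ 2 * ε ^ 2 * ∫ x, g x * h x ^ 2 := by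
  have hle_sq : ∀ x, g x * (h₁ x - h₂ x) ^ 2 ≤ ε ^ 2 * (g x * h x ^ 2) := fun x => by
    calc g x * (h₁ x - h₂ x) ^ 2 = g x * |h₁ x - h₂ x| ^ 2 := by rw [sq_abs]
      _ ≤ g x * (ε * |h x|) ^ 2 :=
          mul_le_mul_of_nonneg_left (pow_le_pow_left₀ (abs_nonneg _) (hle x) 2) (hg.pos x).le
      _ = ε ^ 2 * (g x * h x ^ 2) := by rw [mul_pow, sq_abs]; ring
  have := hg.continuous
  have hint : Integrable fun x => g x * (h₁ x - h₂ x) ^ 2 :=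
    (hi.const_mul _).mono' (by fun_prop) (ae_of_all _ fun x => by
      rw [norm_eq_abs, abs_of_nonneg (mul_nonneg (hg.pos x).le (sq_nonneg _))]
      exact hle_sq x)
  have hmono := integral_mono hint (hi.const_mul _) hle_sq
  rw [integral_const_mul] at hmono
  have hell := (H₁.sub H₂).integral_mul_sq_add_le hg (by fun_prop) hint
  have hnn : 0 ≤ ∫ x, g x * (f₁' x - f₂' x) ^ 2 :=
    integral_nonneg fun x => mul_nonneg (hg.pos x).le (sq_nonneg _)
  linarith

end IsHelmholtzPotential

end Perturbation

section SmallStates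

/-- The Legendre-type pressure `a * w a - ∫₀ᵃ w`, whose derivative is `a * w' a`. -/
def legendre (w : ℝ → ℝ) (a : ℝ) : ℝ := a * w a - Wfun w a

/-- The enthalpy `w` and its pressure `legendre w` agree on `[-δ, δ]` with their leading terms
`k * a` and `k / 2 * a ^ 2`, up to a relative error `ε`. -/
structure IsNearlyLinear (w : ℝ → ℝ) (k ε δ : ℝ) : Prop where
  slope_pos : 0 < k
  radius_pos : 0 < δ
  radius_le : δ ≤ ε
  error_le : ε ≤ 1 / 10
  contDiffOn : ContDiffOn ℝ 1 w (Ioi (-1))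
  abs_sub_le : ∀ a, |a| ≤ δ → |w a - k * a| ≤ ε * |a|
  abs_legendre_sub_le : ∀ a, |a| ≤ δ → |legendre w a - k / 2 * a ^ 2| ≤ ε * a ^ 2

lemma hasDerivAt_legendre {w : ℝ → ℝ} (hw : ContDiffOn ℝ 1 w (Ioi (-1))) {a : ℝ} (ha : -1 < a) :
    HasDerivAt (legendre w) (a * deriv w a) a := by
  have hwa : HasDerivAt w (deriv w a) a :=
    ((hw.differentiableOn one_ne_zero).differentiableAt (Ioi_mem_nhds ha)).hasDerivAt
  have hsub : uIcc 0 a ⊆ Ioi (-1) := fun s hs =>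
    (lt_min (by norm_num : (-1 : ℝ) < 0) ha).trans_le hs.1
  have hW : HasDerivAt (Wfun w) (w a) a := intervalIntegral.integral_hasDerivAt_right
    (hw.continuousOn.mono hsub).intervalIntegrable
    (hw.continuousOn.stronglyMeasurableAtFilter isOpen_Ioi a ha) hwa.continuousAt
  exact (((hasDerivAt_id a).mul hwa).sub hW).congr_deriv (by simp)

/-- The state of the system at one time: density perturbation `n`, velocity `u` and potential `φ`
with derivative `φ'`, all but `u` of size `ε`. -/
structure IsSmallState (ε Mn Mu : ℝ) (n u φ φ' : ℝ → ℝ) : Prop where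
  contDiff_density : ContDiff ℝ 1 n
  contDiff_velocity : ContDiff ℝ 1 u
  abs_density_le : ∀ x, |n x| ≤ ε
  abs_potential_le : ∀ x, |φ x| ≤ 2 * ε
  hasSqIntegralLE_density : HasSqIntegralLE n (Mn ^ 2)
  hasSqIntegralLE_velocity : HasSqIntegralLE u (Mu ^ 2)
  potential : IsHelmholtzPotential (fun x => n x - expRemainder (φ x)) φ φ'

/-- The momentum `(1 + n) u`. -/
def momentum (n u : ℝ → ℝ) (x : ℝ) : ℝ := (1 + n x) * u x

/-- The flux `u² / 2 + w(n) + φ` of the velocity. -/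
def velocityFlux (w n u φ : ℝ → ℝ) (x : ℝ) : ℝ := u x ^ 2 / 2 + w (n x) + φ x

/-- The flux of the density `n u`. -/
def impulseFlux (w n u φ φ' : ℝ → ℝ) (x : ℝ) : ℝ :=
  u x ^ 2 / 2 + n x * u x ^ 2 + legendre w (n x) - φ' x ^ 2 / 2 + expRemainder (φ x)

/-- The flux of the corrector `u ∂(1 - ∂²)⁻¹n`. -/
def correctorFlux (w n u φ : ℝ → ℝ) (x : ℝ) : ℝ := velocityFlux w n u φ x * helmholtzDeriv n x

/-- The source of the corrector `u ∂(1 - ∂²)⁻¹n`. -/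
def correctorSource (w n u φ : ℝ → ℝ) (x : ℝ) : ℝ :=
  velocityFlux w n u φ x * (helmholtz n x - n x)
    + u x * (momentum n u x - helmholtz (momentum n u) x)

/-- The sum of the squares of all linear quantities that enter the virial identity. -/
def linearSq (n u : ℝ → ℝ) (x : ℝ) : ℝ :=
  n x ^ 2 + u x ^ 2 + (helmholtz n x ^ 2 + helmholtzDeriv n x ^ 2)
    + (helmholtz u x ^ 2 + helmholtzDeriv u x ^ 2)

/-- The squared errors made when the potential and the momentum are replaced by their
linearizations. -/
def linearizationErrorSq (n u φ φ' : ℝ → ℝ) (x : ℝ) : ℝ :=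
  (φ x - helmholtz n x) ^ 2 + (φ' x - helmholtzDeriv n x) ^ 2
    + (helmholtz (momentum n u) x - helmholtz u x) ^ 2

lemma linearSq_nonneg (n u : ℝ → ℝ) (x : ℝ) : 0 ≤ linearSq n u x := by
  unfold linearSq
  positivity

lemma linearizationErrorSq_nonneg (n u φ φ' : ℝ → ℝ) (x : ℝ) :
    0 ≤ linearizationErrorSq n u φ φ' x := by
  unfold linearizationErrorSq
  positivity

namespace IsSmallState

variable {w n u φ φ' g : ℝ → ℝ} {k ε Mn Mu : ℝ}

lemma mono {δ : ℝ} (S : IsSmallState δ Mn Mu n u φ φ') (h : δ ≤ ε) :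
    IsSmallState ε Mn Mu n u φ φ' :=
  { S with
    abs_density_le x := (S.abs_density_le x).trans h
    abs_potential_le x := (S.abs_potential_le x).trans (by linarith) }

lemma contDiff_momentum (S : IsSmallState ε Mn Mu n u φ φ') : ContDiff ℝ 1 (momentum n u) :=
  (contDiff_const.add S.contDiff_density).mul S.contDiff_velocity

lemma hasSqIntegralLE_momentum (S : IsSmallState ε Mn Mu n u φ φ') (hε : ε ≤ 1) :
    HasSqIntegralLE (momentum n u) (4 * Mu ^ 2) := by
  have hu := S.hasSqIntegralLE_velocity
  have hle (x) : momentum n u x ^ 2 ≤ 4 * u x ^ 2 := by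
    have hn := abs_le.1 ((S.abs_density_le x).trans hε)
    rw [momentum, mul_pow]
    gcongr
    nlinarith
  have := S.contDiff_momentum.continuous
  have hint : Integrable fun x => momentum n u x ^ 2 :=
    (hu.integrable_sq.const_mul 4).mono' (by fun_prop) (ae_of_all _ fun x => by
      rw [norm_eq_abs, abs_of_nonneg (sq_nonneg _)]
      exact hle x)
  refine ⟨hint, (integral_mono hint (hu.integrable_sq.const_mul 4) hle).trans ?_⟩
  rw [integral_const_mul]
  linarith [hu.integral_sq_le]

lemma isHelmholtzPotential_density (S : IsSmallState ε Mn Mu n u φ φ') :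
    IsHelmholtzPotential n (helmholtz n) (helmholtzDeriv n) :=
  isHelmholtzPotential_helmholtz S.contDiff_density S.hasSqIntegralLE_density

lemma isHelmholtzPotential_velocity (S : IsSmallState ε Mn Mu n u φ φ') :
    IsHelmholtzPotential u (helmholtz u) (helmholtzDeriv u) :=
  isHelmholtzPotential_helmholtz S.contDiff_velocity S.hasSqIntegralLE_velocity

lemma isHelmholtzPotential_momentum (S : IsSmallState ε Mn Mu n u φ φ') (hε : ε ≤ 1) :
    IsHelmholtzPotential (momentum n u) (helmholtz (momentum n u))
      (helmholtzDeriv (momentum n u)) :=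
  isHelmholtzPotential_helmholtz S.contDiff_momentum (S.hasSqIntegralLE_momentum hε)

lemma integrable_mul_density_sq (S : IsSmallState ε Mn Mu n u φ φ') (hg : IsSlowWeight g) :
    Integrable fun x => g x * n x ^ 2 :=
  hg.integrable_mul S.hasSqIntegralLE_density.integrable_sq

lemma integrable_mul_velocity_sq (S : IsSmallState ε Mn Mu n u φ φ') (hg : IsSlowWeight g) :
    Integrable fun x => g x * u x ^ 2 :=
  hg.integrable_mul S.hasSqIntegralLE_velocity.integrable_sq

lemma integrable_sq_add_sq (S : IsSmallState ε Mn Mu n u φ φ') :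
    Integrable fun x => n x ^ 2 + u x ^ 2 :=
  S.hasSqIntegralLE_density.integrable_sq.add S.hasSqIntegralLE_velocity.integrable_sq

lemma integral_sq_add_sq_le (S : IsSmallState ε Mn Mu n u φ φ') :
    ∫ x, (n x ^ 2 + u x ^ 2) ≤ Mn ^ 2 + Mu ^ 2 := by
  rw [integral_add S.hasSqIntegralLE_density.integrable_sq
    S.hasSqIntegralLE_velocity.integrable_sq]
  exact add_le_add S.hasSqIntegralLE_density.integral_sq_le
    S.hasSqIntegralLE_velocity.integral_sq_le

lemma integral_mul_sq_add_sq (S : IsSmallState ε Mn Mu n u φ φ') (hg : IsSlowWeight g) :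
    ∫ x, g x * (n x ^ 2 + u x ^ 2) = (∫ x, g x * n x ^ 2) + ∫ x, g x * u x ^ 2 := by
  simp_rw [mul_add]
  exact integral_add (S.integrable_mul_density_sq hg) (S.integrable_mul_velocity_sq hg)

lemma integrable_mul_linearSq (S : IsSmallState ε Mn Mu n u φ φ') (hg : IsSlowWeight g) :
    Integrable fun x => g x * linearSq n u x := by
  unfold linearSq
  simp_rw [mul_add]
  have hn := S.isHelmholtzPotential_density
  have hu := S.isHelmholtzPotential_velocity
  exact (((S.integrable_mul_density_sq hg).add (S.integrable_mul_velocity_sq hg)).add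
    ((hn.integrable_mul_sq hg).add (hn.integrable_mul_deriv_sq hg))).add
    ((hu.integrable_mul_sq hg).add (hu.integrable_mul_deriv_sq hg))

lemma integral_mul_linearSq_le (S : IsSmallState ε Mn Mu n u φ φ') (hg : IsSlowWeight g) :
    ∫ x, g x * linearSq n u x ≤ 3 * ∫ x, g x * (n x ^ 2 + u x ^ 2) := by
  have in₀ := S.integrable_mul_density_sq hg
  have iu₀ := S.integrable_mul_velocity_sq hg
  have Hn := S.isHelmholtzPotential_density
  have Hu := S.isHelmholtzPotential_velocity
  have inu : Integrable fun x => g x * n x ^ 2 + g x * u x ^ 2 := in₀.add iu₀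
  have iν : Integrable fun x => g x * helmholtz n x ^ 2 + g x * helmholtzDeriv n x ^ 2 :=
    (Hn.integrable_mul_sq hg).add (Hn.integrable_mul_deriv_sq hg)
  have iω : Integrable fun x => g x * helmholtz u x ^ 2 + g x * helmholtzDeriv u x ^ 2 :=
    (Hu.integrable_mul_sq hg).add (Hu.integrable_mul_deriv_sq hg)
  have inuν : Integrable fun x => g x * n x ^ 2 + g x * u x ^ 2
      + (g x * helmholtz n x ^ 2 + g x * helmholtzDeriv n x ^ 2) := inu.add iν
  rw [S.integral_mul_sq_add_sq hg]
  unfold linearSq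
  simp_rw [mul_add]
  rw [integral_add inuν iω, integral_add inu iν, integral_add in₀ iu₀,
    integral_add (Hn.integrable_mul_sq hg) (Hn.integrable_mul_deriv_sq hg),
    integral_add (Hu.integrable_mul_sq hg) (Hu.integrable_mul_deriv_sq hg)]
  linarith [Hn.integral_mul_sq_add_le hg S.contDiff_density.continuous in₀,
    Hu.integral_mul_sq_add_le hg S.contDiff_velocity.continuous iu₀]

lemma integrable_mul_linearizationErrorSq (S : IsSmallState ε Mn Mu n u φ φ')
    (hg : IsSlowWeight g) (hε : ε ≤ 1) :
    Integrable fun x => g x * linearizationErrorSq n u φ φ' x := by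
  have Hφ := S.potential.sub S.isHelmholtzPotential_density
  have Hm := (S.isHelmholtzPotential_momentum hε).sub S.isHelmholtzPotential_velocity
  unfold linearizationErrorSq
  simp_rw [mul_add]
  exact ((Hφ.integrable_mul_sq hg).add (Hφ.integrable_mul_deriv_sq hg)).add
    (Hm.integrable_mul_sq hg)

lemma integral_mul_linearizationErrorSq_le (S : IsSmallState ε Mn Mu n u φ φ')
    (hg : IsSlowWeight g) (hε : ε ≤ 1 / 10) :
    ∫ x, g x * linearizationErrorSq n u φ φ' x
      ≤ 40 * ε ^ 2 * ∫ x, g x * (n x ^ 2 + u x ^ 2) := by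
  have hε₁ : ε ≤ 1 := hε.trans (by norm_num)
  have in₀ := S.integrable_mul_density_sq hg
  have iu₀ := S.integrable_mul_velocity_sq hg
  have Hn := S.isHelmholtzPotential_density
  have Hu := S.isHelmholtzPotential_velocity
  have Hm := S.isHelmholtzPotential_momentum hε₁
  have iφ := (S.potential.sub Hn).integrable_mul_sq hg
  have iφ' := (S.potential.sub Hn).integrable_mul_deriv_sq hg
  have iφφ' : Integrable fun x => g x * (φ x - helmholtz n x) ^ 2
      + g x * (φ' x - helmholtzDeriv n x) ^ 2 := iφ.add iφ'
  rw [S.integral_mul_sq_add_sq hg]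
  unfold linearizationErrorSq
  simp_rw [mul_add]
  rw [integral_add iφφ' ((Hm.sub Hu).integrable_mul_sq hg), integral_add iφ iφ']
  have hφ := S.potential.integral_mul_sub_sq_add_le_of_expRemainder Hn hg
    S.contDiff_density.continuous in₀ hε S.abs_potential_le
  have hm := Hm.integral_mul_sub_sq_le_of_abs_sub_le Hu hg S.contDiff_momentum.continuous
    S.contDiff_velocity.continuous iu₀ (ε := ε) fun x => by
      rw [show momentum n u x - u x = n x * u x by rw [momentum]; ring, abs_mul]
      exact mul_le_mul_of_nonneg_right (S.abs_density_le x) (abs_nonneg _)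
  have hu : 0 ≤ ε ^ 2 * ∫ x, g x * u x ^ 2 :=
    mul_nonneg (sq_nonneg ε) (integral_nonneg fun x => mul_nonneg (hg.pos x).le (sq_nonneg _))
  linarith

end IsSmallState

end SmallStates

section StaticVirial

namespace IsSmallState

variable {w n u φ φ' g : ℝ → ℝ} {k c ε δ Mn Mu Y : ℝ}

lemma neg_one_lt_density (S : IsSmallState ε Mn Mu n u φ φ') (hε : ε ≤ 1 / 10) (x : ℝ) :
    -1 < n x := by
  linarith [(abs_le.1 (S.abs_density_le x)).1]

lemma contDiff_enthalpy (S : IsSmallState δ Mn Mu n u φ φ') (hw : IsNearlyLinear w k ε δ) :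
    ContDiff ℝ 1 fun x => w (n x) :=
  hw.contDiffOn.comp_contDiff S.contDiff_density
    (S.neg_one_lt_density (hw.radius_le.trans hw.error_le))

lemma continuous_velocityFlux (S : IsSmallState δ Mn Mu n u φ φ')
    (hw : IsNearlyLinear w k ε δ) : Continuous (velocityFlux w n u φ) := by
  exact (((S.contDiff_velocity.continuous.pow 2).div_const 2).add
    (S.contDiff_enthalpy hw).continuous).add S.potential.continuous

lemma continuous_impulseFlux (S : IsSmallState δ Mn Mu n u φ φ')
    (hw : IsNearlyLinear w k ε δ) : Continuous (impulseFlux w n u φ φ') := by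
  have := S.contDiff_velocity.continuous
  have := S.contDiff_density.continuous
  have := S.potential.continuous
  have := S.potential.continuous_deriv
  have := continuous_expRemainder
  have : Continuous fun x => legendre w (n x) := continuous_iff_continuousAt.2 fun x =>
    (hasDerivAt_legendre hw.contDiffOn
      (S.neg_one_lt_density (hw.radius_le.trans hw.error_le) x)).continuousAt.comp
      S.contDiff_density.continuous.continuousAt
  unfold impulseFlux
  fun_prop

lemma continuous_correctorFlux (S : IsSmallState δ Mn Mu n u φ φ')
    (hw : IsNearlyLinear w k ε δ) : Continuous (correctorFlux w n u φ) :=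
  (S.continuous_velocityFlux hw).mul S.isHelmholtzPotential_density.continuous_deriv

lemma continuous_correctorSource (S : IsSmallState δ Mn Mu n u φ φ')
    (hw : IsNearlyLinear w k ε δ) : Continuous (correctorSource w n u φ) := by
  have hδ : δ ≤ 1 := (hw.radius_le.trans hw.error_le).trans (by norm_num)
  have := S.continuous_velocityFlux hw
  have := S.contDiff_velocity.continuous
  have := S.contDiff_density.continuous
  have := S.isHelmholtzPotential_density.continuous
  have := S.contDiff_momentum.continuous
  have := (S.isHelmholtzPotential_momentum hδ).continuous
  unfold correctorSource
  fun_prop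

lemma mul_sq_add_sq_add_nullFormDeriv_le (S : IsSmallState δ Mn Mu n u φ φ')
    (hw : IsNearlyLinear w k ε δ) (hc : IsCoercivityConstant k c) (hY : |Y| ≤ k / √(1 + k))
    (x : ℝ) :
    c * (n x ^ 2 + u x ^ 2)
        + nullFormDeriv k Y (n x) (u x) (helmholtz n x) (helmholtzDeriv n x) (helmholtz u x)
          (helmholtzDeriv u x)
        - (10 * ε * linearSq n u x + 3 / ε * linearizationErrorSq n u φ φ' x)
      ≤ impulseFlux w n u φ φ' x - Y * (n x * u x)
        - virialTheta k * correctorSource w n u φ x := by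
  have hε : 0 < ε := hw.radius_pos.trans_le hw.radius_le
  have hε4 : 4 * ε ≤ 1 / ε := by
    rw [le_div_iff₀ hε]
    nlinarith [hw.error_le]
  have S' := S.mono hw.radius_le
  have hflux := abs_le.1 (abs_flux_sub_le (ν := helmholtz n x) (ν' := helmholtzDeriv n x)
    (u := u x) (φ' := φ' x) hε (S'.abs_density_le x)
    (hw.abs_legendre_sub_le _ (S.abs_density_le x))
    (abs_expRemainder_sub_le hw.error_le (S'.abs_potential_le x)))
  have hsource := abs_source_sub_le (φ := φ x) (u := u x) (ω := helmholtz u x)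
    (τ := helmholtz (momentum n u) x - helmholtz u x) hε (S'.abs_density_le x)
    (abs_helmholtz_le S'.abs_density_le x) (hw.abs_sub_le _ (S.abs_density_le x))
  rw [add_sub_cancel] at hsource
  have hcoer := hc.mul_add_nullFormDeriv_le Y (n x) (u x) (helmholtz n x) (helmholtzDeriv n x)
    (helmholtz u x) (helmholtzDeriv u x) hY
  have hθsource := (mul_le_mul_of_nonneg_left ((le_abs_self _).trans hsource)
    (virialTheta_pos hw.slope_pos).le).trans
    (mul_le_of_le_one_left ((abs_nonneg _).trans hsource) (virialTheta_le_one hw.slope_pos))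
  have hφ : 0 ≤ ε * (φ x - 2 * helmholtz n x) ^ 2 := by positivity
  have hφ' : 0 ≤ ε * (φ' x - 2 * helmholtzDeriv n x) ^ 2 := by positivity
  have hE : 0 ≤ (1 / ε - 4 * ε) * linearizationErrorSq n u φ φ' x :=
    mul_nonneg (sub_nonneg.2 hε4) (linearizationErrorSq_nonneg n u φ φ' x)
  have hL : 0 ≤ ε * (2 * (n x ^ 2 + u x ^ 2 + helmholtzDeriv n x ^ 2)
    + 5 * (helmholtz u x ^ 2 + helmholtzDeriv u x ^ 2)) := by positivity
  have hφ'ν' : 0 ≤ 1 / ε * (φ' x - helmholtzDeriv n x) ^ 2 := by positivity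
  have hτ : 0 ≤ (1 / ε + 4 * ε) * (helmholtz (momentum n u) x - helmholtz u x) ^ 2 := by positivity
  rw [show 3 / ε = 3 * (1 / ε) by ring]
  simp only [impulseFlux, correctorSource, velocityFlux, linearSq, linearizationErrorSq,
    virialForm, momentum] at *
  linarith [hflux.1]

lemma abs_impulseFlux_sub_le (S : IsSmallState δ Mn Mu n u φ φ') (hw : IsNearlyLinear w k ε δ)
    (hY : |Y| ≤ k) (x : ℝ) :
    |impulseFlux w n u φ φ' x - Y * (n x * u x)|
      ≤ (4 * k + 8) * (linearSq n u x + linearizationErrorSq n u φ φ' x) := by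
  have S' := S.mono hw.radius_le
  have hk := hw.slope_pos
  refine (abs_flux_sub_mul_le hY (hw.error_le.trans (by norm_num)) (S'.abs_density_le x)
    (hw.abs_legendre_sub_le _ (S.abs_density_le x))
    (abs_expRemainder_sub_le hw.error_le (S'.abs_potential_le x))).trans ?_
  rw [show 4 * k + 8 = (2 * k + 4) * 2 by ring, mul_assoc]
  refine mul_le_mul_of_nonneg_left ?_ (by positivity)
  unfold linearSq linearizationErrorSq
  nlinarith [sq_nonneg (φ x - 2 * helmholtz n x), sq_nonneg (φ' x - 2 * helmholtzDeriv n x)]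

lemma abs_correctorFlux_sub_le (S : IsSmallState δ Mn Mu n u φ φ')
    (hw : IsNearlyLinear w k ε δ) (hY : |Y| ≤ k) (x : ℝ) :
    |correctorFlux w n u φ x - Y * (u x * helmholtzDeriv n x)|
      ≤ (4 * k + 8) * (linearSq n u x + linearizationErrorSq n u φ φ' x) := by
  have S' := S.mono hw.radius_le
  have hk := hw.slope_pos
  refine (abs_corrector_flux_sub_mul_le hY (hw.error_le.trans (by norm_num))
    (abs_helmholtzDeriv_le S'.abs_density_le x)
    (hw.abs_sub_le _ (S.abs_density_le x))).trans ?_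
  rw [show 4 * k + 8 = (2 * k + 4) * 2 by ring, mul_assoc]
  refine mul_le_mul_of_nonneg_left ?_ (by positivity)
  unfold linearSq linearizationErrorSq
  nlinarith [sq_nonneg (φ x - 2 * helmholtz n x)]

lemma hasDerivAt_nullForm (S : IsSmallState ε Mn Mu n u φ φ') (k Y x : ℝ) :
    HasDerivAt
      (fun x => nullForm k Y (helmholtz n x) (helmholtzDeriv n x) (helmholtz u x)
        (helmholtzDeriv u x))
      (nullFormDeriv k Y (n x) (u x) (helmholtz n x) (helmholtzDeriv n x) (helmholtz u x)
        (helmholtzDeriv u x)) x := by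
  have Hn := S.isHelmholtzPotential_density
  have Hu := S.isHelmholtzPotential_velocity
  have hω := ((Hu.hasDerivAt x).mul (Hu.hasDerivAt_deriv x)).const_mul (-(1 - virialTheta k))
  have hν := ((Hn.hasDerivAt x).mul (Hn.hasDerivAt_deriv x)).const_mul (k + 1 / 2)
  have hνω := (((Hn.hasDerivAt x).mul (Hu.hasDerivAt_deriv x)).add
    ((Hn.hasDerivAt_deriv x).mul (Hu.hasDerivAt x))).const_mul Y
  exact ((hω.sub hν).add hνω).congr_deriv (by unfold nullFormDeriv; ring)

lemma continuous_nullFormDeriv (S : IsSmallState ε Mn Mu n u φ φ') (k Y : ℝ) :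
    Continuous fun x => nullFormDeriv k Y (n x) (u x) (helmholtz n x) (helmholtzDeriv n x)
      (helmholtz u x) (helmholtzDeriv u x) := by
  have := S.contDiff_density.continuous
  have := S.contDiff_velocity.continuous
  have := S.isHelmholtzPotential_density.continuous
  have := S.isHelmholtzPotential_density.continuous_deriv
  have := S.isHelmholtzPotential_velocity.continuous
  have := S.isHelmholtzPotential_velocity.continuous_deriv
  unfold nullFormDeriv
  fun_prop

lemma integrable_mul_linearSq_add (S : IsSmallState ε Mn Mu n u φ φ') (hg : IsSlowWeight g)
    (hε : ε ≤ 1) (α β : ℝ) :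
    Integrable fun x => g x * (α * linearSq n u x + β * linearizationErrorSq n u φ φ' x) := by
  refine (((S.integrable_mul_linearSq hg).const_mul α).add
    ((S.integrable_mul_linearizationErrorSq hg hε).const_mul β)).congr (ae_of_all _ fun x => ?_)
  simp only [Pi.add_apply]
  ring

lemma integral_mul_linearSq_add_le (S : IsSmallState ε Mn Mu n u φ φ') (hg : IsSlowWeight g)
    (hε : ε ≤ 1 / 10) {α β : ℝ} (hα : 0 ≤ α) (hβ : 0 ≤ β) :
    ∫ x, g x * (α * linearSq n u x + β * linearizationErrorSq n u φ φ' x)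
      ≤ (3 * α + 40 * ε ^ 2 * β) * ∫ x, g x * (n x ^ 2 + u x ^ 2) := by
  calc ∫ x, g x * (α * linearSq n u x + β * linearizationErrorSq n u φ φ' x)
      = ∫ x, (α * (g x * linearSq n u x) + β * (g x * linearizationErrorSq n u φ φ' x)) := by
        refine integral_congr_ae (ae_of_all _ fun x => ?_)
        ring
    _ = α * (∫ x, g x * linearSq n u x) + β * ∫ x, g x * linearizationErrorSq n u φ φ' x := by
        rw [integral_add ((S.integrable_mul_linearSq hg).const_mul α)
          ((S.integrable_mul_linearizationErrorSq hg (by linarith)).const_mul β),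
          integral_const_mul, integral_const_mul]
    _ ≤ α * (3 * ∫ x, g x * (n x ^ 2 + u x ^ 2))
        + β * (40 * ε ^ 2 * ∫ x, g x * (n x ^ 2 + u x ^ 2)) := by
        gcongr
        exacts [S.integral_mul_linearSq_le hg, S.integral_mul_linearizationErrorSq_le hg hε]
    _ = _ := by ring

end IsSmallState

end StaticVirial

section LocalizedVirial

/-- The pointwise virial estimate with scalars in place of functions: `P'`, `G`, `G'` are values of
the cut-off weights, `gA` and `gR` those of `sech²` at the scales `A` and `R`. -/
lemma localized_virial_le {c θ A R C gA gR G G' P' X₁ X₂ σ B B' s e r : ℝ} (hθ₀ : 0 ≤ θ)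
    (hθ₁ : θ ≤ 1) (hcs : 0 ≤ c * s) (he : 0 ≤ e) (hG₀ : 0 ≤ G) (hG : G ≤ gA)
    (hGA : gA - A / R ≤ G) (hP' : |P' - G| ≤ C * A / R * gR)
    (hG' : |G'| ≤ 2 / A * gA + C / R * gR) (hX₁ : |X₁| ≤ r) (hX₂ : |X₂| ≤ r) (hB : |B| ≤ r)
    (hmain : c * s + B' - e ≤ X₁ - θ * σ) :
    c * (gA * s) - A / R * (c * s) - gA * (e + 4 / A * r) - C * (A + 2) / R * (gR * r)
      ≤ P' * X₁ - θ * (G' * X₂ + G * σ) - (G * B' + G' * B) := by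
  have hmul {a b a₀ : ℝ} (ha : |a| ≤ a₀) (hb : |b| ≤ r) : |a * b| ≤ a₀ * r := by
    rw [abs_mul]
    exact mul_le_mul ha hb (abs_nonneg _) ((abs_nonneg _).trans ha)
  have hθX₂ : |θ * (G' * X₂)| ≤ (2 / A * gA + C / R * gR) * r := by
    rw [abs_mul, abs_of_nonneg hθ₀]
    exact (mul_le_of_le_one_left (abs_nonneg _) hθ₁).trans (hmul hG' hX₂)
  have hD : C * (A + 2) / R * (gR * r) + gA * (4 / A * r)
      = C * A / R * gR * r + 2 * ((2 / A * gA + C / R * gR) * r) := by ring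
  linarith [mul_le_mul_of_nonneg_left hmain hG₀, mul_le_mul_of_nonneg_right hGA hcs,
    mul_le_mul_of_nonneg_right hG he, (abs_le.1 (hmul hP' hX₁)).1, (abs_le.1 hθX₂).2,
    (abs_le.1 (hmul hG' hB)).2]

lemma integrable_and_integral_sub_integral_sub {P G X₁ X₂ σ B B' : ℝ → ℝ} (hP : ContDiff ℝ 1 P)
    (hPs : HasCompactSupport P) (hG : ContDiff ℝ 1 G) (hGs : HasCompactSupport G)
    (hX₁ : Continuous X₁) (hX₂ : Continuous X₂) (hσ : Continuous σ)
    (hB : ∀ x, HasDerivAt B (B' x) x) (hB' : Continuous B') (y θ : ℝ) :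
    Integrable (fun x => deriv P (x - y) * X₁ x - θ * (deriv G (x - y) * X₂ x + G (x - y) * σ x)
        - (G (x - y) * B' x + deriv G (x - y) * B x)) ∧
      ∫ x, (deriv P (x - y) * X₁ x - θ * (deriv G (x - y) * X₂ x + G (x - y) * σ x)
        - (G (x - y) * B' x + deriv G (x - y) * B x))
      = (∫ x, deriv P (x - y) * X₁ x)
        - θ * ∫ x, (deriv G (x - y) * X₂ x + G (x - y) * σ x) := by
  have iG {f : ℝ → ℝ} (hf : Continuous f) := integrable_comp_sub_mul hG.continuous hGs hf y
  have iG' {f : ℝ → ℝ} (hf : Continuous f) :=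
    integrable_comp_sub_mul (hG.continuous_deriv le_rfl) hGs.deriv hf y
  have hBc : Continuous B := continuous_iff_continuousAt.2 fun x => (hB x).continuousAt
  have i₁ : Integrable fun x => deriv P (x - y) * X₁ x :=
    integrable_comp_sub_mul (hP.continuous_deriv le_rfl) hPs.deriv hX₁ y
  have i₂ : Integrable fun x => θ * (deriv G (x - y) * X₂ x + G (x - y) * σ x) :=
    ((iG' hX₂).add (iG hσ)).const_mul θ
  have i₁₂ : Integrable fun x => deriv P (x - y) * X₁ x
      - θ * (deriv G (x - y) * X₂ x + G (x - y) * σ x) := i₁.sub i₂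
  have i₃ : Integrable fun x => G (x - y) * B' x + deriv G (x - y) * B x :=
    (iG hB').add (iG' hBc)
  have hnull : ∫ x, (G (x - y) * B' x + deriv G (x - y) * B x) = 0 := by
    rw [integral_add (iG hB') (iG' hBc), integral_comp_sub_mul_deriv hG hGs hB hB' y,
      neg_add_cancel]
  exact ⟨i₁₂.sub i₃, by
    rw [integral_sub i₁₂ i₃, hnull, integral_sub i₁ i₂, integral_const_mul, sub_zero]⟩

lemma error_coefficient_le {k ε A : ℝ} (hk : 0 ≤ k) (hε₀ : 0 < ε) (hε : ε ≤ 1 / 10)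
    (hA : 0 < A) :
    3 * (10 * ε + 16 * (k + 2) / A) + 40 * ε ^ 2 * (3 / ε + 16 * (k + 2) / A)
      ≤ 150 * ε + 64 * (k + 2) / A := by
  have hq : 0 ≤ (k + 2) / A := by positivity
  have hε2 : ε ^ 2 * ((k + 2) / A) ≤ 1 / 100 * ((k + 2) / A) :=
    mul_le_mul_of_nonneg_right (by nlinarith) hq
  have hεε : ε ^ 2 * (3 / ε) = 3 * ε := by field_simp
  simp only [mul_div_assoc] at *
  linarith

namespace IsSmallState

variable {w n u φ φ' g gR : ℝ → ℝ} {k c ε δ Mn Mu Y A R C : ℝ}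

lemma integrable_mul_sq_add_sq (S : IsSmallState ε Mn Mu n u φ φ') (hg : IsSlowWeight g) :
    Integrable fun x => g x * (n x ^ 2 + u x ^ 2) :=
  hg.integrable_mul S.integrable_sq_add_sq

lemma integral_mul_sq_add_sq_le (S : IsSmallState ε Mn Mu n u φ φ') (hg : IsSlowWeight g) :
    ∫ x, g x * (n x ^ 2 + u x ^ 2) ≤ Mn ^ 2 + Mu ^ 2 :=
  (integral_mono (S.integrable_mul_sq_add_sq hg) S.integrable_sq_add_sq fun x =>
    mul_le_of_le_one_left (by positivity) (hg.le_one x)).trans S.integral_sq_add_sq_le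

lemma integrable_lowerBound (S : IsSmallState ε Mn Mu n u φ φ') (hg : IsSlowWeight g)
    (hgR : IsSlowWeight gR) (hε : ε ≤ 1) (a α β D : ℝ) :
    Integrable fun x => c * (g x * (n x ^ 2 + u x ^ 2)) - a * (c * (n x ^ 2 + u x ^ 2))
      - g x * (α * linearSq n u x + β * linearizationErrorSq n u φ φ' x)
      - gR x * (D * linearSq n u x + D * linearizationErrorSq n u φ φ' x) :=
  ((((S.integrable_mul_sq_add_sq hg).const_mul c).sub
    ((S.integrable_sq_add_sq.const_mul c).const_mul a)).sub
    (S.integrable_mul_linearSq_add hg hε α β)).sub (S.integrable_mul_linearSq_add hgR hε D D)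

lemma lowerBound_le_integral (S : IsSmallState ε Mn Mu n u φ φ') (hg : IsSlowWeight g)
    (hgR : IsSlowWeight gR) (hε₀ : 0 < ε) (hε : ε ≤ 1 / 10) (hc : 0 ≤ c) {a α β D : ℝ}
    (ha : 0 ≤ a) (hα : 0 ≤ α) (hβ : 0 ≤ β) (hD : 0 ≤ D) :
    (c - (3 * α + 40 * ε ^ 2 * β)) * (∫ x, g x * (n x ^ 2 + u x ^ 2))
        - (a * c + 4 * D) * (Mn ^ 2 + Mu ^ 2)
      ≤ ∫ x, (c * (g x * (n x ^ 2 + u x ^ 2)) - a * (c * (n x ^ 2 + u x ^ 2))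
        - g x * (α * linearSq n u x + β * linearizationErrorSq n u φ φ' x)
        - gR x * (D * linearSq n u x + D * linearizationErrorSq n u φ φ' x)) := by
  have hε₁ : ε ≤ 1 := hε.trans (by norm_num)
  have hi₁ := (S.integrable_mul_sq_add_sq hg).const_mul c
  have hi₂ := (S.integrable_sq_add_sq.const_mul c).const_mul a
  have hi₁₂ : Integrable fun x => c * (g x * (n x ^ 2 + u x ^ 2))
      - a * (c * (n x ^ 2 + u x ^ 2)) := hi₁.sub hi₂
  have hi₃ := S.integrable_mul_linearSq_add hg hε₁ α β
  have hi₁₂₃ : Integrable fun x => c * (g x * (n x ^ 2 + u x ^ 2))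
      - a * (c * (n x ^ 2 + u x ^ 2))
      - g x * (α * linearSq n u x + β * linearizationErrorSq n u φ φ' x) := hi₁₂.sub hi₃
  have hgR_le := (S.integral_mul_linearSq_add_le hgR hε hD hD).trans
    (mul_le_mul_of_nonneg_left (S.integral_mul_sq_add_sq_le hgR) (by positivity))
  have hM : (3 * D + 40 * ε ^ 2 * D) * (Mn ^ 2 + Mu ^ 2) ≤ 4 * D * (Mn ^ 2 + Mu ^ 2) := by
    refine mul_le_mul_of_nonneg_right ?_ (by positivity)
    nlinarith [mul_nonneg hD (by nlinarith : 0 ≤ 1 - 40 * ε ^ 2)]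
  rw [integral_sub hi₁₂₃ (S.integrable_mul_linearSq_add hgR hε₁ D D), integral_sub hi₁₂ hi₃,
    integral_sub hi₁ hi₂, integral_const_mul, integral_const_mul, integral_const_mul]
  linarith [S.integral_mul_linearSq_add_le hg hε hα hβ,
    mul_le_mul_of_nonneg_left S.integral_sq_add_sq_le (mul_nonneg ha hc)]

lemma localized_virial (S : IsSmallState δ Mn Mu n u φ φ') (hw : IsNearlyLinear w k ε δ)
    (hc : IsCoercivityConstant k c) (hC : ∀ x, |deriv cutoff x| ≤ C * sech x ^ 2)
    (hY : |Y| ≤ k / √(1 + k)) (hA : 0 < A) (hR : 0 < R) (y x : ℝ) :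
    c * (sechSq A (x - y) * (n x ^ 2 + u x ^ 2)) - A / R * (c * (n x ^ 2 + u x ^ 2))
        - sechSq A (x - y) * ((10 * ε + 16 * (k + 2) / A) * linearSq n u x
          + (3 / ε + 16 * (k + 2) / A) * linearizationErrorSq n u φ φ' x)
        - sechSq R (x - y) * (C * (A + 2) * (4 * k + 8) / R * linearSq n u x
          + C * (A + 2) * (4 * k + 8) / R * linearizationErrorSq n u φ φ' x)
      ≤ deriv (truncatedTanh A R) (x - y) * (impulseFlux w n u φ φ' x - Y * (n x * u x))
        - virialTheta k * (deriv (truncatedSechSq A R) (x - y)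
          * (correctorFlux w n u φ x - Y * (u x * helmholtzDeriv n x))
          + truncatedSechSq A R (x - y) * correctorSource w n u φ x)
        - (truncatedSechSq A R (x - y) * nullFormDeriv k Y (n x) (u x) (helmholtz n x)
            (helmholtzDeriv n x) (helmholtz u x) (helmholtzDeriv u x)
          + deriv (truncatedSechSq A R) (x - y) * nullForm k Y (helmholtz n x)
            (helmholtzDeriv n x) (helmholtz u x) (helmholtzDeriv u x)) := by
  have hk := hw.slope_pos
  have hε : 0 < ε := hw.radius_pos.trans_le hw.radius_le
  have hYk : |Y| ≤ k := hY.trans (div_le_self hk.le (one_le_sqrt.2 (by linarith)))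
  have hL := linearSq_nonneg n u x
  have hE := linearizationErrorSq_nonneg n u φ φ' x
  have := hc.pos
  have hnull : |nullForm k Y (helmholtz n x) (helmholtzDeriv n x) (helmholtz u x)
      (helmholtzDeriv u x)|
      ≤ (4 * k + 8) * (linearSq n u x + linearizationErrorSq n u φ φ' x) := by
    refine (abs_nullForm_le hk hYk).trans (mul_le_mul (by linarith) ?_ (by positivity)
      (by positivity))
    rw [linearSq]
    linarith [sq_nonneg (n x), sq_nonneg (u x)]
  refine le_trans (le_of_eq ?_) (localized_virial_le (virialTheta_pos hk).le
    (virialTheta_le_one hk) (by positivity)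
    (by positivity : 0 ≤ 10 * ε * linearSq n u x + 3 / ε * linearizationErrorSq n u φ φ' x)
    (truncatedSechSq_nonneg A R _) (truncatedSechSq_le A R _)
    (sechSq_sub_le_truncatedSechSq hA hR _) (abs_deriv_truncatedTanh_sub_le hC hA hR _)
    (abs_deriv_truncatedSechSq_le hC hA hR _) (S.abs_impulseFlux_sub_le hw hYk x)
    (S.abs_correctorFlux_sub_le hw hYk x) hnull
    (S.mul_sq_add_sq_add_nullFormDeriv_le hw hc hY x))
  ring

theorem le_integral_virialRate (S : IsSmallState δ Mn Mu n u φ φ')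
    (hw : IsNearlyLinear w k ε δ) (hc : IsCoercivityConstant k c) (hC₀ : 0 ≤ C)
    (hC : ∀ x, |deriv cutoff x| ≤ C * sech x ^ 2) (hY : |Y| ≤ k / √(1 + k)) (hA : 4 ≤ A)
    (hR : 4 ≤ R) (y : ℝ) :
    (c - 150 * ε - 64 * (k + 2) / A) * (∫ x, sechSq A (x - y) * (n x ^ 2 + u x ^ 2))
        - (c * A + 16 * C * (k + 2) * (A + 2)) / R * (Mn ^ 2 + Mu ^ 2)
      ≤ (∫ x, deriv (truncatedTanh A R) (x - y) * (impulseFlux w n u φ φ' x - Y * (n x * u x)))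
        - virialTheta k * ∫ x, (deriv (truncatedSechSq A R) (x - y)
          * (correctorFlux w n u φ x - Y * (u x * helmholtzDeriv n x))
          + truncatedSechSq A R (x - y) * correctorSource w n u φ x) := by
  have hA₀ : 0 < A := by linarith
  have hR₀ : 0 < R := by linarith
  have hk := hw.slope_pos
  have hε : 0 < ε := hw.radius_pos.trans_le hw.radius_le
  have S' := S.mono hw.radius_le
  have hgA := (isSlowWeight_sechSq hA).translate y
  have hgR := (isSlowWeight_sechSq hR).translate y
  have hn := S.contDiff_density.continuous
  have hu := S.contDiff_velocity.continuous
  have hX₁ : Continuous fun x => impulseFlux w n u φ φ' x - Y * (n x * u x) :=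
    (S.continuous_impulseFlux hw).sub (continuous_const.mul (hn.mul hu))
  have hX₂ : Continuous fun x => correctorFlux w n u φ x - Y * (u x * helmholtzDeriv n x) :=
    (S.continuous_correctorFlux hw).sub
      (continuous_const.mul (hu.mul S.isHelmholtzPotential_density.continuous_deriv))
  obtain ⟨hint, hrate⟩ := integrable_and_integral_sub_integral_sub
    (contDiff_truncatedTanh hA₀.ne' R) (hasCompactSupport_truncatedTanh A hR₀)
    (contDiff_truncatedSechSq A R) (hasCompactSupport_truncatedSechSq A hR₀)
    hX₁ hX₂ (S.continuous_correctorSource hw) (S.hasDerivAt_nullForm k Y)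
    (S.continuous_nullFormDeriv k Y) y (virialTheta k)
  rw [← hrate]
  refine le_trans ?_ (integral_mono (S'.integrable_lowerBound hgA hgR
    (hw.error_le.trans (by norm_num)) (A / R) _ _ _) hint
    fun x => S.localized_virial hw hc hC hY hA₀ hR₀ y x)
  refine le_trans ?_ (S'.lowerBound_le_integral hgA hgR hε hw.error_le hc.pos.le (by positivity)
    (by positivity) (by positivity) (by positivity))
  have hJ : 0 ≤ ∫ x, sechSq A (x - y) * (n x ^ 2 + u x ^ 2) :=
    integral_nonneg fun x => mul_nonneg (sechSq_pos A _).le (by positivity)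
  have hR_eq : A / R * c + 4 * (C * (A + 2) * (4 * k + 8) / R)
      = (c * A + 16 * C * (k + 2) * (A + 2)) / R := by ring
  rw [hR_eq]
  linarith [mul_le_mul_of_nonneg_right (error_coefficient_le hk.le hε hw.error_le hA₀) hJ]

end IsSmallState

end LocalizedVirial

section Dynamics

lemma hasDerivAt_fst {F : ℝ → ℝ → ℝ} (hF : ContDiff ℝ 1 (Function.uncurry F)) (t x : ℝ) :
    HasDerivAt (fun s => F s x) (fderiv ℝ (Function.uncurry F) (t, x) (1, 0)) t :=
  HasFDerivAt.comp_hasDerivAt (f := fun s => (s, x)) t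
    (hF.differentiable one_ne_zero (t, x)).hasFDerivAt
    ((hasDerivAt_id t).prodMk (hasDerivAt_const t x))

lemma continuous_deriv_fst {F : ℝ → ℝ → ℝ} (hF : ContDiff ℝ 1 (Function.uncurry F)) :
    Continuous (Function.uncurry fun t x => deriv (fun s => F s x) t) := by
  simp_rw [fun t x => (hasDerivAt_fst hF t x).deriv]
  exact (hF.continuous_fderiv one_ne_zero).clm_apply continuous_const

lemma contDiff_uncurry_left {F : ℝ → ℝ → ℝ} (hF : ContDiff ℝ 1 (Function.uncurry F)) (t : ℝ) :
    ContDiff ℝ 1 (F t) :=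
  hF.comp (contDiff_const.prodMk contDiff_id)

section Solutions

variable {w : ℝ → ℝ} {n u φ : ℝ → ℝ → ℝ}

lemma _root_.IsEPwSolution.contDiff_enthalpy (S : IsEPwSolution w n u φ)
    (hw : ContDiffOn ℝ 1 w (Ioi (-1))) : ContDiff ℝ 1 (Function.uncurry fun t x => w (n t x)) :=
  hw.comp_contDiff S.reg_n fun q => by
    exact neg_lt_iff_pos_add'.2 (S.dens_pos q.1 q.2)

lemma _root_.IsEPwSolution.balanceLaw_density (S : IsEPwSolution w n u φ) :
    BalanceLaw n (fun t x => deriv (fun s => n s x) t) (fun t => momentum (n t) (u t))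
      (fun _ _ => 0) where
  continuous_density := S.reg_n.continuous
  continuous_rate := continuous_deriv_fst S.reg_n
  hasDerivAt_density t x := (hasDerivAt_fst S.reg_n t x).differentiableAt.hasDerivAt
  hasDerivAt_flux t x := by
    rw [S.eq_n t x, zero_sub, neg_neg]
    exact (((contDiff_const.add (contDiff_uncurry_left S.reg_n t)).mul
      (contDiff_uncurry_left S.reg_u t)).differentiable one_ne_zero x).hasDerivAt
  continuous_source _ := continuous_const

lemma _root_.IsEPwSolution.balanceLaw_velocity (S : IsEPwSolution w n u φ)
    (hw : ContDiffOn ℝ 1 w (Ioi (-1))) :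
    BalanceLaw u (fun t x => deriv (fun s => u s x) t)
      (fun t => velocityFlux w (n t) (u t) (φ t)) (fun _ _ => 0) where
  continuous_density := S.reg_u.continuous
  continuous_rate := continuous_deriv_fst S.reg_u
  hasDerivAt_density t x := (hasDerivAt_fst S.reg_u t x).differentiableAt.hasDerivAt
  hasDerivAt_flux t x := by
    rw [S.eq_u t x, zero_sub, neg_neg]
    exact (((((contDiff_uncurry_left S.reg_u t).pow 2).div_const 2).add
      (contDiff_uncurry_left (S.contDiff_enthalpy hw) t)).add
        ((S.reg_phi_space t).of_le one_le_two) |>.differentiable one_ne_zero x).hasDerivAt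
  continuous_source _ := continuous_const

lemma _root_.IsEPwSolution.hasDerivAt_potential (S : IsEPwSolution w n u φ) (t x : ℝ) :
    HasDerivAt (φ t) (deriv (φ t) x) x :=
  ((S.reg_phi_space t).differentiable two_ne_zero x).hasDerivAt

lemma _root_.IsEPwSolution.hasDerivAt_field (S : IsEPwSolution w n u φ) (t x : ℝ) :
    HasDerivAt (deriv (φ t)) (qfun (φ t x) - n t x) x := by
  have hd : DifferentiableAt ℝ (deriv (φ t)) x :=
    ((contDiff_succ_iff_deriv (n := 1)).1 (S.reg_phi_space t)).2.2.differentiable one_ne_zero x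
  rw [← S.eq_phi t x, sub_add_cancel_right, neg_neg]
  exact hd.hasDerivAt

end Solutions

/-- A solution of the Euler-Poisson system whose state is small at all times. -/
structure IsSmallSolution (w : ℝ → ℝ) (ε Mn Mu : ℝ) (n u φ : ℝ → ℝ → ℝ) : Prop where
  isEPwSolution : IsEPwSolution w n u φ
  isSmallState : ∀ t, IsSmallState ε Mn Mu (n t) (u t) (φ t) (deriv (φ t))

namespace IsSmallSolution

variable {w : ℝ → ℝ} {n u φ : ℝ → ℝ → ℝ} {k ε δ Mn Mu : ℝ}

lemma hasDerivAt_impulseFlux (S : IsSmallSolution w ε Mn Mu n u φ)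
    (hw : ContDiffOn ℝ 1 w (Ioi (-1))) (t x : ℝ) :
    HasDerivAt (impulseFlux w (n t) (u t) (φ t) (deriv (φ t)))
      (-(deriv (fun s => n s x) t * u t x + n t x * deriv (fun s => u s x) t)) x := by
  have hn₁ : -1 < n t x := by linarith [S.isEPwSolution.dens_pos t x]
  have hn := ((contDiff_uncurry_left S.isEPwSolution.reg_n t).differentiable
    one_ne_zero x).hasDerivAt
  have hu := ((contDiff_uncurry_left S.isEPwSolution.reg_u t).differentiable
    one_ne_zero x).hasDerivAt
  have hwn := ((hw.differentiableOn one_ne_zero).differentiableAt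
    (Ioi_mem_nhds hn₁)).hasDerivAt.comp x hn
  have hφ := S.isEPwSolution.hasDerivAt_potential t x
  have hmass := (S.isEPwSolution.balanceLaw_density.hasDerivAt_flux t x).unique
    ((hn.const_add 1).mul hu)
  have hforce := ((S.isEPwSolution.balanceLaw_velocity hw).hasDerivAt_flux t x).unique
    ((((hu.fun_pow 2).div_const 2).add hwn).add hφ)
  have hflux := ((((hu.fun_pow 2).div_const 2).add (hn.mul (hu.fun_pow 2))).add
    ((hasDerivAt_legendre hw hn₁).comp x hn)).sub
    (((S.isEPwSolution.hasDerivAt_field t x).fun_pow 2).div_const 2) |>.add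
    ((hasDerivAt_expRemainder (φ t x)).comp x hφ)
  refine hflux.congr_deriv ?_
  push_cast at hforce ⊢
  linear_combination -(u t x) * hmass - n t x * hforce

lemma balanceLaw_impulse (S : IsSmallSolution w ε Mn Mu n u φ)
    (hw : ContDiffOn ℝ 1 w (Ioi (-1))) :
    BalanceLaw (fun t x => n t x * u t x)
      (fun t x => deriv (fun s => n s x) t * u t x + n t x * deriv (fun s => u s x) t)
      (fun t => impulseFlux w (n t) (u t) (φ t) (deriv (φ t))) (fun _ _ => 0) := by
  have hn := S.isEPwSolution.balanceLaw_density
  have hu := S.isEPwSolution.balanceLaw_velocity hw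
  exact
  { continuous_density := hn.continuous_density.mul hu.continuous_density
    continuous_rate := (hn.continuous_rate.mul hu.continuous_density).add
      (hn.continuous_density.mul hu.continuous_rate)
    hasDerivAt_density := fun t x =>
      (hn.hasDerivAt_density t x).mul (hu.hasDerivAt_density t x)
    hasDerivAt_flux := fun t x =>
      (S.hasDerivAt_impulseFlux hw t x).congr_deriv (zero_sub _).symm
    continuous_source := fun _ => continuous_const }

lemma continuous_momentum (S : IsSmallSolution w ε Mn Mu n u φ) :
    Continuous (Function.uncurry fun t => momentum (n t) (u t)) :=
  (continuous_const.add S.isEPwSolution.reg_n.continuous).mul S.isEPwSolution.reg_u.continuous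

lemma hasDerivAt_helmholtzDeriv (S : IsSmallSolution w ε Mn Mu n u φ) (hε : ε ≤ 1) (t x : ℝ) :
    HasDerivAt (fun s => helmholtzDeriv (n s) x)
      (momentum (n t) (u t) x - helmholtz (momentum (n t) (u t)) x) t :=
  S.isEPwSolution.balanceLaw_density.hasDerivAt_helmholtzDeriv S.continuous_momentum
    (fun t => (S.isSmallState t).hasSqIntegralLE_density)
    (fun t => (S.isSmallState t).hasSqIntegralLE_momentum hε) t x

lemma balanceLaw_corrector (S : IsSmallSolution w δ Mn Mu n u φ)
    (hw : IsNearlyLinear w k ε δ) :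
    BalanceLaw (fun t x => u t x * helmholtzDeriv (n t) x)
      (fun t x => deriv (fun s => u s x) t * helmholtzDeriv (n t) x
        + u t x * (momentum (n t) (u t) x - helmholtz (momentum (n t) (u t)) x))
      (fun t => correctorFlux w (n t) (u t) (φ t))
      (fun t => correctorSource w (n t) (u t) (φ t)) := by
  have hδ : δ ≤ 1 := (hw.radius_le.trans hw.error_le).trans (by norm_num)
  have hu := S.isEPwSolution.balanceLaw_velocity hw.contDiffOn
  have hcν := continuous_uncurry_helmholtzDeriv S.isEPwSolution.reg_n.continuous
    fun t => (S.isSmallState t).hasSqIntegralLE_density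
  have hcm := continuous_uncurry_helmholtz S.continuous_momentum
    fun t => (S.isSmallState t).hasSqIntegralLE_momentum hδ
  exact
  { continuous_density := hu.continuous_density.mul hcν
    continuous_rate := (hu.continuous_rate.mul hcν).add
      (hu.continuous_density.mul (S.continuous_momentum.sub hcm))
    hasDerivAt_density := fun t x =>
      (hu.hasDerivAt_density t x).mul (S.hasDerivAt_helmholtzDeriv hδ t x)
    hasDerivAt_flux := fun t x => ((hu.hasDerivAt_flux t x).mul
      ((S.isSmallState t).isHelmholtzPotential_density.hasDerivAt_deriv x)).congr_deriv
        (by rw [correctorSource]; ring)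
    continuous_source := fun t => (S.isSmallState t).continuous_correctorSource hw }

end IsSmallSolution

end Dynamics

section TimeIntegration

lemma HasSqIntegralLE.abs_integral_mul_le {f g : ℝ → ℝ} {M L : ℝ}
    (hf : HasSqIntegralLE f (M ^ 2)) (hg : HasSqIntegralLE g (L ^ 2)) (hfc : Continuous f)
    (hgc : Continuous g) (hM : 0 ≤ M) (hL : 0 ≤ L) : |∫ x, f x * g x| ≤ M * L := by
  have hmem {h : ℝ → ℝ} {N : ℝ} (hh : HasSqIntegralLE h N) (hc : Continuous h) :
      MemLp h (ENNReal.ofReal 2) := by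
    rw [ENNReal.ofReal_ofNat]
    exact (memLp_two_iff_integrable_sq hc.aestronglyMeasurable).2 hh.integrable_sq
  have hroot {h : ℝ → ℝ} {N : ℝ} (hh : HasSqIntegralLE h (N ^ 2)) (hN : 0 ≤ N) :
      (∫ x, ‖h x‖ ^ (2 : ℝ)) ^ (1 / 2 : ℝ) ≤ N := by
    simp only [rpow_two, norm_eq_abs, sq_abs]
    rw [← sqrt_eq_rpow]
    exact (sqrt_le_left hN).2 hh.integral_sq_le
  calc |∫ x, f x * g x| ≤ ∫ x, ‖f x‖ * ‖g x‖ := by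
        simp only [← norm_mul, ← norm_eq_abs]
        exact norm_integral_le_integral_norm _
    _ ≤ _ := integral_mul_norm_le_Lp_mul_Lq .two_two (hmem hf hfc) (hmem hg hgc)
    _ ≤ M * L := mul_le_mul (hroot hf hM) (hroot hg hL)
        (rpow_nonneg (integral_nonneg fun x => by positivity) _) hM

lemma HasSqIntegralLE.of_sq_le {f g : ℝ → ℝ} {M : ℝ} (hg : Integrable g)
    (hgM : ∫ x, g x ≤ M) (hf : Continuous f) (hfg : ∀ x, f x ^ 2 ≤ g x) :
    HasSqIntegralLE f M := by
  have hint : Integrable fun x => f x ^ 2 := hg.mono' (by fun_prop) (Eventually.of_forall fun x =>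
    (norm_of_nonneg (sq_nonneg _)).trans_le (hfg x))
  exact ⟨hint, (integral_mono hint hg hfg).trans hgM⟩

/-- The virial functional `∫ Φ n u - θ ∫ G u ∂ₓ(1 - ∂ₓ²)⁻¹n`, where `Φ` and `G` are the cut-off
versions of `A tanh (x / A)` and `sech² (x / A)` centred at `y`. -/
def localizedVirial (k A R : ℝ) (n u : ℝ → ℝ) (y : ℝ) : ℝ :=
  (∫ x, truncatedTanh A R (x - y) * (n x * u x))
    - virialTheta k * ∫ x, truncatedSechSq A R (x - y) * (u x * helmholtzDeriv n x)

/-- The mass `∫ sech² ((x - y) / A) (n² + u²)` near `y`. -/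
def localMass (A : ℝ) (n u : ℝ → ℝ) (y : ℝ) : ℝ :=
  ∫ x, sechSq A (x - y) * (n x ^ 2 + u x ^ 2)

lemma localMass_nonneg (A : ℝ) (n u : ℝ → ℝ) (y : ℝ) : 0 ≤ localMass A n u y :=
  integral_nonneg fun _ => mul_nonneg (sechSq_pos A _).le (by positivity)

namespace IsSmallState

variable {n u φ φ' : ℝ → ℝ} {k ε Mn Mu A R : ℝ}

lemma abs_integral_truncatedTanh_mul_le (S : IsSmallState ε Mn Mu n u φ φ') (hMn : 0 ≤ Mn)
    (hMu : 0 ≤ Mu) (hA : 0 < A) (R y : ℝ) :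
    |∫ x, truncatedTanh A R (x - y) * (n x * u x)| ≤ Mn * (A * Mu) := by
  have hP := (contDiff_truncatedTanh hA.ne' R).continuous
  have hu := S.contDiff_velocity.continuous
  have hPu : HasSqIntegralLE (fun x => truncatedTanh A R (x - y) * u x) ((A * Mu) ^ 2) := by
    refine .of_sq_le (S.hasSqIntegralLE_velocity.integrable_sq.const_mul (A ^ 2)) ?_
      (by fun_prop) fun x => ?_
    · rw [integral_const_mul, mul_pow]
      exact mul_le_mul_of_nonneg_left S.hasSqIntegralLE_velocity.integral_sq_le (sq_nonneg A)
    · rw [mul_pow]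
      exact mul_le_mul_of_nonneg_right
        (sq_le_sq.2 ((abs_truncatedTanh_le hA.le R _).trans (le_abs_self A))) (sq_nonneg _)
  simpa only [mul_left_comm] using S.hasSqIntegralLE_density.abs_integral_mul_le hPu
    S.contDiff_density.continuous (by fun_prop) hMn (by positivity)

lemma abs_integral_truncatedSechSq_mul_le (S : IsSmallState ε Mn Mu n u φ φ') (hMn : 0 ≤ Mn)
    (hMu : 0 ≤ Mu) (hA : 4 ≤ A) (R y : ℝ) :
    |∫ x, truncatedSechSq A R (x - y) * (u x * helmholtzDeriv n x)| ≤ Mu * (2 * Mn) := by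
  have hg := (isSlowWeight_sechSq hA).translate y
  have hν := S.isHelmholtzPotential_density
  have hG := (contDiff_truncatedSechSq A R).continuous
  have hν' := hν.continuous_deriv
  have hGν : HasSqIntegralLE (fun x => truncatedSechSq A R (x - y) * helmholtzDeriv n x)
      ((2 * Mn) ^ 2) := by
    refine .of_sq_le (hν.integrable_mul_deriv_sq hg) ?_ (by fun_prop) fun x => ?_
    · have hpos : 0 ≤ ∫ x, sechSq A (x - y) * helmholtz n x ^ 2 :=
        integral_nonneg fun x => mul_nonneg (hg.pos x).le (sq_nonneg _)
      have hn : ∫ x, sechSq A (x - y) * n x ^ 2 ≤ Mn ^ 2 :=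
        (integral_mono (S.integrable_mul_density_sq hg) S.hasSqIntegralLE_density.integrable_sq
          fun x => mul_le_of_le_one_left (sq_nonneg _) (hg.le_one x)).trans
          S.hasSqIntegralLE_density.integral_sq_le
      linarith [hν.integral_mul_sq_add_le hg S.contDiff_density.continuous
        (S.integrable_mul_density_sq hg), sq_nonneg Mn]
    · have hle := truncatedSechSq_le A R (x - y)
      rw [mul_pow]
      refine mul_le_mul_of_nonneg_right ?_ (sq_nonneg _)
      nlinarith [truncatedSechSq_nonneg A R (x - y), hle.trans (sechSq_le_one A _)]
  simpa only [mul_left_comm] using S.hasSqIntegralLE_velocity.abs_integral_mul_le hGν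
    S.contDiff_velocity.continuous (by fun_prop) hMu (by positivity)

lemma abs_localizedVirial_le (S : IsSmallState ε Mn Mu n u φ φ') (hMn : 0 ≤ Mn)
    (hMu : 0 ≤ Mu) (hk : 0 < k) (hA : 4 ≤ A) (y : ℝ) :
    |localizedVirial k A R n u y| ≤ 2 * A * Mu * Mn := by
  have hM : 0 ≤ Mu * Mn := by positivity
  have hθ : |virialTheta k * ∫ x, truncatedSechSq A R (x - y) * (u x * helmholtzDeriv n x)|
      ≤ Mu * (2 * Mn) := by
    rw [abs_mul, abs_of_pos (virialTheta_pos hk)]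
    exact (mul_le_of_le_one_left (abs_nonneg _) (virialTheta_le_one hk)).trans
      (S.abs_integral_truncatedSechSq_mul_le hMn hMu hA R y)
  calc |localizedVirial k A R n u y| ≤ Mn * (A * Mu) + Mu * (2 * Mn) := (abs_sub _ _).trans
        (add_le_add (S.abs_integral_truncatedTanh_mul_le hMn hMu (by linarith) R y) hθ)
    _ ≤ 2 * A * Mu * Mn := by nlinarith

lemma localMass_le (S : IsSmallState ε Mn Mu n u φ φ') (hA : 4 ≤ A) (y : ℝ) :
    localMass A n u y ≤ Mn ^ 2 + Mu ^ 2 :=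
  S.integral_mul_sq_add_sq_le ((isSlowWeight_sechSq hA).translate y)

lemma lintegral_exp_mul_le (S : IsSmallState ε Mn Mu n u φ φ') (hA : 4 ≤ A) (y : ℝ) :
    ∫⁻ x, ENNReal.ofReal (exp (-2 * |x - y| / A) * (n x ^ 2 + u x ^ 2))
      ≤ ENNReal.ofReal (localMass A n u y) := by
  have hA₀ : 0 < A := by linarith
  rw [localMass, ofReal_integral_eq_lintegral_ofReal
    (S.integrable_mul_sq_add_sq ((isSlowWeight_sechSq hA).translate y))
    (Eventually.of_forall fun x => mul_nonneg (sechSq_pos A _).le (by positivity))]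
  exact lintegral_mono fun x => ENNReal.ofReal_le_ofReal (mul_le_mul_of_nonneg_right
    (exp_neg_two_mul_abs_div_le_sechSq hA₀ _) (by positivity))

end IsSmallState

lemma lintegral_ofReal_le_of_forall_intervalIntegral_le {f : ℝ → ℝ} {B : ℝ}
    (hf : StronglyMeasurable f) (hf₀ : ∀ t, 0 ≤ f t)
    (hi : ∀ T, 0 ≤ T → IntegrableOn f (Icc (-T) T)) (hB : ∀ T, 0 ≤ T → ∫ t in (-T)..T, f t ≤ B) :
    ∫⁻ t, ENNReal.ofReal (f t) ≤ ENNReal.ofReal B := by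
  refine le_of_tendsto ((aecover_Ioc tendsto_neg_atTop_atBot
    tendsto_id).lintegral_tendsto_of_countably_generated
      hf.measurable.ennreal_ofReal.aemeasurable) ?_
  filter_upwards [eventually_ge_atTop 0] with T hT
  rw [id, ← ofReal_integral_eq_lintegral_ofReal ((hi T hT).mono_set Ioc_subset_Icc_self)
    (Eventually.of_forall hf₀), ← intervalIntegral.integral_of_le (by linarith)]
  exact ENNReal.ofReal_le_ofReal (hB T hT)

namespace IsSmallSolution

variable {w : ℝ → ℝ} {n u φ : ℝ → ℝ → ℝ} {y : ℝ → ℝ} {k c ε δ Mn Mu A : ℝ}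

lemma hasDerivAt_localizedVirial (S : IsSmallSolution w δ Mn Mu n u φ)
    (hw : IsNearlyLinear w k ε δ) (hy : ContDiff ℝ 1 y) (hA : A ≠ 0) {R : ℝ} (hR : 0 < R)
    (t : ℝ) :
    HasDerivAt (fun t => localizedVirial k A R (n t) (u t) (y t))
      ((∫ x, deriv (truncatedTanh A R) (x - y t)
          * (impulseFlux w (n t) (u t) (φ t) (deriv (φ t)) x - deriv y t * (n t x * u t x)))
        - virialTheta k * ∫ x, (deriv (truncatedSechSq A R) (x - y t)
          * (correctorFlux w (n t) (u t) (φ t) x - deriv y t * (u t x * helmholtzDeriv (n t) x))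
          + truncatedSechSq A R (x - y t) * correctorSource w (n t) (u t) (φ t) x)) t := by
  have himpulse := (S.balanceLaw_impulse hw.contDiffOn).hasDerivAt_integral
    (contDiff_truncatedTanh hA R) (hasCompactSupport_truncatedTanh A hR) hy t
  have hcorrector := (S.balanceLaw_corrector hw).hasDerivAt_integral
    (contDiff_truncatedSechSq A R) (hasCompactSupport_truncatedSechSq A hR) hy t
  simp only [mul_zero, add_zero] at himpulse
  exact himpulse.sub (hcorrector.const_mul _)

lemma stronglyMeasurable_localMass (S : IsSmallSolution w δ Mn Mu n u φ) (hy : Continuous y)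
    (A : ℝ) : StronglyMeasurable fun t => localMass A (n t) (u t) (y t) := by
  have hn : Continuous fun q : ℝ × ℝ => n q.1 q.2 := S.isEPwSolution.reg_n.continuous
  have hu : Continuous fun q : ℝ × ℝ => u q.1 q.2 := S.isEPwSolution.reg_u.continuous
  have := continuous_sechSq A
  have hc : Continuous fun q : ℝ × ℝ => sechSq A (q.2 - y q.1) * (n q.1 q.2 ^ 2 + u q.1 q.2 ^ 2) :=
    by fun_prop
  exact hc.stronglyMeasurable.integral_prod_right

lemma integrableOn_localMass (S : IsSmallSolution w δ Mn Mu n u φ) (hy : Continuous y)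
    (hA : 4 ≤ A) (T : ℝ) : IntegrableOn (fun t => localMass A (n t) (u t) (y t)) (Icc (-T) T) :=
  Measure.integrableOn_of_bounded (isCompact_Icc.measure_lt_top.ne)
    (S.stronglyMeasurable_localMass hy A).aestronglyMeasurable
    (Eventually.of_forall fun t => (norm_of_nonneg (localMass_nonneg A _ _ _)).trans_le
      ((S.isSmallState t).localMass_le hA _))

lemma mul_intervalIntegral_localMass_sub_le (S : IsSmallSolution w δ Mn Mu n u φ)
    (hw : IsNearlyLinear w k ε δ) (hMn : 0 ≤ Mn) (hMu : 0 ≤ Mu) (hy : ContDiff ℝ 1 y)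
    (hc : IsCoercivityConstant k c) {C : ℝ} (hC₀ : 0 ≤ C)
    (hC : ∀ x, |deriv cutoff x| ≤ C * sech x ^ 2) (hY : ∀ t, |deriv y t| ≤ k / √(1 + k))
    (hA : 4 ≤ A) {R : ℝ} (hR : 4 ≤ R) {T : ℝ} (hT : 0 ≤ T) :
    (c - 150 * ε - 64 * (k + 2) / A) * (∫ t in (-T)..T, localMass A (n t) (u t) (y t))
        - 2 * T * ((c * A + 16 * C * (k + 2) * (A + 2)) * (Mn ^ 2 + Mu ^ 2)) / R
      ≤ 4 * A * Mu * Mn := by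
  set a := c - 150 * ε - 64 * (k + 2) / A
  set b := (c * A + 16 * C * (k + 2) * (A + 2)) / R * (Mn ^ 2 + Mu ^ 2) with hb
  have hA₀ : A ≠ 0 := by linarith
  have hTT : -T ≤ T := by linarith
  have hmass := (S.integrableOn_localMass hy.continuous hA T).const_mul a
  have hderiv t := S.hasDerivAt_localizedVirial hw hy hA₀ (by linarith : 0 < R) t
  have hgrowth := intervalIntegral.integral_le_sub_of_hasDeriv_right_of_le
    (φ := fun t => a * localMass A (n t) (u t) (y t) - b) hTT
    (fun t _ => (hderiv t).continuousAt.continuousWithinAt)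
    (fun t _ => (hderiv t).hasDerivWithinAt)
    (hmass.sub (integrableOn_const (by simp))) fun t _ =>
      (S.isSmallState t).le_integral_virialRate hw hc hC₀ hC (hY t) hA hR (y t)
  rw [intervalIntegral.integral_sub
    ((intervalIntegrable_iff_integrableOn_Icc_of_le hTT).2 hmass)
    intervalIntegrable_const, intervalIntegral.integral_const_mul,
    intervalIntegral.integral_const, smul_eq_mul] at hgrowth
  have hvirial t :=
    abs_le.1 ((S.isSmallState t).abs_localizedVirial_le (R := R) hMn hMu hw.slope_pos hA (y t))
  refine le_trans (le_of_eq ?_) (hgrowth.trans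
    (by linarith [(hvirial T).2, (hvirial (-T)).1] : _ ≤ 4 * A * Mu * Mn))
  rw [hb]
  ring

theorem mul_intervalIntegral_localMass_le (S : IsSmallSolution w δ Mn Mu n u φ)
    (hw : IsNearlyLinear w k ε δ) (hc : IsCoercivityConstant k c) (hMn : 0 ≤ Mn) (hMu : 0 ≤ Mu)
    (hy : ContDiff ℝ 1 y) (hY : ∀ t, |deriv y t| ≤ k / √(1 + k)) (hA : 4 ≤ A) {T : ℝ}
    (hT : 0 ≤ T) :
    (c - 150 * ε - 64 * (k + 2) / A) * (∫ t in (-T)..T, localMass A (n t) (u t) (y t))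
      ≤ 4 * A * Mu * Mn := by
  obtain ⟨C, hC₀, hC⟩ := exists_abs_deriv_cutoff_le
  rw [← sub_zero (_ * _)]
  refine le_of_tendsto (tendsto_const_nhds.sub ((tendsto_const_nhds
    (x := 2 * T * ((c * A + 16 * C * (k + 2) * (A + 2)) * (Mn ^ 2 + Mu ^ 2)))).div_atTop
      tendsto_id)) ?_
  filter_upwards [eventually_ge_atTop 4] with R hR
  exact S.mul_intervalIntegral_localMass_sub_le hw hMn hMu hy hc hC₀.le hC hY hA hR hT

theorem lintegral_exp_mul_le (S : IsSmallSolution w δ Mn Mu n u φ)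
    (hw : IsNearlyLinear w k ε δ) (hc : IsCoercivityConstant k c) (hεc : 600 * ε ≤ c)
    (hMn : 0 ≤ Mn) (hMu : 0 ≤ Mu) (hy : ContDiff ℝ 1 y)
    (hY : ∀ t, |deriv y t| ≤ k / √(1 + k)) (hA : 4 ≤ A) (hAc : 256 * (k + 2) / c ≤ A) :
    ∫⁻ t, ∫⁻ x, ENNReal.ofReal (exp (-2 * |x - y t| / A) * (n t x ^ 2 + u t x ^ 2))
      ≤ ENNReal.ofReal (8 / c * A * Mu * Mn) := by
  have hc₀ := hc.pos
  have hA₀ : 0 < A := by linarith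
  have hkA : 64 * (k + 2) / A ≤ c / 4 := by
    rw [div_le_iff₀ hc₀] at hAc
    rw [div_le_iff₀ hA₀]
    linarith
  refine (lintegral_mono fun t => (S.isSmallState t).lintegral_exp_mul_le hA (y t)).trans
    (lintegral_ofReal_le_of_forall_intervalIntegral_le
      (S.stronglyMeasurable_localMass hy.continuous A) (fun t => localMass_nonneg A _ _ _)
      (fun T _ => S.integrableOn_localMass hy.continuous hA T) fun T hT => ?_)
  have hmass : 0 ≤ ∫ t in (-T)..T, localMass A (n t) (u t) (y t) :=
    intervalIntegral.integral_nonneg (by linarith) fun t _ => localMass_nonneg A _ _ _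
  have hhalf : c / 2 * ∫ t in (-T)..T, localMass A (n t) (u t) (y t) ≤ 4 * A * Mu * Mn :=
    (mul_le_mul_of_nonneg_right (by linarith) hmass).trans
      (S.mul_intervalIntegral_localMass_le hw hc hMn hMu hy hY hA hT)
  rw [show 8 / c * A * Mu * Mn = 4 * A * Mu * Mn / (c / 2) by field_simp; ring,
    le_div_iff₀' (by positivity)]
  exact hhalf

end IsSmallSolution

end TimeIntegration

section SmallSolutions

lemma HasSqIntegralLE.of_eLpNorm_le {f : ℝ → ℝ} {M : ℝ} (hf : Continuous f) (hM : 0 ≤ M)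
    (h : eLpNorm f 2 volume ≤ ENNReal.ofReal M) : HasSqIntegralLE f (M ^ 2) := by
  have hmem : MemLp f 2 volume :=
    ⟨hf.aestronglyMeasurable, h.trans_lt ENNReal.ofReal_lt_top⟩
  refine ⟨hmem.integrable_sq, ?_⟩
  rw [hmem.eLpNorm_eq_integral_rpow_norm two_ne_zero ENNReal.ofNat_ne_top,
    ENNReal.ofReal_le_ofReal_iff hM] at h
  simp only [ENNReal.toReal_ofNat, rpow_two, norm_eq_abs, sq_abs, ← one_div] at h
  rwa [← sqrt_eq_rpow, sqrt_le_left hM] at h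

lemma abs_le_of_eLpNorm_top_le {f : ℝ → ℝ} {M : ℝ} (hf : Continuous f) (hM : 0 ≤ M)
    (h : eLpNorm f ⊤ volume ≤ ENNReal.ofReal M) (x : ℝ) : |f x| ≤ M := by
  have hae : ∀ᵐ x, |f x| ≤ M := by
    filter_upwards [ae_le_eLpNormEssSup (f := f) (μ := volume)] with x hx
    rw [eLpNorm_exponent_top] at h
    simpa only [Real.enorm_eq_ofReal_abs, ENNReal.ofReal_le_ofReal_iff hM] using hx.trans h
  have hdense := (Measure.dense_of_ae hae).closure_eq
  rw [(isClosed_le hf.abs continuous_const).closure_eq] at hdense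
  exact eq_univ_iff_forall.1 hdense x

lemma abs_le_two_mul_of_abs_qfun_le {x δ : ℝ} (hδ : δ ≤ 1 / 10) (h : |qfun x| ≤ δ) :
    |x| ≤ 2 * δ := by
  have hδ₀ : 0 ≤ δ := (abs_nonneg _).trans h
  obtain ⟨hlower, hupper⟩ := abs_le.1 h
  rw [qfun] at hlower hupper
  have hinv : (exp x)⁻¹ ≤ 1 + 2 * δ :=
    inv_le_of_inv_le₀ (by positivity) ((inv_le_iff_one_le_mul₀ (by positivity)).2 (by nlinarith))
  have hlog := one_sub_inv_le_log_of_pos (exp_pos x)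
  rw [log_exp] at hlog
  exact abs_le.2 ⟨by linarith, by linarith [add_one_le_exp x]⟩

lemma abs_image_le_of_abs_deriv_le {f f' : ℝ → ℝ} {a C : ℝ} (hf₀ : f 0 = 0)
    (hf : ∀ s, |s| ≤ |a| → HasDerivAt f (f' s) s) (hC : ∀ s, |s| ≤ |a| → |f' s| ≤ C) :
    |f a| ≤ C * |a| := by
  have h := (convex_Icc (-|a|) |a|).norm_image_sub_le_of_norm_hasDerivWithin_le (x := 0) (y := a)
    (fun s hs => (hf s (abs_le.2 hs)).hasDerivWithinAt) (fun s hs => hC s (abs_le.2 hs))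
    ⟨by simp, by simp⟩ ⟨neg_abs_le a, le_abs_self a⟩
  simpa only [hf₀, sub_zero, norm_eq_abs] using h

lemma abs_deriv_le_of_abs_le {f f' f'' : ℝ → ℝ} {B D : ℝ} (hf : ∀ x, HasDerivAt f (f' x) x)
    (hf' : ∀ x, HasDerivAt f' (f'' x) x) (hB : ∀ x, |f x| ≤ B) (hD : ∀ x, |f'' x| ≤ D) (x : ℝ) :
    |f' x| ≤ 2 * B + D := by
  obtain ⟨ξ, hξ, hslope⟩ := exists_hasDerivAt_eq_slope f f' (lt_add_one x)
    (fun z _ => (hf z).continuousAt.continuousWithinAt) (fun z _ => hf z)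
  rw [add_sub_cancel_left, div_one] at hslope
  have hvar : |f' x - f' ξ| ≤ D * |x - ξ| :=
    convex_univ.norm_image_sub_le_of_norm_hasDerivWithin_le
      (fun z _ => (hf' z).hasDerivWithinAt) (fun z _ => hD z) (mem_univ ξ) (mem_univ x)
  have hdist : |x - ξ| ≤ 1 := abs_le.2 ⟨by linarith [hξ.2], by linarith [hξ.1]⟩
  calc |f' x| ≤ |f' ξ| + |f' x - f' ξ| := by
        simpa only [add_sub_cancel] using abs_add_le (f' ξ) (f' x - f' ξ)
    _ ≤ 2 * B + D := add_le_add
        (hslope ▸ (abs_sub _ _).trans (by linarith [hB x, hB (x + 1)]))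
        (hvar.trans (mul_le_of_le_one_right ((abs_nonneg _).trans (hD x)) hdist))

theorem exists_isNearlyLinear {w : ℝ → ℝ} {ε : ℝ} (hw : ContDiffOn ℝ 1 w (Ioi (-1)))
    (hw₀ : w 0 = 0) (hk : 0 < deriv w 0) (hε₀ : 0 < ε) (hε : ε ≤ 1 / 10) :
    ∃ δ, IsNearlyLinear w (deriv w 0) ε δ := by
  have hcont : ContinuousAt (deriv w) 0 :=
    (hw.continuousOn_deriv_of_isOpen isOpen_Ioi le_rfl).continuousAt
      (Ioi_mem_nhds (by norm_num))
  obtain ⟨r, hr, hdist⟩ := Metric.continuousAt_iff.1 hcont ε hε₀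
  have hderiv {a : ℝ} (ha : |a| ≤ min (r / 2) ε) {s : ℝ} (hs : |s| ≤ |a|) :
      -1 < s ∧ |deriv w s - deriv w 0| ≤ ε := by
    have hsr : |s| ≤ r / 2 := (hs.trans ha).trans (min_le_left _ _)
    have hsε : |s| ≤ ε := (hs.trans ha).trans (min_le_right _ _)
    exact ⟨by linarith [(abs_le.1 hsε).1],
      (hdist (by rw [Real.dist_eq, sub_zero]; linarith)).le⟩
  have hwd {s : ℝ} (hs : -1 < s) : HasDerivAt w (deriv w s) s :=
    ((hw.differentiableOn one_ne_zero).differentiableAt (Ioi_mem_nhds hs)).hasDerivAt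
  refine ⟨min (r / 2) ε, hk, by positivity, min_le_right _ _, hε, hw, fun a ha => ?_,
    fun a ha => ?_⟩
  · exact abs_image_le_of_abs_deriv_le (f := fun a => w a - deriv w 0 * a) (by simp [hw₀])
      (fun s hs => ((hwd (hderiv ha hs).1).sub ((hasDerivAt_id s).const_mul _)).congr_deriv
        (by rw [mul_one])) fun s hs => (hderiv ha hs).2
  · refine (abs_image_le_of_abs_deriv_le (C := ε * |a|)
      (f := fun a => legendre w a - deriv w 0 / 2 * a ^ 2)
      (f' := fun s => s * (deriv w s - deriv w 0)) (by simp [legendre, Wfun]) (fun s hs =>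
        ((hasDerivAt_legendre hw (hderiv ha hs).1).sub
          (((hasDerivAt_id s).fun_pow 2).const_mul _)).congr_deriv
            (by simp only [id]; push_cast; ring)) fun s hs => ?_).trans_eq
      (by rw [mul_assoc, abs_mul_abs_self, sq])
    rw [abs_mul, mul_comm]
    exact mul_le_mul (hderiv ha hs).2 hs (abs_nonneg _) hε₀.le

lemma hasDerivAt_snd {F : ℝ → ℝ → ℝ} (hF : ContDiff ℝ 1 (Function.uncurry F)) (t x : ℝ) :
    HasDerivAt (F t) (fderiv ℝ (Function.uncurry F) (t, x) (0, 1)) x :=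
  HasFDerivAt.comp_hasDerivAt (f := fun z => (t, z)) x
    (hF.differentiable one_ne_zero (t, x)).hasFDerivAt
    ((hasDerivAt_const x t).prodMk (hasDerivAt_id x))

section Solutions

variable {w : ℝ → ℝ} {n u φ : ℝ → ℝ → ℝ} {k ε δ Mn Mu : ℝ}

lemma _root_.IsEPwSolution.continuous_field_time (S : IsEPwSolution w n u φ)
    (hw : ContDiffOn ℝ 1 w (Ioi (-1))) (x : ℝ) : Continuous fun t => deriv (φ t) x := by
  have hG : ContDiff ℝ 1 (Function.uncurry fun t x => u t x ^ 2 / 2 + w (n t x)) :=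
    ((S.reg_u.pow 2).div_const 2).add (S.contDiff_enthalpy hw)
  have hfield (t : ℝ) : deriv (φ t) x = -deriv (fun s => u s x) t
      - fderiv ℝ (Function.uncurry fun t x => u t x ^ 2 / 2 + w (n t x)) (t, x) (0, 1) := by
    linarith [((S.balanceLaw_velocity hw).hasDerivAt_flux t x).unique
      ((hasDerivAt_snd hG t x).add (S.hasDerivAt_potential t x))]
  have hline : Continuous fun t : ℝ => (t, x) := by fun_prop
  simp_rw [hfield]
  exact ((continuous_deriv_fst S.reg_u).comp hline).neg.sub
    (((hG.continuous_fderiv one_ne_zero).comp hline).clm_apply continuous_const)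

lemma _root_.IsEPwSolution.isDrivenByPotential (S : IsEPwSolution w n u φ)
    (hw : IsNearlyLinear w k ε δ) (hn : ∀ t x, |n t x| ≤ δ)
    (hu : ∀ t, HasSqIntegralLE (u t) Mu) :
    IsDrivenByPotential qfun δ (k + 1) Mu u (fun t x => deriv (fun s => u s x) t)
      (fun t => velocityFlux w (n t) (u t) (φ t)) φ (fun t => deriv (φ t)) n where
  monotone _ _ hxy := sub_le_sub_right (exp_le_exp.2 hxy) 1
  continuous := continuous_exp.sub continuous_const
  law := S.balanceLaw_velocity hw.contDiffOn
  abs_flux_sub_le t x := by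
    have hk := hw.slope_pos
    have hδ : δ ≤ 1 / 10 := hw.radius_le.trans hw.error_le
    obtain ⟨hlower, hupper⟩ := abs_le.1 (hw.abs_sub_le _ (hn t x))
    obtain ⟨hnl, hnu⟩ := abs_le.1 (hn t x)
    have hεn : ε * |n t x| ≤ 1 := by nlinarith [hw.error_le, hn t x, abs_nonneg (n t x)]
    rw [velocityFlux, add_sub_cancel_right]
    exact abs_le.2 ⟨by nlinarith, by nlinarith⟩
  hasSqIntegralLE := hu
  abs_density_le := hn
  hasDerivAt_potential := S.hasDerivAt_potential
  hasDerivAt_field := S.hasDerivAt_field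
  continuous_potential_time x := (S.reg_phi_time x).continuous
  continuous_field_time := S.continuous_field_time hw.contDiffOn

theorem _root_.IsEPwSolution.isSmallSolution (S : IsEPwSolution w n u φ)
    (hw : IsNearlyLinear w k ε δ) (hn : ∀ t x, |n t x| ≤ δ)
    (hn₂ : ∀ t, HasSqIntegralLE (n t) (Mn ^ 2)) (hu₂ : ∀ t, HasSqIntegralLE (u t) (Mu ^ 2)) :
    IsSmallSolution w δ Mn Mu n u φ := by
  have hδ : 0 < δ := hw.radius_pos
  have hq (t x : ℝ) : |qfun (φ t x)| ≤ δ :=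
    (S.isDrivenByPotential hw hn hu₂).abs_comp_potential_le t x
  have hφ (t x : ℝ) : |φ t x| ≤ 2 * δ :=
    abs_le_two_mul_of_abs_qfun_le (hw.radius_le.trans hw.error_le) (hq t x)
  have hφ' (t x : ℝ) : |deriv (φ t) x| ≤ 2 * (2 * δ) + (δ + δ) :=
    abs_deriv_le_of_abs_le (S.hasDerivAt_potential t) (S.hasDerivAt_field t) (hφ t)
      (fun z => (abs_sub _ _).trans (add_le_add (hq t z) (hn t z))) x
  exact ⟨S, fun t =>
    { contDiff_density := contDiff_uncurry_left S.reg_n t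
      contDiff_velocity := contDiff_uncurry_left S.reg_u t
      abs_density_le := hn t
      abs_potential_le := hφ t
      hasSqIntegralLE_density := hn₂ t
      hasSqIntegralLE_velocity := hu₂ t
      potential :=
      { hasDerivAt := S.hasDerivAt_potential t
        hasDerivAt_deriv := fun x => (S.hasDerivAt_field t x).congr_deriv
          (by rw [expRemainder, qfun]; ring)
        bounded := ⟨_, fun x => ⟨(hφ t x).trans (by linarith), hφ' t x⟩⟩ } }⟩

end Solutions

variable {p w : ℝ → ℝ}

lemma _root_.IsWFor.contDiffOn (hw : IsWFor p w) (hp : IsPressure p) :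
    ContDiffOn ℝ 1 w (Ioi (-1)) := by
  have hp' : ContinuousOn (fun s => deriv p (1 + s)) (Ioi (-1)) :=
    (hp.smooth.continuousOn_deriv_of_isOpen isOpen_Ioi (by simp)).comp (by fun_prop)
      fun s hs => mem_Ioi.2 (neg_lt_iff_pos_add'.1 hs)
  have hw' : ContinuousOn (deriv w) (Ioi (-1)) :=
    (hp'.div (by fun_prop) fun s hs => (neg_lt_iff_pos_add'.1 hs).ne').congr
      fun s hs => (hw.2 s hs).deriv
  exact (contDiffOn_succ_iff_deriv_of_isOpen (n := 0) isOpen_Ioi).2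
    ⟨fun s hs => (hw.2 s hs).differentiableAt.differentiableWithinAt, by simp,
      contDiffOn_zero.2 hw'⟩

lemma _root_.IsWFor.deriv_zero (hw : IsWFor p w) : deriv w 0 = deriv p 1 := by
  simpa only [add_zero, div_one] using (hw.2 0 (by norm_num)).deriv

end SmallSolutions

section FinalBound

lemma ofReal_mul_max_zero_le (C x y : ℝ) :
    ENNReal.ofReal (C * max x 0 * max y 0) ≤ ENNReal.ofReal (C * x * y) := by
  rcases le_total 0 x with hx | hx <;> rcases le_total 0 y with hy | hy <;>
    simp only [hx, hy, max_eq_left, max_eq_right, mul_zero, zero_mul, ENNReal.ofReal_zero,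
      zero_le, le_refl]

end FinalBound

end EulerPoisson

open EulerPoisson in
theorem virial_bound_slow_general
    (w : ℝ → ℝ) (hw : ContDiffOn ℝ 1 w (Set.Ioi (-1))) (hw₀ : w 0 = 0)
    (k : ℝ) (hwk : deriv w 0 = k) (hk : 0 < k) :
    ∃ δ : ℝ, 0 < δ ∧ ∃ A₀ : ℝ, 0 < A₀ ∧ ∃ C : ℝ, 0 < C ∧
      ∀ (n u φ : ℝ → ℝ → ℝ) (y : ℝ → ℝ),
        IsEPwSolution w n u φ →
        (∀ t : ℝ, eLpNorm (n t) ⊤ volume ≤ ENNReal.ofReal δ) →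
        ContDiff ℝ 1 y →
        (∀ t : ℝ, |deriv y t| ≤ k / √(1 + k)) →
        ∀ A : ℝ, A₀ ≤ A →
        ∀ Mu Mn : ℝ,
          (∀ t : ℝ, eLpNorm (u t) 2 volume ≤ ENNReal.ofReal Mu) →
          (∀ t : ℝ, eLpNorm (n t) 2 volume ≤ ENNReal.ofReal Mn) →
          (∫⁻ t : ℝ, ∫⁻ x : ℝ, ENNReal.ofReal
              (exp (-2 * |x - y t| / A) * (n t x ^ 2 + u t x ^ 2)))
            ≤ ENNReal.ofReal (C * A * Mu * Mn) := by
  obtain ⟨c, hc⟩ := exists_isCoercivityConstant hk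
  have hc₀ := hc.pos
  obtain ⟨δ, hδ⟩ := exists_isNearlyLinear (ε := min (1 / 10) (c / 600)) hw hw₀ (hwk ▸ hk)
    (by positivity) (min_le_left _ _)
  rw [hwk] at hδ
  refine ⟨δ, hδ.radius_pos, max 4 (256 * (k + 2) / c), by positivity, 8 / c, by positivity,
    fun n u φ y S hn hy hY A hA Mu Mn hMu hMn => ?_⟩
  obtain ⟨hA₄, hAc⟩ := max_le_iff.1 hA
  have hL2 {f : ℝ → ℝ} {M : ℝ} (hf : Continuous f) (h : eLpNorm f 2 volume ≤ ENNReal.ofReal M) :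
      HasSqIntegralLE f (max M 0 ^ 2) :=
    .of_eLpNorm_le hf (le_max_right _ _) (by simpa using h)
  have hsmall := S.isSmallSolution hδ
    (fun t => abs_le_of_eLpNorm_top_le (contDiff_uncurry_left S.reg_n t).continuous
      hδ.radius_pos.le (hn t))
    (fun t => hL2 (contDiff_uncurry_left S.reg_n t).continuous (hMn t))
    (fun t => hL2 (contDiff_uncurry_left S.reg_u t).continuous (hMu t))
  refine (hsmall.lintegral_exp_mul_le hδ hc (by linarith [min_le_right (1 / 10) (c / 600)])
    (le_max_right _ _) (le_max_right _ _) hy hY hA₄ hAc).trans (ofReal_mul_max_zero_le _ _ _)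

theorem virial_bound_slow
    (p w : ℝ → ℝ) (hp : IsPressure p) (hw : IsWFor p w)
    (k : ℝ) (hk : k = deriv p 1) :
    ∃ δ : ℝ, 0 < δ ∧ ∃ A₀ : ℝ, 0 < A₀ ∧ ∃ C : ℝ, 0 < C ∧
      ∀ (n u φ : ℝ → ℝ → ℝ) (y : ℝ → ℝ),
        IsEPwSolution w n u φ →
        ConservesEnergy w n u φ →
        (⨆ t : ℝ, eLpNorm (u t) 2 volume) < ⊤ →
        (⨆ t : ℝ, (eLpNorm (n t) 2 volume + eLpNorm (n t) ⊤ volume)) ≤ ENNReal.ofReal δ →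
        ContDiff ℝ 1 y →
        (∃ c : ℝ, c < k / Real.sqrt (1 + k) ∧ ∀ t : ℝ, |deriv y t| ≤ c) →
        ∀ A : ℝ, A₀ ≤ A →
        ∀ Mu Mn : ℝ,
          (∀ t : ℝ, eLpNorm (u t) 2 volume ≤ ENNReal.ofReal Mu) →
          (∀ t : ℝ, eLpNorm (n t) 2 volume ≤ ENNReal.ofReal Mn) →
          (∫⁻ t : ℝ, ∫⁻ x : ℝ, ENNReal.ofReal
              (Real.exp (-2 * |x - y t| / A) * (n t x ^ 2 + u t x ^ 2)))
            ≤ ENNReal.ofReal (C * A * Mu * Mn) := by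
  obtain ⟨δ, hδ, A₀, hA₀, C, hC, hbound⟩ := virial_bound_slow_general w (hw.contDiffOn hp) hw.1 k
    (hw.deriv_zero.trans hk.symm) (hk ▸ hp.deriv_pos 1 one_pos)
  refine ⟨δ, hδ, A₀, hA₀, C, hC, fun n u φ y S _ _ hn hy ⟨c, hc, hY⟩ =>
    hbound n u φ y S (fun t => ?_) hy fun t => (hY t).trans hc.le⟩
  exact le_add_self.trans
    ((le_iSup (fun t => eLpNorm (n t) 2 volume + eLpNorm (n t) ⊤ volume) t).trans hn)
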